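/- arXiv:2512.08151 — 2 statements merged into one kernel-verified Lean document; each statement's English description precedes it below -/
import Mathlib

section
/- Let Γ be a finitely generated virtually abelian group and let μ be an aperiodic probability measure on Γ with finite second moment whose support generates Γ as a semigroup. Then for every ρ ∈ (0,1] one has ‖π^ρ_n − μ_n×μ_n‖_TV → 0 as n → ∞ (i.e. the μ-random walk on Γ is noise sensitive in total variation) if and only if every group homomorphism from Γ to ℤ is the zero homomorphism. -/
open scoped BigOperators Classical
open Filter Matrix MeasureTheory

namespace NSVA

noncomputable section

/-- Convolution of two real-valued functions on a group. -/
def conv {G : Type*} [Group G] (μ ν : G → ℝ) : G → ℝ :=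
  fun g => ∑' h : G, μ h * ν (h⁻¹ * g)

/-- Convolution powers: `convPow μ 0 = δ_1`, `convPow μ (n+1) = (convPow μ n) * μ`. -/
def convPow {G : Type*} [Group G] (μ : G → ℝ) : ℕ → G → ℝ
  | 0 => fun g => if g = 1 then 1 else 0
  | n + 1 => conv (convPow μ n) μ

/-- A probability measure on a countable set, viewed as a function. -/
def IsProb {G : Type*} (μ : G → ℝ) : Prop := (∀ g, 0 ≤ μ g) ∧ HasSum μ 1

/-- The support of `μ` generates the group as a semigroup. -/
def Nondeg {G : Type*} [Group G] (μ : G → ℝ) : Prop :=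
  ∀ g : G, g ∈ Subsemigroup.closure {x : G | 0 < μ x}

/-- `μ` is aperiodic: `μ_n(1) > 0` for all large enough `n`. -/
def Aperiodic {G : Type*} [Group G] (μ : G → ℝ) : Prop :=
  ∃ N : ℕ, ∀ n : ℕ, N ≤ n → 0 < convPow μ n 1

/-- Total variation distance between two (probability) functions. -/
def tv {Z : Type*} (p q : Z → ℝ) : ℝ := (1 / 2) * ∑' z : Z, |p z - q z|

/-- Word length with respect to a finite set `S₀`. -/
def wordLength {G : Type*} [Group G] (S₀ : Finset G) (g : G) : ℕ :=
  sInf {n : ℕ | ∃ l : List G, (∀ s ∈ l, s ∈ S₀) ∧ l.length = n ∧ l.prod = g}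

/-- Finite second moment with respect to a word metric given by a finite symmetric
generating set. -/
def FinSecondMoment {G : Type*} [Group G] (μ : G → ℝ) : Prop :=
  ∃ S₀ : Finset G, (∀ s ∈ S₀, s⁻¹ ∈ S₀) ∧ Subgroup.closure (S₀ : Set G) = ⊤ ∧
    Summable (fun g : G => (wordLength S₀ g : ℝ) ^ 2 * μ g)

/-- A group is virtually abelian if it has an abelian subgroup of finite index. -/
def VirtAbelian (G : Type*) [Group G] : Prop :=
  ∃ A : Subgroup G, A.index ≠ 0 ∧ ∀ a b : A, a * b = b * a

/-- The noised measure `π^ρ` on `G × G`. -/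
def noised {G : Type*} (μ : G → ℝ) (ρ : ℝ) : G × G → ℝ :=
  fun p => ρ * μ p.1 * μ p.2 + (1 - ρ) * μ p.1 * (if p.1 = p.2 then 1 else 0)

/-- First marginal of a measure on a product. -/
def marg1 {G₁ G₂ : Type*} (ν : G₁ × G₂ → ℝ) : G₁ → ℝ := fun γ₁ => ∑' γ₂ : G₂, ν (γ₁, γ₂)

/-- Second marginal of a measure on a product. -/
def marg2 {G₁ G₂ : Type*} (ν : G₁ × G₂ → ℝ) : G₂ → ℝ := fun γ₂ => ∑' γ₁ : G₁, ν (γ₁, γ₂)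

/-- A system of representatives of the right cosets `Λ\Γ` containing the identity,
together with the representative map `rep`, constant on right cosets. -/
structure RepSystem {Γ : Type*} [Group Γ] (Λ : Subgroup Γ) where
  Δ : Finset Γ
  one_mem : (1 : Γ) ∈ Δ
  rep : Γ → Γ
  rep_mem : ∀ γ : Γ, rep γ ∈ Δ
  rep_spec : ∀ γ : Γ, γ * (rep γ)⁻¹ ∈ Λ
  rep_idem : ∀ x ∈ Δ, rep x = x
  rep_coset : ∀ γ : Γ, ∀ v ∈ Λ, rep (v * γ) = rep γ

variable {Γ : Type*} [Group Γ] {Λ : Subgroup Γ} {m : ℕ}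

/-- The cocycle `α(x,s) = ψ(x·s·(x^s)⁻¹) ∈ ℤ^m`. -/
def cocycle (ψ : Λ ≃* Multiplicative (Fin m → ℤ)) (R : RepSystem Λ) (x s : Γ) : Fin m → ℤ :=
  Multiplicative.toAdd (ψ ⟨x * s * (R.rep (x * s))⁻¹, R.rep_spec (x * s)⟩)

/-- The transfer homomorphism `θ(γ) = ∑_{x∈Δ} α(x,γ)`. -/
def transfer (ψ : Λ ≃* Multiplicative (Fin m → ℤ)) (R : RepSystem Λ) (γ : Γ) : Fin m → ℤ :=
  ∑ x ∈ R.Δ, cocycle ψ R x γ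

/-- `Φ(γ) = ψ(v)` where `γ = v·x`, `v ∈ Λ`, `x ∈ Δ`. -/
def Phi (ψ : Λ ≃* Multiplicative (Fin m → ℤ)) (R : RepSystem Λ) (γ : Γ) : Fin m → ℤ :=
  Multiplicative.toAdd (ψ ⟨γ * (R.rep γ)⁻¹, R.rep_spec γ⟩)

/-- A 1-form on the quotient diagram. -/
def IsOneForm (R : RepSystem Λ) (ω : Γ → Γ → ℝ) : Prop :=
  ∀ x ∈ R.Δ, ∀ s : Γ, ω (R.rep (x * s)) s⁻¹ = -ω x s

/-- `χ(ω) = ∑_{x∈Δ} ∑_s c(x,s)·ω(x,s)` where `c(x,s) = μ(s)/#F`. -/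
def chi (R : RepSystem Λ) (μ : Γ → ℝ) (ω : Γ → Γ → ℝ) : ℝ :=
  ∑ x ∈ R.Δ, ∑' s : Γ, μ s / (Λ.index : ℝ) * ω x s

/-- Square-integrability of a 1-form. -/
def SqInt (R : RepSystem Λ) (μ : Γ → ℝ) (ω : Γ → Γ → ℝ) : Prop :=
  ∀ x ∈ R.Δ, Summable (fun s : Γ => μ s / (Λ.index : ℝ) * ω x s ^ 2)

/-- Harmonicity of a (square-integrable) 1-form. -/
def Harmonic (R : RepSystem Λ) (μ : Γ → ℝ) (ω : Γ → Γ → ℝ) : Prop :=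
  SqInt R μ ω ∧ ∀ x ∈ R.Δ, (∑' s : Γ, μ s * ω x s) = chi R μ ω

/-- The differential `df(x,s) = f(x^s) − f(x)`. -/
def dd (R : RepSystem Λ) (f : Γ → ℝ) : Γ → Γ → ℝ := fun x s => f (R.rep (x * s)) - f x

/-- `(u, f)` is a harmonic decomposition of the 1-form `ω`: `ω = u + df` with `u`
a harmonic 1-form. -/
def IsHarmDecomp (R : RepSystem Λ) (μ : Γ → ℝ) (ω u : Γ → Γ → ℝ) (f : Γ → ℝ) : Prop :=
  IsOneForm R u ∧ Harmonic R μ u ∧ ∀ x ∈ R.Δ, ∀ s : Γ, ω x s = u x s + dd R f x s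

/-- The 1-form `v̂(x,s) = ⟨v, α(x,s)⟩` (standard inner product). -/
def vhat (ψ : Λ ≃* Multiplicative (Fin m → ℤ)) (R : RepSystem Λ) (v : Fin m → ℝ) :
    Γ → Γ → ℝ :=
  fun x s => ∑ i, v i * (cocycle ψ R x s i : ℝ)

/-- The 1-form `v̂(x,s) = B(v, α(x,s))` for a bilinear form `B`. -/
def vhatB (ψ : Λ ≃* Multiplicative (Fin m → ℤ)) (R : RepSystem Λ)
    (B : (Fin m → ℝ) →ₗ[ℝ] (Fin m → ℝ) →ₗ[ℝ] ℝ) (v : Fin m → ℝ) : Γ → Γ → ℝ :=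
  fun x s => B v (fun i => (cocycle ψ R x s i : ℝ))

/-- The drift `ζ = (1/#F)·∑_{x∈Δ}∑_s μ(s)·α(x,s) ∈ ℝ^m`. -/
def drift (ψ : Λ ≃* Multiplicative (Fin m → ℤ)) (R : RepSystem Λ) (μ : Γ → ℝ) : Fin m → ℝ :=
  fun i => (Λ.index : ℝ)⁻¹ * ∑ x ∈ R.Δ, ∑' s : Γ, μ s * (cocycle ψ R x s i : ℝ)

/-- The covariance pairing `∑_{x,s} c(x,s)·u(x,s)·u'(x,s) − χ(u)·χ(u')`. -/
def cov (R : RepSystem Λ) (μ : Γ → ℝ) (u u' : Γ → Γ → ℝ) : ℝ :=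
  (∑ x ∈ R.Δ, ∑' s : Γ, μ s / (Λ.index : ℝ) * (u x s * u' x s)) - chi R μ u * chi R μ u'

/-- The transfer operator `ℒ_v` acting on functions `Δ → ℂ`. -/
def transferOp (ψ : Λ ≃* Multiplicative (Fin m → ℤ)) (R : RepSystem Λ) (μ : Γ → ℝ)
    (v : Fin m → ℝ) (f : Γ → ℂ) : Γ → ℂ :=
  fun x => ∑' s : Γ, (μ s : ℂ) *
    Complex.exp (2 * Real.pi * Complex.I * ((∑ i, v i * (cocycle ψ R x s i : ℝ)) : ℝ)) *
    f (R.rep (x * s))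

/-- The Gaussian density `ξ_A(w)` associated with a (positive-definite) matrix `A`. -/
def gauss {d : ℕ} (A : Matrix (Fin d) (Fin d) ℝ) (w : Fin d → ℝ) : ℝ :=
  (2 * Real.pi) ^ (-(d : ℝ) / 2) * A.det ^ (-(1 : ℝ) / 2) *
    Real.exp (-(w ⬝ᵥ A⁻¹.mulVec w) / 2)

/-- The product representative system for `Λ₁ × Λ₂ ≤ Γ₁ × Γ₂`. -/
def prodRep {Γ₁ : Type*} [Group Γ₁] {Γ₂ : Type*} [Group Γ₂]
    {Λ₁ : Subgroup Γ₁} {Λ₂ : Subgroup Γ₂}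
    (R₁ : RepSystem Λ₁) (R₂ : RepSystem Λ₂) : RepSystem (Λ₁.prod Λ₂) where
  Δ := R₁.Δ ×ˢ R₂.Δ
  one_mem := Finset.mem_product.mpr ⟨R₁.one_mem, R₂.one_mem⟩
  rep := fun p => (R₁.rep p.1, R₂.rep p.2)
  rep_mem := fun p => Finset.mem_product.mpr ⟨R₁.rep_mem p.1, R₂.rep_mem p.2⟩
  rep_spec := fun p => Subgroup.mem_prod.mpr ⟨R₁.rep_spec p.1, R₂.rep_spec p.2⟩
  rep_idem := fun x hx => by
    rcases Finset.mem_product.mp hx with ⟨h1, h2⟩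
    exact Prod.ext_iff.mpr ⟨R₁.rep_idem x.1 h1, R₂.rep_idem x.2 h2⟩
  rep_coset := fun p v hv => by
    rcases Subgroup.mem_prod.mp hv with ⟨h1, h2⟩
    exact Prod.ext_iff.mpr ⟨R₁.rep_coset p.1 v.1 h1, R₂.rep_coset p.2 v.2 h2⟩

/-- The 1-form `𝐯̂(x,s) = ⟨𝐯, α(x,s)⟩` on a product, standard inner product. -/
def vhat2 {Γ₁ : Type*} [Group Γ₁] {Γ₂ : Type*} [Group Γ₂]
    {Λ₁ : Subgroup Γ₁} {Λ₂ : Subgroup Γ₂} {m₁ m₂ : ℕ}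
    (ψ₁ : Λ₁ ≃* Multiplicative (Fin m₁ → ℤ)) (R₁ : RepSystem Λ₁)
    (ψ₂ : Λ₂ ≃* Multiplicative (Fin m₂ → ℤ)) (R₂ : RepSystem Λ₂)
    (v : (Fin m₁ → ℝ) × (Fin m₂ → ℝ)) : (Γ₁ × Γ₂) → (Γ₁ × Γ₂) → ℝ :=
  fun x s => (∑ i, v.1 i * (cocycle ψ₁ R₁ x.1 s.1 i : ℝ)) +
    ∑ i, v.2 i * (cocycle ψ₂ R₂ x.2 s.2 i : ℝ)

/-- The 1-form `𝐯̂(x,s) = ⟨𝐯, α(x,s)⟩` on a product, orthogonal-sum of the two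
bilinear forms `B₁`, `B₂`. -/
def vhatB2 {Γ₁ : Type*} [Group Γ₁] {Γ₂ : Type*} [Group Γ₂]
    {Λ₁ : Subgroup Γ₁} {Λ₂ : Subgroup Γ₂} {m₁ m₂ : ℕ}
    (ψ₁ : Λ₁ ≃* Multiplicative (Fin m₁ → ℤ)) (R₁ : RepSystem Λ₁)
    (B₁ : (Fin m₁ → ℝ) →ₗ[ℝ] (Fin m₁ → ℝ) →ₗ[ℝ] ℝ)
    (ψ₂ : Λ₂ ≃* Multiplicative (Fin m₂ → ℤ)) (R₂ : RepSystem Λ₂)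
    (B₂ : (Fin m₂ → ℝ) →ₗ[ℝ] (Fin m₂ → ℝ) →ₗ[ℝ] ℝ)
    (v : (Fin m₁ → ℝ) × (Fin m₂ → ℝ)) : (Γ₁ × Γ₂) → (Γ₁ × Γ₂) → ℝ :=
  fun x s => B₁ v.1 (fun i => (cocycle ψ₁ R₁ x.1 s.1 i : ℝ)) +
    B₂ v.2 (fun i => (cocycle ψ₂ R₂ x.2 s.2 i : ℝ))

end

section Convolution

variable {G : Type*} [Group G]
variable {E : Type*} [NormedAddCommGroup E] [NormedSpace ℝ E]

/-- The averaging operator `f ↦ (γ ↦ ∑ₛ p(s) f(γ s))`. -/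
noncomputable def op (p : G → ℝ) (f : G → E) : G → E := fun γ => ∑' s, p s • f (γ * s)

lemma IsProb.le_one {α : Type*} {p : α → ℝ} (hp : IsProb p) (g : α) : p g ≤ 1 :=
  le_hasSum hp.2 g fun i _ => hp.1 i

lemma IsProb.summable_norm_smul {α : Type*} {p : α → ℝ} (hp : IsProb p) {f : α → E} {C : ℝ}
    (hf : ∀ g, ‖f g‖ ≤ C) : Summable fun s => ‖p s • f s‖ := by
  refine Summable.of_nonneg_of_le (fun _ => norm_nonneg _) (fun s => ?_) (hp.2.summable.mul_right C)
  rw [norm_smul, Real.norm_of_nonneg (hp.1 s)]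
  exact mul_le_mul_of_nonneg_left (hf s) (hp.1 s)

lemma IsProb.summable_smul [CompleteSpace E] {α : Type*} {p : α → ℝ} (hp : IsProb p) {f : α → E}
    {C : ℝ} (hf : ∀ g, ‖f g‖ ≤ C) : Summable fun s => p s • f s :=
  (hp.summable_norm_smul hf).of_norm

lemma IsProb.norm_tsum_smul_le {α : Type*} {p : α → ℝ} (hp : IsProb p) {f : α → E}
    {C : ℝ} (hf : ∀ g, ‖f g‖ ≤ C) : ‖∑' s, p s • f s‖ ≤ C := by
  have h : HasSum (fun s => p s * C) C := by simpa using hp.2.mul_right C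
  refine tsum_of_norm_bounded h fun s => ?_
  rw [norm_smul, Real.norm_of_nonneg (hp.1 s)]
  exact mul_le_mul_of_nonneg_left (hf s) (hp.1 s)

lemma IsProb.norm_op_le {p : G → ℝ} (hp : IsProb p) {f : G → E} {C : ℝ}
    (hf : ∀ g, ‖f g‖ ≤ C) (γ : G) : ‖op p f γ‖ ≤ C :=
  hp.norm_tsum_smul_le fun s => hf (γ * s)

lemma IsProb.op_sub [CompleteSpace E] {p : G → ℝ} (hp : IsProb p) {f g : G → E} {C D : ℝ}
    (hf : ∀ x, ‖f x‖ ≤ C) (hg : ∀ x, ‖g x‖ ≤ D) (γ : G) :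
    op p (fun x => f x - g x) γ = op p f γ - op p g γ := by
  have := (hp.summable_smul fun s => hf (γ * s)).tsum_sub (hp.summable_smul fun s => hg (γ * s))
  simpa [op, smul_sub] using this

lemma IsProb.op_add [CompleteSpace E] {p : G → ℝ} (hp : IsProb p) {f g : G → E} {C D : ℝ}
    (hf : ∀ x, ‖f x‖ ≤ C) (hg : ∀ x, ‖g x‖ ≤ D) (γ : G) :
    op p (fun x => f x + g x) γ = op p f γ + op p g γ := by
  have := (hp.summable_smul fun s => hf (γ * s)).tsum_add (hp.summable_smul fun s => hg (γ * s))
  simpa [op, smul_add] using this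

/-- The bijection `(h, s) ↦ (h, h s)` of `G × G`. -/
def shear (G : Type*) [Group G] : G × G ≃ G × G where
  toFun x := (x.1, x.1 * x.2)
  invFun x := (x.1, x.1⁻¹ * x.2)
  left_inv x := by simp
  right_inv x := by simp

lemma summable_conv {p q : G → ℝ} (hp : IsProb p) (hq : IsProb q) (g : G) :
    Summable fun h => p h * q (h⁻¹ * g) :=
  hp.2.summable.of_norm_bounded (fun h => by
    rw [Real.norm_of_nonneg (mul_nonneg (hp.1 _) (hq.1 _))]
    exact mul_le_of_le_one_right (hp.1 h) (hq.le_one _))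

lemma hasSum_conv_smul [CompleteSpace E] {p q : G → ℝ} (hp : IsProb p) (hq : IsProb q) {f : G → E}
    (hF : Summable fun x : G × G => (p x.1 * q x.2) • f (x.1 * x.2)) :
    HasSum (fun g => conv p q g • f g) (∑' x : G × G, (p x.1 * q x.2) • f (x.1 * x.2)) := by
  have h1 := hF.hasSum
  have h2 : HasSum (fun x : G × G => (p x.1 * q (x.1⁻¹ * x.2)) • f x.2)
      (∑' x : G × G, (p x.1 * q x.2) • f (x.1 * x.2)) := by
    rw [← (shear G).hasSum_iff]
    simpa [shear, Function.comp_def] using h1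
  have h3 : HasSum (fun x : G × G => (p x.2 * q (x.2⁻¹ * x.1)) • f x.1)
      (∑' x : G × G, (p x.1 * q x.2) • f (x.1 * x.2)) := by
    rw [← (Equiv.prodComm G G).hasSum_iff]
    simpa [Function.comp_def] using h2
  refine h3.prod_fiberwise fun g => ?_
  exact (summable_conv hp hq g).hasSum.smul_const (f g)

lemma summable_prod_smul [CompleteSpace E] {p q : G → ℝ} (hp : IsProb p) (hq : IsProb q)
    {f : G → E} {C : ℝ} (hf : ∀ g, ‖f g‖ ≤ C) :
    Summable fun x : G × G => (p x.1 * q x.2) • f (x.1 * x.2) := by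
  refine ((hp.2.summable.mul_of_nonneg hq.2.summable hp.1 hq.1).mul_right C).of_norm_bounded
    fun x => ?_
  have h := mul_nonneg (hp.1 x.1) (hq.1 x.2)
  rw [norm_smul, Real.norm_of_nonneg h]
  exact mul_le_mul_of_nonneg_left (hf _) h

lemma op_conv [CompleteSpace E] {p q : G → ℝ} (hp : IsProb p) (hq : IsProb q) {f : G → E} {C : ℝ}
    (hf : ∀ g, ‖f g‖ ≤ C) : op (conv p q) f = op p (op q f) := by
  funext γ
  have hF : Summable fun x : G × G => (p x.1 * q x.2) • f (γ * (x.1 * x.2)) :=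
    summable_prod_smul hp hq (f := fun g => f (γ * g)) fun g => hf (γ * g)
  have h1 : ∑' g, conv p q g • f (γ * g) = _ :=
    (hasSum_conv_smul hp hq (f := fun g => f (γ * g)) hF).tsum_eq
  have h2 := hF.tsum_prod
  simp only [op]
  rw [h1, h2]
  refine tsum_congr fun h => ?_
  rw [← (hq.summable_smul fun s => hf (γ * h * s)).tsum_const_smul]
  simp only [mul_smul, mul_assoc]

lemma IsProb.conv {p q : G → ℝ} (hp : IsProb p) (hq : IsProb q) : IsProb (NSVA.conv p q) := by
  refine ⟨fun g => tsum_nonneg fun h => mul_nonneg (hp.1 _) (hq.1 _), ?_⟩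
  have hpq := hp.2.summable.mul_of_nonneg hq.2.summable hp.1 hq.1
  have h2 : ∑' x : G × G, (p x.1 * q x.2) • (1 : ℝ) = 1 := by
    have := hp.2.summable.tsum_mul_tsum hq.2.summable hpq
    simp only [smul_eq_mul, mul_one]
    rw [← this, hp.2.tsum_eq, hq.2.tsum_eq, one_mul]
  have h1 := hasSum_conv_smul hp hq (f := fun _ => (1 : ℝ)) (by simpa using hpq)
  rw [h2] at h1
  simpa only [smul_eq_mul, mul_one] using h1

lemma isProb_single : IsProb fun g : G => if g = 1 then (1 : ℝ) else 0 :=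
  ⟨fun g => by dsimp only; split_ifs <;> norm_num, by simpa using hasSum_ite_eq (1 : G) (1 : ℝ)⟩

lemma IsProb.convPow {p : G → ℝ} (hp : IsProb p) : ∀ n, IsProb (convPow p n)
  | 0 => isProb_single
  | n + 1 => (IsProb.convPow hp n).conv hp

lemma op_convPow_zero (p : G → ℝ) (f : G → E) : op (convPow p 0) f = f := by
  funext γ
  simp only [op, convPow]
  rw [tsum_eq_single 1]
  · simp
  · intro b hb
    simp [hb]

lemma op_convPow_succ [CompleteSpace E] {p : G → ℝ} (hp : IsProb p) {f : G → E} {C : ℝ}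
    (hf : ∀ g, ‖f g‖ ≤ C) (n : ℕ) :
    op (convPow p (n + 1)) f = op (convPow p n) (op p f) :=
  op_conv (hp.convPow n) hp hf

lemma op_convPow_add [CompleteSpace E] {p : G → ℝ} (hp : IsProb p) (m n : ℕ) {f : G → E} {C : ℝ}
    (hf : ∀ g, ‖f g‖ ≤ C) :
    op (convPow p (m + n)) f = op (convPow p m) (op (convPow p n) f) := by
  induction n generalizing f with
  | zero => rw [op_convPow_zero, add_zero]
  | succ n ih =>
    rw [← add_assoc, op_convPow_succ hp hf, op_convPow_succ hp hf, ih (hp.norm_op_le hf)]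

/-- A bound `op p f ≤ f + C` on a possibly unbounded nonnegative `f` iterates. -/
lemma hasSum_convPow_le {p : G → ℝ} (hp : IsProb p) {f : G → ℝ} (hf0 : ∀ g, 0 ≤ f g) {C : ℝ}
    (hs : ∀ γ, Summable fun s => p s * f (γ * s)) (hle : ∀ γ, ∑' s, p s * f (γ * s) ≤ f γ + C)
    (n : ℕ) :
    Summable (fun g => convPow p n g * f g) ∧ ∑' g, convPow p n g * f g ≤ f 1 + n * C := by
  induction n with
  | zero =>
    have : (fun g => convPow p 0 g * f g) = fun g => if g = 1 then f 1 else 0 := by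
      funext g
      by_cases h : g = 1 <;> simp [convPow, h]
    rw [this]
    exact ⟨(hasSum_ite_eq 1 (f 1)).summable, by simp⟩
  | succ n ih =>
    have hpn := hp.convPow n
    have hb : Summable fun h => convPow p n h * (f h + C) := by
      simpa [mul_add] using ih.1.add (hpn.2.summable.mul_right C)
    have key : ∀ h, convPow p n h * ∑' s, p s * f (h * s) ≤ convPow p n h * (f h + C) :=
      fun h => mul_le_mul_of_nonneg_left (hle h) (hpn.1 h)
    have hin : ∀ h, ∑' s, convPow p n h * p s * f (h * s)
        = convPow p n h * ∑' s, p s * f (h * s) := fun h => by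
      rw [← tsum_mul_left]
      simp [mul_assoc]
    have hsum : Summable fun h => convPow p n h * ∑' s, p s * f (h * s) :=
      Summable.of_nonneg_of_le (fun h => mul_nonneg (hpn.1 h)
        (tsum_nonneg fun s => mul_nonneg (hp.1 s) (hf0 _))) key hb
    have hF : Summable fun x : G × G => (convPow p n x.1 * p x.2) • f (x.1 * x.2) := by
      refine (summable_prod_of_nonneg fun x =>
        mul_nonneg (mul_nonneg (hpn.1 _) (hp.1 _)) (hf0 _)).2 ⟨fun h => ?_, ?_⟩
      · simpa [mul_assoc] using (hs h).mul_left (convPow p n h)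
      · simpa only [smul_eq_mul, hin] using hsum
    have h1 := hasSum_conv_smul hpn hp hF
    refine ⟨h1.summable, ?_⟩
    have h2 : ∑' g, convPow p (n + 1) g * f g = ∑' h, convPow p n h * ∑' s, p s * f (h * s) := by
      refine h1.tsum_eq.trans ?_
      rw [hF.tsum_prod]
      exact tsum_congr hin
    have h3 : ∑' h, convPow p n h * (f h + C) = (∑' h, convPow p n h * f h) + C := by
      simp only [mul_add]
      rw [ih.1.tsum_add (hpn.2.summable.mul_right C), tsum_mul_right, hpn.2.tsum_eq, one_mul]
    rw [h2]
    calc _ ≤ _ := hsum.tsum_le_tsum key hb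
      _ ≤ f 1 + (n + 1 : ℕ) * C := by rw [h3]; push_cast; linarith [ih.2]

lemma conv_mul_pos {p q : G → ℝ} (hp : IsProb p) (hq : IsProb q) {a b : G} (ha : 0 < p a)
    (hb : 0 < q b) : 0 < conv p q (a * b) :=
  (summable_conv hp hq (a * b)).tsum_pos (fun h => mul_nonneg (hp.1 _) (hq.1 _)) a (by simp [*])

lemma exists_pos_of_conv_pos {p q : G → ℝ} (hp : IsProb p) (hq : IsProb q) {g : G}
    (h : 0 < conv p q g) : ∃ a, 0 < p a ∧ 0 < q (a⁻¹ * g) := by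
  by_contra! hcon
  have : conv p q g = 0 := by
    unfold NSVA.conv
    have : ∀ a, p a * q (a⁻¹ * g) = 0 := fun a => by
      rcases (hp.1 a).eq_or_lt with h0 | h0
      · simp [← h0]
      · simp [le_antisymm (hcon a h0) (hq.1 _)]
    simp [this]
  exact h.ne' this

/-- Aperiodicity and nondegeneracy make every `μ_n(g)` eventually positive. -/
lemma eventually_convPow_pos {μ : G → ℝ} (hμ : IsProb μ) (hap : Aperiodic μ) (hnd : Nondeg μ)
    (g : G) : ∀ᶠ n in atTop, 0 < convPow μ n g := by
  have key : ∃ k, ∀ n a, 0 < convPow μ n a → 0 < convPow μ (n + k) (a * g) := by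
    induction hnd g using Subsemigroup.closure_induction with
    | mem x hx => exact ⟨1, fun n a ha => conv_mul_pos (hμ.convPow n) hμ ha hx⟩
    | mul x y _ _ hx hy =>
      obtain ⟨k, hk⟩ := hx
      obtain ⟨l, hl⟩ := hy
      refine ⟨k + l, fun n a ha => ?_⟩
      rw [← add_assoc, ← mul_assoc]
      exact hl _ _ (hk _ _ ha)
  obtain ⟨k, hk⟩ := key
  obtain ⟨N, hN⟩ := hap
  filter_upwards [eventually_ge_atTop (N + k)] with n hn
  have := hk (n - k) 1 (hN _ (by omega))
  rwa [one_mul, Nat.sub_add_cancel (by omega)] at this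

end Convolution

section Noise

variable {G : Type*} {E : Type*} [NormedAddCommGroup E] [NormedSpace ℝ E]

lemma hasSum_noised_smul {μ : G → ℝ} (ρ : ℝ) {F : G × G → E} {A B : E}
    (hA : HasSum (fun x : G × G => (μ x.1 * μ x.2) • F x) A)
    (hB : HasSum (fun s => μ s • F (s, s)) B) :
    HasSum (fun x => noised μ ρ x • F x) (ρ • A + (1 - ρ) • B) := by
  have hinj : Function.Injective fun s : G => (s, s) := fun a b h => (Prod.ext_iff.1 h).1
  have hB' : HasSum (fun x : G × G => (μ x.1 * (if x.1 = x.2 then 1 else 0)) • F x) B := by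
    refine (hinj.hasSum_iff ?_).1 (by simpa [Function.comp_def] using hB)
    rintro ⟨a, b⟩ hab
    have : a ≠ b := fun h => hab ⟨a, by simp [h]⟩
    simp [this]
  convert! (hA.const_smul ρ).add (hB'.const_smul (1 - ρ)) using 2 with x
  simp only [noised, add_smul, mul_smul]

lemma IsProb.hasSum_prod {μ ν : G → ℝ} (hμ : IsProb μ) (hν : IsProb ν) :
    HasSum (fun x : G × G => μ x.1 * ν x.2) 1 := by
  simpa using hμ.2.mul hν.2 (hμ.2.summable.mul_of_nonneg hν.2.summable hμ.1 hν.1)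

lemma IsProb.noised {μ : G → ℝ} (hμ : IsProb μ) {ρ : ℝ} (h0 : 0 ≤ ρ) (h1 : ρ ≤ 1) :
    IsProb (noised μ ρ) := by
  refine ⟨fun x => ?_, ?_⟩
  · have := hμ.1 x.1
    have := hμ.1 x.2
    have : (0 : ℝ) ≤ 1 - ρ := by linarith
    unfold NSVA.noised
    split_ifs <;> positivity
  · have := hasSum_noised_smul ρ (F := fun _ => (1 : ℝ)) (by simpa using hμ.hasSum_prod hμ)
      (by simpa using hμ.2)
    simpa only [smul_eq_mul, mul_one, add_sub_cancel] using this

lemma norm_tsum_smul_sub_le [CompleteSpace E] {p : G → ℝ} (hp : IsProb p) {f : G → E} {C ε : ℝ}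
    (hf : ∀ g, ‖f g‖ ≤ C) (T : Finset G) (hT : ∀ s ∈ T, ε ≤ p s) :
    ‖∑' s, p s • f s - ε • ∑ s ∈ T, f s‖ ≤ (1 - T.card * ε) * C := by
  let e : G → ℝ := fun s => if s ∈ T then ε else 0
  have he : HasSum e (T.card * ε) := by
    have := hasSum_sum_of_ne_finset_zero (f := e) (s := T)
      (L := SummationFilter.unconditional G) fun b hb => by simp [e, hb]
    simpa [e] using this
  have hef : HasSum (fun s => e s • f s) (ε • ∑ s ∈ T, f s) := by
    have := hasSum_sum_of_ne_finset_zero (f := fun s => e s • f s) (s := T)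
      (L := SummationFilter.unconditional G) fun b hb => by simp [e, hb]
    rw [Finset.smul_sum]
    convert! this using 1
    exact Finset.sum_congr rfl fun s hs => by simp [e, hs]
  have hle : ∀ s, e s ≤ p s := fun s => by
    by_cases h : s ∈ T
    · simpa [e, h] using hT s h
    · simpa [e, h] using hp.1 s
  rw [← hef.tsum_eq, ← (hp.summable_smul hf).tsum_sub hef.summable]
  refine tsum_of_norm_bounded ((hp.2.sub he).mul_right C) fun s => ?_
  rw [← sub_smul, norm_smul, Real.norm_of_nonneg (sub_nonneg.2 (hle s))]
  exact mul_le_mul_of_nonneg_left (hf s) (sub_nonneg.2 (hle s))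

lemma norm_tsum_smul_le_of_two [CompleteSpace E] {p : G → ℝ} (hp : IsProb p) {f : G → E} {C ε : ℝ}
    (hf : ∀ g, ‖f g‖ ≤ C) {a b : G} (hab : a ≠ b) (h0 : 0 ≤ ε) (ha : ε ≤ p a) (hb : ε ≤ p b) :
    ‖∑' s, p s • f s‖ ≤ ε * ‖f a + f b‖ + (1 - 2 * ε) * C := by
  have h := norm_tsum_smul_sub_le hp hf {a, b} (ε := ε) (by simp [ha, hb])
  rw [Finset.sum_pair hab, Finset.card_pair hab] at h
  have h2 := norm_le_norm_add_norm_sub' (∑' s, p s • f s) (ε • (f a + f b))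
  rw [norm_smul, Real.norm_of_nonneg h0] at h2
  push_cast at h
  linarith

variable [Group G]

lemma convPow_noised_one {μ : G → ℝ} (hμ : IsProb μ) (n : ℕ) :
    convPow (noised μ 1) n = fun x : G × G => convPow μ n x.1 * convPow μ n x.2 := by
  induction n with
  | zero =>
    funext x
    rcases x with ⟨a, b⟩
    by_cases ha : a = 1 <;> by_cases hb : b = 1 <;> simp [convPow, ha, hb, Prod.ext_iff]
  | succ n ih =>
    funext x
    have h := summable_conv (hμ.convPow n) hμ
    have h0 : ∀ g h, 0 ≤ convPow μ n h * μ (h⁻¹ * g) := fun g h =>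
      mul_nonneg ((hμ.convPow n).1 _) (hμ.1 _)
    have := (h x.1).tsum_mul_tsum (h x.2) ((h x.1).mul_of_nonneg (h x.2) (h0 _) (h0 _))
    simp only [convPow, conv] at this ⊢
    rw [this, ih]
    refine tsum_congr fun y => ?_
    simp [noised]
    ring

lemma convPow_noised_pos {μ : G → ℝ} (hμ : IsProb μ) {ρ : ℝ} (h0 : 0 < ρ) (h1 : ρ ≤ 1) (n : ℕ)
    {a b : G} (ha : 0 < convPow μ n a) (hb : 0 < convPow μ n b) :
    0 < convPow (noised μ ρ) n (a, b) := by
  have hν := hμ.noised h0.le h1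
  induction n generalizing a b with
  | zero =>
    have ha' : a = 1 := by
      by_contra h
      simp [convPow, h] at ha
    have hb' : b = 1 := by
      by_contra h
      simp [convPow, h] at hb
    simp [convPow, ha', hb']
  | succ n ih =>
    obtain ⟨c, hc, hc'⟩ := exists_pos_of_conv_pos (hμ.convPow n) hμ ha
    obtain ⟨d, hd, hd'⟩ := exists_pos_of_conv_pos (hμ.convPow n) hμ hb
    have hstep : 0 < noised μ ρ (c⁻¹ * a, d⁻¹ * b) := by
      have : (0 : ℝ) ≤ 1 - ρ := by linarith
      unfold noised
      split_ifs <;> positivity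
    have := conv_mul_pos (hν.convPow n) hν (ih hc hd) hstep
    simpa [convPow] using this

end Noise

section Character

variable {G : Type*} [Group G]

/-- The unitary character `g ↦ exp(i θ φ(g))` attached to a homomorphism to `ℤ`. -/
noncomputable def chr (φ : G →* Multiplicative ℤ) (θ : ℝ) (g : G) : ℂ :=
  Complex.exp ((θ * (Multiplicative.toAdd (φ g) : ℤ) : ℝ) * Complex.I)

lemma norm_chr (φ : G →* Multiplicative ℤ) (θ : ℝ) (g : G) : ‖chr φ θ g‖ = 1 :=
  Complex.norm_exp_ofReal_mul_I _

lemma chr_mul (φ : G →* Multiplicative ℤ) (θ : ℝ) (g h : G) :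
    chr φ θ (g * h) = chr φ θ g * chr φ θ h := by
  simp only [chr, map_mul, toAdd_mul]
  rw [← Complex.exp_add]
  push_cast
  ring_nf

lemma chr_one (φ : G →* Multiplicative ℤ) (θ : ℝ) : chr φ θ 1 = 1 := by
  simp [chr]

lemma continuous_chr (φ : G →* Multiplicative ℤ) (g : G) : Continuous fun θ => chr φ θ g := by
  unfold chr
  fun_prop

lemma tsum_convPow_character {p : G → ℝ} (hp : IsProb p) {χ : G → ℂ} (hχ : ∀ g, ‖χ g‖ ≤ 1)
    (h1 : χ 1 = 1) (hmul : ∀ g h, χ (g * h) = χ g * χ h) (n : ℕ) :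
    ∑' g, convPow p n g • χ g = (∑' g, p g • χ g) ^ n := by
  have hop : op p χ = fun γ => (∑' g, p g • χ g) * χ γ := by
    funext γ
    simp only [op, hmul]
    rw [← tsum_mul_right]
    refine tsum_congr fun s => ?_
    simp only [Complex.real_smul]
    ring
  have key : ∀ n, op (convPow p n) χ = fun γ => (∑' g, p g • χ g) ^ n * χ γ := by
    intro n
    induction n with
    | zero => simp [op_convPow_zero]
    | succ n ih =>
      rw [op_convPow_succ hp hχ, hop]
      funext γ
      have := congrFun ih γ
      simp only [op] at this ⊢
      rw [pow_succ', mul_assoc, ← this, ← tsum_mul_left]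
      refine tsum_congr fun s => ?_
      simp only [Complex.real_smul]
      ring
  have := congrFun (key n) 1
  simpa [op, h1] using this

lemma norm_tsum_sub_le_tv {α : Type*} {p q : α → ℝ} (hp : IsProb p) (hq : IsProb q) {f : α → ℂ}
    (hf : ∀ g, ‖f g‖ ≤ 1) : ‖∑' g, p g • f g - ∑' g, q g • f g‖ ≤ 2 * tv p q := by
  rw [← (hp.summable_smul hf).tsum_sub (hq.summable_smul hf)]
  have hs : Summable fun g => |p g - q g| := (hp.2.summable.sub hq.2.summable).abs
  have : 2 * tv p q = ∑' g, |p g - q g| := by unfold tv; ring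
  rw [this]
  refine tsum_of_norm_bounded hs.hasSum fun g => ?_
  rw [← sub_smul, norm_smul, Real.norm_eq_abs]
  exact mul_le_of_le_one_right (abs_nonneg _) (hf g)

lemma continuous_tsum_chr {μ : G → ℝ} (hμ : IsProb μ) (φ : G →* Multiplicative ℤ) :
    Continuous fun θ => ∑' s, μ s • chr φ θ s := by
  refine continuous_tsum (fun s => (continuous_chr φ s).const_smul (μ s)) hμ.2.summable ?_
  intro s θ
  rw [norm_smul, norm_chr, mul_one, Real.norm_of_nonneg (hμ.1 s)]

lemma exists_normSq_tsum_chr_lt_one {μ : G → ℝ} (hμ : IsProb μ)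
    (hpos : ∀ g, ∀ᶠ n in atTop, 0 < convPow μ n g) {φ : G →* Multiplicative ℤ} {γ : G}
    (hne : φ γ ≠ 1) : ∃ θ, Complex.normSq (∑' s, μ s • chr φ θ s) < 1 := by
  obtain ⟨n, hn1, hn2⟩ := ((hpos γ).and (hpos 1)).exists
  have hm : (Multiplicative.toAdd (φ γ) : ℤ) ≠ 0 := fun h => hne (by simpa using h)
  have hmR : ((Multiplicative.toAdd (φ γ) : ℤ) : ℝ) ≠ 0 := by exact_mod_cast hm
  have hγ1 : γ ≠ 1 := by
    rintro rfl
    exact hne (map_one φ)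
  refine ⟨Real.pi / (Multiplicative.toAdd (φ γ) : ℤ), ?_⟩
  set θ := Real.pi / ((Multiplicative.toAdd (φ γ) : ℤ) : ℝ)
  have hchr : chr φ θ γ = -1 := by
    simp only [chr, θ]
    rw [div_mul_cancel₀ _ hmR, Complex.exp_pi_mul_I]
  have hε : 0 < min (convPow μ n γ) (convPow μ n 1) := lt_min hn1 hn2
  have hb := norm_tsum_smul_le_of_two (hμ.convPow n) (f := chr φ θ) (C := 1)
    (fun g => (norm_chr φ θ g).le) hγ1 hε.le (min_le_left _ _) (min_le_right _ _)
  rw [tsum_convPow_character hμ (fun g => (norm_chr φ θ g).le) (chr_one φ θ) (chr_mul φ θ),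
    hchr, chr_one, neg_add_cancel, norm_zero, norm_pow] at hb
  have hlt : ‖∑' s, μ s • chr φ θ s‖ < 1 := by
    by_contra! hge
    have := one_le_pow₀ (n := n) hge
    linarith
  rw [Complex.normSq_eq_norm_sq]
  nlinarith [norm_nonneg (∑' s, μ s • chr φ θ s)]

lemma hasSum_prod_chr {μ : G → ℝ} (hμ : IsProb μ) (φ : G →* Multiplicative ℤ) (θ : ℝ) :
    HasSum (fun x : G × G => (μ x.1 * μ x.2) • (chr φ θ x.1 * chr φ (-θ) x.2))
      (Complex.normSq (∑' s, μ s • chr φ θ s) : ℂ) := by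
  have hsn : ∀ θ, Summable fun s => ‖μ s • chr φ θ s‖ := fun θ =>
    hμ.summable_norm_smul fun g => (norm_chr φ θ g).le
  have hconj : ∑' s, μ s • chr φ (-θ) s = starRingEnd ℂ (∑' s, μ s • chr φ θ s) := by
    rw [Complex.conj_tsum]
    refine tsum_congr fun s => ?_
    simp [chr, ← Complex.exp_conj]
  have hfun : ∀ x : G × G, (μ x.1 * μ x.2) • (chr φ θ x.1 * chr φ (-θ) x.2) =
      (μ x.1 • chr φ θ x.1) * (μ x.2 • chr φ (-θ) x.2) := fun x => by
    rw [smul_mul_smul_comm]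
  have hs := summable_mul_of_summable_norm (hsn θ) (hsn (-θ))
  have ht := tsum_mul_tsum_of_summable_norm (hsn θ) (hsn (-θ))
  rw [hconj, Complex.mul_conj] at ht
  simp only [hfun, ht]
  exact hs.hasSum

lemma tsum_convPow_noised_chr {μ : G → ℝ} (hμ : IsProb μ) (φ : G →* Multiplicative ℤ) {ρ : ℝ}
    (h0 : 0 ≤ ρ) (h1 : ρ ≤ 1) (θ : ℝ) (n : ℕ) :
    ∑' x : G × G, convPow (noised μ ρ) n x • (chr φ θ x.1 * chr φ (-θ) x.2)
      = ((ρ * Complex.normSq (∑' s, μ s • chr φ θ s) + (1 - ρ) : ℝ) : ℂ) ^ n := by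
  have hdiag : HasSum (fun s => μ s • (chr φ θ s * chr φ (-θ) s)) (1 : ℂ) := by
    have h1 : ∀ s, chr φ θ s * chr φ (-θ) s = 1 := fun s => by
      simp [chr, ← Complex.exp_add]
    simpa [h1] using hμ.2.smul_const (1 : ℂ)
  rw [tsum_convPow_character (hμ.noised h0 h1) (χ := fun x => chr φ θ x.1 * chr φ (-θ) x.2)
    (fun x => by simp [norm_chr]) (by simp [chr_one])
    (fun x y => by simp only [Prod.fst_mul, Prod.snd_mul, chr_mul]; ring),
    (hasSum_noised_smul ρ (hasSum_prod_chr hμ φ θ) hdiag).tsum_eq]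
  simp

/-- If `φ` is a nonzero homomorphism to `ℤ`, testing the laws against the characters
`exp(iθ(φ(x) - φ(y)))`, with `θ` such that `|∑ μ(s) exp(iθφ(s))|² = 1 - 1/n`, separates them. -/
lemma hom_trivial_of_noise_sensitive {μ : G → ℝ} (hμ : IsProb μ)
    (hpos : ∀ g, ∀ᶠ n in atTop, 0 < convPow μ n g)
    (h : Tendsto (fun n => tv (convPow (noised μ (1 / 2)) n)
      (fun p : G × G => convPow μ n p.1 * convPow μ n p.2)) atTop (nhds 0))
    (φ : G →* Multiplicative ℤ) (γ : G) : φ γ = 1 := by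
  by_contra hne
  obtain ⟨N, hN⟩ : ∃ N : ℝ → ℝ, N = fun θ => Complex.normSq (∑' s, μ s • chr φ θ s) := ⟨_, rfl⟩
  have hNc : Continuous N := hN ▸ Complex.continuous_normSq.comp (continuous_tsum_chr hμ φ)
  have hN0 : N 0 = 1 := by
    have := (hμ.2.smul_const (1 : ℂ)).tsum_eq
    simp only [one_smul] at this
    simp [hN, chr, -Complex.real_smul, this]
  obtain ⟨θ₀, hθ₀⟩ : ∃ θ, N θ < 1 := hN ▸ exists_normSq_tsum_chr_lt_one hμ hpos hne
  have hbound : ∀ θ n, |(1 / 2 * N θ + 1 / 2) ^ n - (N θ) ^ n| ≤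
      2 * tv (convPow (noised μ (1 / 2)) n) (fun p : G × G => convPow μ n p.1 * convPow μ n p.2) := by
    intro θ n
    rw [← convPow_noised_one hμ]
    have h2 := norm_tsum_sub_le_tv ((hμ.noised (ρ := 1 / 2) (by norm_num) (by norm_num)).convPow n)
      ((hμ.noised zero_le_one le_rfl).convPow n) (f := fun x => chr φ θ x.1 * chr φ (-θ) x.2)
      (fun x => by simp [norm_chr])
    rw [tsum_convPow_noised_chr hμ φ (by norm_num) (by norm_num),
      tsum_convPow_noised_chr hμ φ zero_le_one le_rfl, ← congrFun hN θ,
      ← Complex.ofReal_pow, ← Complex.ofReal_pow, ← Complex.ofReal_sub, Complex.norm_real,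
      Real.norm_eq_abs] at h2
    have e1 : 1 / 2 * N θ + (1 - 1 / 2) = 1 / 2 * N θ + 1 / 2 := by ring
    have e2 : 1 * N θ + (1 - 1) = N θ := by ring
    rwa [e1, e2] at h2
  have hev : ∀ᶠ n : ℕ in atTop, |(1 + (-1 / 2) / (n : ℝ)) ^ n - (1 + (-1) / (n : ℝ)) ^ n| ≤
      2 * tv (convPow (noised μ (1 / 2)) n) (fun p : G × G => convPow μ n p.1 * convPow μ n p.2) := by
    have ht : Tendsto (fun n : ℕ => 1 + (-1) / (n : ℝ)) atTop (nhds 1) := by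
      simpa using (tendsto_const_div_atTop_nhds_zero_nat (-1 : ℝ)).const_add 1
    filter_upwards [ht.eventually_const_lt hθ₀] with n hn
    have hle : 1 + (-1) / (n : ℝ) ≤ 1 := by
      have : (-1) / (n : ℝ) ≤ 0 := div_nonpos_of_nonpos_of_nonneg (by norm_num) (by positivity)
      linarith
    obtain ⟨θ, hθ⟩ : 1 + (-1) / (n : ℝ) ∈ Set.range N :=
      mem_range_of_exists_le_of_exists_ge hNc ⟨θ₀, hn.le⟩ ⟨0, by rw [hN0]; exact hle⟩
    have := hbound θ n
    rw [hθ] at this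
    have e : 1 / 2 * (1 + (-1) / (n : ℝ)) + 1 / 2 = 1 + (-1 / 2) / (n : ℝ) := by ring
    rwa [e] at this
  have hlim := ((Real.tendsto_one_add_div_pow_exp (-1 / 2)).sub
    (Real.tendsto_one_add_div_pow_exp (-1))).abs
  have hle := le_of_tendsto_of_tendsto hlim (h.const_mul 2) hev
  have hlt : Real.exp (-1) < Real.exp (-1 / 2) := Real.exp_lt_exp.2 (by norm_num)
  rw [mul_zero] at hle
  have := abs_nonpos_iff.1 hle
  linarith

end Character

/-- A free left action of `ι → ℤ` on `G` by translations, with orbits indexed by `Δ`. -/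
structure Lat (G ι Δ : Type*) [Group G] where
  t : (ι → ℤ) → G
  E : G ≃ (ι → ℤ) × Δ
  spec : ∀ z γ, E (t z * γ) = (z + (E γ).1, (E γ).2)

namespace Lat

variable {G ι Δ : Type*} [Group G] (L : Lat G ι Δ)

/-- The base point of an orbit. -/
def base (x : Δ) : G := L.E.symm (0, x)

/-- The orbit of a point. -/
def rep (γ : G) : Δ := (L.E γ).2

/-- The position of a point in its orbit. -/
def loc (γ : G) : ι → ℤ := (L.E γ).1

lemma rep_mul (z : ι → ℤ) (γ : G) : L.rep (L.t z * γ) = L.rep γ := by simp [rep, L.spec]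

lemma loc_mul (z : ι → ℤ) (γ : G) : L.loc (L.t z * γ) = z + L.loc γ := by simp [loc, L.spec]

@[simp] lemma rep_base (x : Δ) : L.rep (L.base x) = x := by simp [rep, base]

@[simp] lemma loc_base (x : Δ) : L.loc (L.base x) = 0 := by simp [loc, base]

lemma t_mul_base (z : ι → ℤ) (x : Δ) : L.t z * L.base x = L.E.symm (z, x) := by
  apply L.E.injective
  simp [L.spec, base]

lemma eq_t_mul_base (γ : G) : γ = L.t (L.loc γ) * L.base (L.rep γ) := by
  rw [t_mul_base]
  simp [loc, rep]

lemma rep_base_rep_mul (γ s : G) : L.rep (L.base (L.rep γ) * s) = L.rep (γ * s) := by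
  conv_rhs => rw [L.eq_t_mul_base γ, mul_assoc, rep_mul]

/-- The action of `G` on the orbits by right multiplication. -/
def perm (s : G) : Δ ≃ Δ where
  toFun x := L.rep (L.base x * s)
  invFun x := L.rep (L.base x * s⁻¹)
  left_inv x := by simp [rep_base_rep_mul]
  right_inv x := by simp [rep_base_rep_mul]

/-- Invariance of a function under the left translations by `ι → ℤ`. -/
def Inv {α : Type*} (u : G → α) : Prop := ∀ z γ, u (L.t z * γ) = u γ

variable {L}

lemma Inv.eq_base {α : Type*} {u : G → α} (hu : L.Inv u) (γ : G) : u γ = u (L.base (L.rep γ)) := by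
  conv_lhs => rw [L.eq_t_mul_base γ, hu]

lemma inv_comp_rep {α : Type*} (h : Δ → α) : L.Inv fun γ => h (L.rep γ) := fun z γ => by
  simp only [rep_mul]

lemma Inv.exists_bound [Finite Δ] {E : Type*} [NormedAddCommGroup E] {u : G → E} (hu : L.Inv u) :
    ∃ C, ∀ γ, ‖u γ‖ ≤ C := by
  obtain ⟨C, hC⟩ := (Set.finite_range fun x => ‖u (L.base x)‖).bddAbove
  exact ⟨C, fun γ => hu.eq_base γ ▸ hC ⟨L.rep γ, rfl⟩⟩

variable {E : Type*} [NormedAddCommGroup E] [NormedSpace ℝ E]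

lemma Inv.op {u : G → E} (hu : L.Inv u) (p : G → ℝ) : L.Inv (op p u) := fun z γ => by
  simp only [NSVA.op, mul_assoc, hu z]

variable [Fintype Δ]

lemma Inv.sum_shift {α : Type*} [AddCommMonoid α] {u : G → α} (hu : L.Inv u) (s : G) :
    ∑ x, u (L.base x * s) = ∑ x, u (L.base x) := by
  rw [← (L.perm s).sum_comp fun x => u (L.base x)]
  exact Finset.sum_congr rfl fun x _ => hu.eq_base _

lemma Inv.sum_op [CompleteSpace E] {u : G → E} (hu : L.Inv u) {p : G → ℝ} (hp : IsProb p) :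
    ∑ x, NSVA.op p u (L.base x) = ∑ x, u (L.base x) := by
  obtain ⟨C, hC⟩ := hu.exists_bound
  simp only [NSVA.op]
  rw [← Summable.tsum_finsetSum fun x _ => hp.summable_smul fun s => hC (L.base x * s)]
  simp only [← Finset.smul_sum, hu.sum_shift]
  simpa using (hp.2.smul_const (∑ x, u (L.base x))).tsum_eq

end Lat

lemma exists_pos_le {α : Type*} [Finite α] {f : α → ℝ} (hf : ∀ a, 0 < f a) :
    ∃ ε > 0, ∀ a, ε ≤ f a := by
  rcases isEmpty_or_nonempty α with h | h
  · exact ⟨1, one_pos, fun a => h.elim a⟩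
  · obtain ⟨a, ha⟩ := Finite.exists_min f
    exact ⟨f a, hf a, ha⟩

section Mixing

variable {G ι Δ : Type*} [Group G] [Fintype Δ] {L : Lat G ι Δ}

/-- Doeblin contraction on the finite quotient. -/
lemma exists_doeblin (L : Lat G ι Δ) {p : G → ℝ} (hp : IsProb p)
    (hpos : ∀ g, ∀ᶠ k in atTop, 0 < convPow p k g) :
    ∃ k, ∃ δ : ℝ, 0 ≤ δ ∧ δ < 1 ∧ ∀ u : G → ℝ, L.Inv u → ∑ x, u (L.base x) = 0 →
      ∀ C, (∀ γ, ‖u γ‖ ≤ C) → ∀ γ, ‖op (convPow p k) u γ‖ ≤ δ * C := by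
  obtain ⟨k, hk⟩ := ((eventually_all (ι := Δ × Δ)).2 fun xy =>
    hpos ((L.base xy.1)⁻¹ * L.base xy.2)).exists
  obtain ⟨ε, hε, hεle⟩ := exists_pos_le hk
  have : Nonempty Δ := ⟨L.rep 1⟩
  have hcard : (0 : ℝ) < Fintype.card Δ := by exact_mod_cast Fintype.card_pos
  have key : ∀ u : G → ℝ, L.Inv u → ∑ x, u (L.base x) = 0 →
      ∀ C, (∀ γ, ‖u γ‖ ≤ C) → ∀ γ, ‖op (convPow p k) u γ‖ ≤ (1 - Fintype.card Δ * ε) * C := by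
    intro u hu h0 C hC γ
    rw [(hu.op _).eq_base γ]
    set x := L.rep γ
    have hinj : Function.Injective fun y => (L.base x)⁻¹ * L.base y := fun y y' h => by
      simpa using congrArg L.rep (mul_left_cancel h)
    have := norm_tsum_smul_sub_le (hp.convPow k) (f := fun s => u (L.base x * s))
      (fun s => hC _) (Finset.univ.map ⟨_, hinj⟩) (ε := ε) (by
        intro s hs
        obtain ⟨y, -, rfl⟩ := Finset.mem_map.1 hs
        exact hεle (x, y))
    simpa [h0, op] using this
  refine ⟨k, max 0 (1 - Fintype.card Δ * ε), le_max_left _ _, ?_, fun u hu h0 C hC γ => ?_⟩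
  · exact max_lt one_pos (by nlinarith)
  · refine (key u hu h0 C hC γ).trans (mul_le_mul_of_nonneg_right (le_max_right _ _) ?_)
    exact (norm_nonneg _).trans (hC γ)

lemma exists_norm_op_convPow_le {p : G → ℝ} (hp : IsProb p)
    (hpos : ∀ g, ∀ᶠ k in atTop, 0 < convPow p k g) {u : G → ℝ} (hu : L.Inv u)
    (h0 : ∑ x, u (L.base x) = 0) {ε : ℝ} (hε : 0 < ε) :
    ∃ j, ∀ γ, ‖op (convPow p j) u γ‖ ≤ ε := by
  obtain ⟨k, δ, hδ0, hδ1, hk⟩ := exists_doeblin L hp hpos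
  obtain ⟨C, hC⟩ := hu.exists_bound
  have key : ∀ j γ, ‖op (convPow p (k * j)) u γ‖ ≤ δ ^ j * C := by
    intro j
    induction j with
    | zero => simpa [op_convPow_zero] using hC
    | succ j ih =>
      intro γ
      rw [mul_add, mul_one, add_comm, op_convPow_add hp _ _ hC, pow_succ', mul_assoc]
      refine hk _ (hu.op _) ?_ _ ih γ
      rw [hu.sum_op (hp.convPow _), h0]
  have hlim : Tendsto (fun j => δ ^ j * C) atTop (nhds 0) := by
    simpa using (tendsto_pow_atTop_nhds_zero_of_lt_one hδ0 hδ1).mul_const C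
  obtain ⟨j, hj⟩ := (hlim.eventually_lt_const hε).exists
  exact ⟨k * j, fun γ => (key j γ).trans hj.le⟩

/-- Solvability of the Poisson equation on the finite quotient. -/
lemma exists_poisson {p : G → ℝ} (hp : IsProb p)
    (hpos : ∀ g, ∀ᶠ k in atTop, 0 < convPow p k g) {b : G → ℝ} (hb : L.Inv b)
    (h0 : ∑ x, b (L.base x) = 0) : ∃ h : G → ℝ, L.Inv h ∧ ∀ γ, h γ - op p h γ = b γ := by
  have hbd : ∀ h : Δ → ℝ, ∃ C, ∀ γ : G, ‖h (L.rep γ)‖ ≤ C := fun h =>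
    (Lat.inv_comp_rep (L := L) h).exists_bound
  let T : (Δ → ℝ) →ₗ[ℝ] (Δ → ℝ) :=
    { toFun := fun h x => h x - op p (fun γ => h (L.rep γ)) (L.base x) + ∑ y, h y
      map_add' := fun h h' => by
        obtain ⟨C, hC⟩ := hbd h
        obtain ⟨D, hD⟩ := hbd h'
        funext x
        simp only [Pi.add_apply, Finset.sum_add_distrib]
        rw [hp.op_add hC hD]
        ring
      map_smul' := fun c h => by
        funext x
        have : op p (fun γ => c * h (L.rep γ)) (L.base x)
            = c * op p (fun γ => h (L.rep γ)) (L.base x) := by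
          simp only [op]
          rw [← tsum_mul_left]
          exact tsum_congr fun s => by simp only [smul_eq_mul]; ring
        simp only [Pi.smul_apply, smul_eq_mul, RingHom.id_apply, this, ← Finset.mul_sum]
        ring }
  have : Nonempty Δ := ⟨L.rep 1⟩
  have hcard : (Fintype.card Δ : ℝ) ≠ 0 := by exact_mod_cast Fintype.card_ne_zero
  have hsumT : ∀ h : Δ → ℝ, ∑ x, T h x = Fintype.card Δ * ∑ y, h y := fun h => by
    have := (Lat.inv_comp_rep (L := L) h).sum_op hp
    simp only [Lat.rep_base] at this
    simp only [T, LinearMap.coe_mk, AddHom.coe_mk, Finset.sum_add_distrib, Finset.sum_sub_distrib]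
    rw [this]
    simp
  have hinj : Function.Injective T := by
    rw [← LinearMap.ker_eq_bot, LinearMap.ker_eq_bot']
    intro h hT
    have hs : ∑ y, h y = 0 := by
      have := hsumT h
      rw [hT] at this
      simpa [hcard] using this
    have hinv := Lat.inv_comp_rep (L := L) h
    have hfix : op p (fun γ => h (L.rep γ)) = fun γ => h (L.rep γ) := by
      funext γ
      rw [(hinv.op p).eq_base]
      have := congrFun hT (L.rep γ)
      simp only [T, LinearMap.coe_mk, AddHom.coe_mk, hs, Pi.zero_apply] at this
      linarith
    obtain ⟨C, hC⟩ := hbd h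
    have hfixn : ∀ n, op (convPow p n) (fun γ => h (L.rep γ)) = fun γ => h (L.rep γ) := by
      intro n
      induction n with
      | zero => rw [op_convPow_zero]
      | succ n ih => rw [op_convPow_succ hp hC, hfix, ih]
    funext x
    refine norm_le_zero_iff.1 (le_of_forall_pos_le_add fun ε hε => ?_)
    obtain ⟨j, hj⟩ := exists_norm_op_convPow_le hp hpos hinv (by simpa using hs) hε
    have := hj (L.base x)
    rw [hfixn] at this
    simpa using this
  obtain ⟨h, hh⟩ := LinearMap.injective_iff_surjective.1 hinj fun x => b (L.base x)
  have hinv := Lat.inv_comp_rep (L := L) h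
  refine ⟨fun γ => h (L.rep γ), hinv, fun γ => ?_⟩
  have hs : ∑ y, h y = 0 := by
    have := hsumT h
    rw [hh, h0] at this
    simpa [hcard] using this.symm
  rw [(hinv.op p).eq_base, hb.eq_base, ← congrFun hh (L.rep γ)]
  simp [T, hs]

end Mixing

section Taylor

lemma norm_exp_sub_one_sub_le (x : ℝ) :
    ‖Complex.exp (x * Complex.I) - 1 - x * Complex.I‖ ≤ 3 * x ^ 2 := by
  have hx : ‖(x : ℂ) * Complex.I‖ = |x| := by simp
  rcases le_or_gt |x| 1 with h | h
  · have h1 := Complex.norm_exp_sub_sum_le_norm_mul_exp ((x : ℂ) * Complex.I) 2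
    simp only [Finset.sum_range_succ, Finset.sum_range_zero, hx, sq_abs] at h1
    have h2 : Real.exp |x| ≤ 3 :=
      (Real.exp_le_exp.2 h).trans (Real.exp_one_lt_d9.le.trans (by norm_num))
    calc _ = _ := by congr 1; simp [sub_sub]
      _ ≤ _ := h1
      _ ≤ x ^ 2 * 3 := mul_le_mul_of_nonneg_left h2 (sq_nonneg x)
      _ = _ := mul_comm _ _
  · have h1 : ‖Complex.exp (x * Complex.I) - 1 - x * Complex.I‖ ≤ 1 + 1 + |x| := by
      refine (norm_sub_le _ _).trans (add_le_add ((norm_sub_le _ _).trans ?_) hx.le)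
      rw [Complex.norm_exp_ofReal_mul_I, norm_one]
    nlinarith [sq_abs x]

lemma tendsto_mul_exp_sub_one_sub (x : ℝ) :
    Tendsto (fun n : ℕ => (n : ℂ) * (Complex.exp ((x / √n : ℝ) * Complex.I) - 1
      - (x / √n : ℝ) * Complex.I)) atTop (nhds (-(x ^ 2 / 2 : ℝ))) := by
  have hlim : Tendsto (fun n : ℕ => |x| ^ 3 * Real.exp |x| * (√(n : ℝ))⁻¹) atTop (nhds 0) := by
    have : Tendsto (fun n : ℕ => (√(n : ℝ))⁻¹) atTop (nhds 0) :=
      (Real.tendsto_sqrt_atTop.comp tendsto_natCast_atTop_atTop).inv_tendsto_atTop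
    simpa using this.const_mul (|x| ^ 3 * Real.exp |x|)
  rw [tendsto_iff_norm_sub_tendsto_zero]
  refine squeeze_zero' (Eventually.of_forall fun _ => norm_nonneg _) ?_ hlim
  filter_upwards [eventually_ge_atTop 1] with n hn
  have hn1 : (1 : ℝ) ≤ n := by exact_mod_cast hn
  have hs1 : 1 ≤ √(n : ℝ) := Real.one_le_sqrt.2 hn1
  have hs0 : 0 < √(n : ℝ) := by linarith
  have hsn : √(n : ℝ) ^ 2 = n := Real.sq_sqrt (by linarith)
  set y : ℝ := x / √n with hy
  have hyx : |y| ≤ |x| := by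
    rw [hy, abs_div, abs_of_pos hs0]
    exact div_le_self (abs_nonneg x) hs1
  have h1 := Complex.norm_exp_sub_sum_le_norm_mul_exp ((y : ℂ) * Complex.I) 3
  have hyI : ‖(y : ℂ) * Complex.I‖ = |y| := by simp
  simp only [Finset.sum_range_succ, Finset.sum_range_zero, hyI] at h1
  have hxy : x ^ 2 = n * y ^ 2 := by
    rw [hy, div_pow, hsn]
    field_simp
  have heq : (n : ℂ) * (Complex.exp (y * Complex.I) - 1 - y * Complex.I)
      - (-((x ^ 2 / 2 : ℝ)) : ℂ)
      = n * (Complex.exp (y * Complex.I) - (0 + (y * Complex.I) ^ 0 / (Nat.factorial 0 : ℂ)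
        + (y * Complex.I) ^ 1 / (Nat.factorial 1 : ℂ)
        + (y * Complex.I) ^ 2 / (Nat.factorial 2 : ℂ))) := by
    rw [hxy, mul_pow (y : ℂ) Complex.I 2, Complex.I_sq]
    simp [Nat.factorial]
    ring
  rw [heq, norm_mul, Complex.norm_natCast]
  calc _ ≤ (n : ℝ) * (|y| ^ 3 * Real.exp |y|) := mul_le_mul_of_nonneg_left h1 (by linarith)
    _ ≤ n * (|y| ^ 3 * Real.exp |x|) := by gcongr
    _ = |x| ^ 3 * Real.exp |x| * (√(n : ℝ))⁻¹ := by
      have h3 : |y| ^ 3 * √(n : ℝ) * √(n : ℝ) ^ 2 = |x| ^ 3 := by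
        rw [hy, abs_div, abs_of_pos hs0]
        field_simp
      rw [← h3, hsn]
      field_simp

lemma tendsto_mul_tsum_exp_sub_one {α : Type*} {p : α → ℝ} (hp : IsProb p) {a : α → ℝ}
    (h0 : HasSum (fun s => p s * a s) 0) (h2 : Summable fun s => p s * a s ^ 2) :
    Tendsto (fun n : ℕ => (n : ℂ) * ((∑' s, p s • Complex.exp ((a s / √n : ℝ) * Complex.I)) - 1))
      atTop (nhds (-((∑' s, p s * a s ^ 2) / 2 : ℝ))) := by
  have hpt : ∀ s, Tendsto (fun n : ℕ => p s • ((n : ℂ) *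
      (Complex.exp ((a s / √n : ℝ) * Complex.I) - 1 - (a s / √n : ℝ) * Complex.I)))
      atTop (nhds (p s • (-(a s ^ 2 / 2 : ℝ) : ℂ))) := fun s =>
    (tendsto_mul_exp_sub_one_sub (a s)).const_smul (p s)
  have hdom := tendsto_tsum_of_dominated_convergence (h2.mul_left 3) hpt (by
    refine Eventually.of_forall fun n s => ?_
    rw [norm_smul, norm_mul, Real.norm_of_nonneg (hp.1 s), Complex.norm_natCast]
    have hb := norm_exp_sub_one_sub_le (a s / √n)
    rcases Nat.eq_zero_or_pos n with rfl | hn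
    · simp
      exact mul_nonneg (hp.1 s) (sq_nonneg _)
    · have hn' : (0 : ℝ) < n := by exact_mod_cast hn
      have h3 : (n : ℝ) * (3 * (a s / √n) ^ 2) = 3 * a s ^ 2 := by
        rw [div_pow, Real.sq_sqrt hn'.le]
        field_simp
      calc _ ≤ p s * (n * (3 * (a s / √n) ^ 2)) :=
            mul_le_mul_of_nonneg_left (mul_le_mul_of_nonneg_left hb hn'.le) (hp.1 s)
        _ = _ := by rw [h3]; ring)
  have hR : ∑' s, p s • (-(a s ^ 2 / 2 : ℝ) : ℂ) = (-((∑' s, p s * a s ^ 2) / 2 : ℝ) : ℂ) := by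
    rw [← tsum_div_const, ← Complex.ofReal_neg, ← tsum_neg, Complex.ofReal_tsum]
    refine tsum_congr fun s => ?_
    simp only [Complex.real_smul]
    push_cast
    ring
  rw [hR] at hdom
  refine hdom.congr fun n => ?_
  have hA : HasSum (fun s => p s • Complex.exp ((a s / √n : ℝ) * Complex.I)) _ :=
    (hp.summable_smul (C := 1) fun s => (Complex.norm_exp_ofReal_mul_I _).le).hasSum
  have hB : HasSum (fun s => p s • (1 : ℂ)) 1 := by
    have := hp.2.smul_const (1 : ℂ)
    rwa [one_smul] at this
  have hC : HasSum (fun s => p s • ((a s / √n : ℝ) * Complex.I : ℂ)) 0 := by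
    have := (Complex.hasSum_ofReal.2 (h0.div_const √n)).mul_right Complex.I
    simp only [zero_div, Complex.ofReal_zero, zero_mul] at this
    have hfun : (fun s => p s • ((a s / √n : ℝ) * Complex.I : ℂ)) =
        fun s => ((p s * a s / √n : ℝ) : ℂ) * Complex.I := by
      funext s
      simp only [Complex.real_smul]
      push_cast
      ring
    rwa [hfun]
  have := (((hA.sub hB).sub hC).mul_left (n : ℂ)).tsum_eq
  rw [sub_zero] at this
  rw [← this]
  refine tsum_congr fun s => ?_
  simp only [Complex.real_smul]
  ring

end Taylor

section Walk

variable {G ι Δ : Type*} [Fintype ι]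

/-- The plane wave `γ ↦ exp(i⟨v, M(γ)⟩)`. -/
noncomputable def wave (M : G → ι → ℝ) (v : ι → ℝ) (γ : G) : ℂ :=
  Complex.exp ((∑ i, v i * M γ i : ℝ) * Complex.I)

lemma norm_wave (M : G → ι → ℝ) (v : ι → ℝ) (γ : G) : ‖wave M v γ‖ = 1 :=
  Complex.norm_exp_ofReal_mul_I _

lemma norm_wave_mul_le {u : G → ℝ} {C : ℝ} (hC : ∀ γ, ‖u γ‖ ≤ C) (v : ι → ℝ) (γ : G) :
    ‖wave M v γ * (u γ : ℂ)‖ ≤ C := by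
  rw [norm_mul, norm_wave, one_mul, Complex.norm_real]
  exact hC γ

variable [Group G]

/-- The pairing of `w` with the increment of `M` from `γ` to `γ s`. -/
noncomputable def incr (M : G → ι → ℝ) (w : ι → ℝ) (γ s : G) : ℝ :=
  ∑ i, w i * (M (γ * s) i - M γ i)

/-- The averaging operator twisted by a plane wave. -/
noncomputable def twist (M : G → ι → ℝ) (p : G → ℝ) (v : ι → ℝ) (u : G → ℝ) (γ : G) : ℂ :=
  ∑' s, p s • (Complex.exp ((incr M v γ s : ℝ) * Complex.I) * (u (γ * s) : ℂ))

/-- `p` defines a walk for which the equivariant map `M` is a square-integrable martingale. -/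
structure Walk (L : Lat G ι Δ) (M : G → ι → ℝ) (p : G → ℝ) : Prop where
  prob : IsProb p
  pos : ∀ g, ∀ᶠ k in atTop, 0 < convPow p k g
  equiv : ∀ z γ i, M (L.t z * γ) i = z i + M γ i
  mean : ∀ γ i, HasSum (fun s => p s * (M (γ * s) i - M γ i)) 0
  sq : ∀ γ i, Summable fun s => p s * (M (γ * s) i - M γ i) ^ 2

variable {L : Lat G ι Δ} {M : G → ι → ℝ} {p : G → ℝ}

lemma wave_mul (M : G → ι → ℝ) (v : ι → ℝ) (γ s : G) :
    wave M v (γ * s) = wave M v γ * Complex.exp ((incr M v γ s : ℝ) * Complex.I) := by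
  have h : ∑ i, v i * M (γ * s) i = ∑ i, v i * M γ i + incr M v γ s := by
    rw [incr, ← Finset.sum_add_distrib]
    exact Finset.sum_congr rfl fun i _ => by ring
  rw [wave, wave, h, ← Complex.exp_add, Complex.ofReal_add, add_mul]

lemma op_wave_mul (M : G → ι → ℝ) (p : G → ℝ) (v : ι → ℝ) (u : G → ℝ) (γ : G) :
    op p (fun γ => wave M v γ * (u γ : ℂ)) γ = wave M v γ * twist M p v u γ := by
  simp only [op, twist]
  rw [← tsum_mul_left]
  refine tsum_congr fun s => ?_
  rw [wave_mul]
  simp only [Complex.real_smul]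
  ring

namespace Walk

lemma inv_incr (h : Walk L M p) (w : ι → ℝ) : L.Inv (incr M w) := fun z γ => by
  funext s
  simp only [incr, mul_assoc, h.equiv, add_sub_add_left_eq_sub]

lemma inv_twist (h : Walk L M p) (q : G → ℝ) (v : ι → ℝ) {u : G → ℝ} (hu : L.Inv u) :
    L.Inv (twist M q v u) := fun z γ => by
  simp only [twist, mul_assoc, hu z, h.inv_incr v z γ]

lemma hasSum_incr (h : Walk L M p) (w : ι → ℝ) (γ : G) :
    HasSum (fun s => p s * incr M w γ s) 0 := by
  have := hasSum_sum (s := Finset.univ) fun i (_ : i ∈ Finset.univ) =>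
    (h.mean γ i).mul_left (w i)
  simp only [mul_zero, Finset.sum_const_zero] at this
  convert! this using 2 with s
  rw [incr, Finset.mul_sum]
  exact Finset.sum_congr rfl fun i _ => by ring

lemma summable_incr_sq (h : Walk L M p) (w : ι → ℝ) (γ : G) :
    Summable fun s => p s * incr M w γ s ^ 2 := by
  have hs : Summable fun s => (∑ i, w i ^ 2) * ∑ i, p s * (M (γ * s) i - M γ i) ^ 2 :=
    (summable_sum fun i _ => h.sq γ i).mul_left _
  refine Summable.of_nonneg_of_le (fun s => mul_nonneg (h.prob.1 s) (sq_nonneg _)) (fun s => ?_) hs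
  have := Finset.sum_mul_sq_le_sq_mul_sq Finset.univ w fun i => M (γ * s) i - M γ i
  rw [← Finset.mul_sum, mul_left_comm]
  exact mul_le_mul_of_nonneg_left this (h.prob.1 s)

end Walk

/-- The average over the orbits of the variance of the increments in direction `w`. -/
noncomputable def meanVar [Fintype Δ] (L : Lat G ι Δ) (M : G → ι → ℝ) (p : G → ℝ)
    (w : ι → ℝ) : ℝ :=
  (Fintype.card Δ : ℝ)⁻¹ * ∑ x, ∑' s, p s * incr M w (L.base x) s ^ 2

lemma tendsto_twist {q : G → ℝ} (hq : IsProb q) {u : G → ℝ} {C : ℝ}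
    (hC : ∀ γ, ‖u γ‖ ≤ C) {v : ℕ → ι → ℝ} (hv : Tendsto v atTop (nhds 0)) (γ : G) :
    Tendsto (fun n => twist M q (v n) u γ) atTop (nhds ((op q u γ : ℝ) : ℂ)) := by
  have hop : ((op q u γ : ℝ) : ℂ) = ∑' s, q s • (u (γ * s) : ℂ) := by
    rw [op, Complex.ofReal_tsum]
    exact tsum_congr fun s => by simp
  rw [hop]
  refine tendsto_tsum_of_dominated_convergence (hq.2.summable.mul_right C) (fun s => ?_)
    (Eventually.of_forall fun n s => ?_)
  · have hi : Tendsto (fun n => incr M (v n) γ s) atTop (nhds 0) := by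
      have hc : Continuous fun w : ι → ℝ => incr M w γ s := by
        unfold incr
        fun_prop
      have := (hc.tendsto 0).comp hv
      simpa [incr, Function.comp_def] using this
    have hE : Tendsto (fun n => Complex.exp ((incr M (v n) γ s : ℝ) * Complex.I)) atTop
        (nhds 1) := by
      have hc : Continuous fun x : ℝ => Complex.exp ((x : ℂ) * Complex.I) := by fun_prop
      simpa [Function.comp_def] using (hc.tendsto 0).comp hi
    simpa using (hE.mul_const (u (γ * s) : ℂ)).const_smul (q s)
  · rw [norm_smul, norm_mul, Complex.norm_exp_ofReal_mul_I, one_mul, Complex.norm_real,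
      Real.norm_of_nonneg (hq.1 s)]
    exact mul_le_mul_of_nonneg_left (hC _) (hq.1 s)

lemma op_convPow_sub_pow_le (hp : IsProb p) {f : G → ℂ} {C : ℝ} (hf : ∀ γ, ‖f γ‖ ≤ C) {c : ℝ}
    (hc : |c| ≤ 1) {η : ℝ} (h : ∀ γ, ‖op p f γ - c * f γ‖ ≤ η) (n : ℕ) :
    ∀ γ, ‖op (convPow p n) f γ - (c : ℂ) ^ n * f γ‖ ≤ n * η := by
  induction n with
  | zero => simp [op_convPow_zero]
  | succ n ih =>
    intro γ
    have hcf : ∀ g, ‖(c : ℂ) * f g‖ ≤ C := fun g => by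
      rw [norm_mul, Complex.norm_real]
      exact (mul_le_of_le_one_left (norm_nonneg _) hc).trans (hf g)
    have h1 : op (convPow p n) (fun g => op p f g - c * f g) γ
        = op (convPow p n) (op p f) γ - c * op (convPow p n) f γ := by
      rw [(hp.convPow n).op_sub (hp.norm_op_le hf) hcf]
      congr 1
      simp only [op]
      rw [← tsum_mul_left]
      exact tsum_congr fun s => by simp only [Complex.real_smul]; ring
    have h2 := (hp.convPow n).norm_op_le h γ
    rw [h1] at h2
    rw [op_convPow_succ hp hf]
    have h3 : ‖(c : ℂ) * (op (convPow p n) f γ - (c : ℂ) ^ n * f γ)‖ ≤ n * η := by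
      rw [norm_mul, Complex.norm_real]
      exact (mul_le_of_le_one_left (norm_nonneg _) hc).trans (ih γ)
    calc _ = ‖(op (convPow p n) (op p f) γ - c * op (convPow p n) f γ)
          + c * (op (convPow p n) f γ - (c : ℂ) ^ n * f γ)‖ := by congr 1; ring
      _ ≤ η + n * η := (norm_add_le _ _).trans (add_le_add h2 h3)
      _ = (n + 1 : ℕ) * η := by push_cast; ring

variable [Fintype Δ]

namespace Walk

lemma eventually_twist_sub_le (h : Walk L M p) {q : G → ℝ} (hq : IsProb q) {u : G → ℝ}
    (hu : L.Inv u) {v : ℕ → ι → ℝ} (hv : Tendsto v atTop (nhds 0)) {ε : ℝ} (hε : 0 < ε) :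
    ∀ᶠ n in atTop, ∀ γ, ‖twist M q (v n) u γ - ((op q u γ : ℝ) : ℂ)‖ ≤ ε := by
  obtain ⟨C, hC⟩ := hu.exists_bound
  have : ∀ᶠ n in atTop, ∀ x, ‖twist M q (v n) u (L.base x) - ((op q u (L.base x) : ℝ) : ℂ)‖ ≤ ε := by
    refine eventually_all.2 fun x => ?_
    have := tendsto_iff_norm_sub_tendsto_zero.1 (tendsto_twist (M := M) hq hC hv (L.base x))
    exact (this.eventually_lt_const hε).mono fun _ => le_of_lt
  filter_upwards [this] with n hn γ
  rw [(h.inv_twist q (v n) hu).eq_base, (hu.op q).eq_base]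
  exact hn _

lemma tendsto_mean_zero (h : Walk L M p) {u : G → ℝ} (hu : L.Inv u) (h0 : ∑ x, u (L.base x) = 0)
    {v : ℕ → ι → ℝ} (hv : Tendsto v atTop (nhds 0)) :
    Tendsto (fun n => op (convPow p n) (fun γ => wave M (v n) γ * (u γ : ℂ)) 1) atTop (nhds 0) := by
  obtain ⟨C, hC⟩ := hu.exists_bound
  rw [Metric.tendsto_nhds]
  intro ε hε
  obtain ⟨j, hj⟩ := exists_norm_op_convPow_le h.prob h.pos hu h0 (by positivity : 0 < ε / 3)
  filter_upwards [h.eventually_twist_sub_le (h.prob.convPow j) hu hv (by positivity : 0 < ε / 3),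
    eventually_ge_atTop j] with n hn hnj
  rw [dist_zero_right]
  have hb := norm_wave_mul_le (M := M) hC (v n)
  have key : ∀ γ, ‖op (convPow p j) (fun γ => wave M (v n) γ * (u γ : ℂ)) γ‖ ≤ ε / 3 + ε / 3 := by
    intro γ
    rw [op_wave_mul, norm_mul, norm_wave, one_mul]
    have h1 := hj γ
    have h2 := norm_le_norm_add_norm_sub' (twist M (convPow p j) (v n) u γ)
      ((op (convPow p j) u γ : ℝ) : ℂ)
    rw [Complex.norm_real] at h2
    linarith [hn γ]
  have hsplit := op_convPow_add h.prob (n - j) j hb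
  rw [Nat.sub_add_cancel hnj] at hsplit
  rw [hsplit]
  exact ((h.prob.convPow _).norm_op_le key 1).trans_lt (by linarith)

end Walk

end Walk

lemma tendsto_div_sqrt {ι : Type*} (w : ι → ℝ) :
    Tendsto (fun (n : ℕ) i => w i / √(n : ℝ)) atTop (nhds 0) := by
  refine tendsto_pi_nhds.2 fun i => ?_
  have : Tendsto (fun n : ℕ => (√(n : ℝ))⁻¹) atTop (nhds 0) :=
    (Real.tendsto_sqrt_atTop.comp tendsto_natCast_atTop_atTop).inv_tendsto_atTop
  simpa [div_eq_mul_inv] using this.const_mul (w i)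

section Wave

variable {G ι : Type*} [Fintype ι]

lemma continuous_wave (M : G → ι → ℝ) (γ : G) : Continuous fun v => wave M v γ := by
  unfold wave
  fun_prop

lemma wave_zero (M : G → ι → ℝ) (γ : G) : wave M 0 γ = 1 := by simp [wave]

end Wave

section Walk

variable {G ι Δ : Type*} [Group G] [Fintype ι] {L : Lat G ι Δ} {M : G → ι → ℝ} {p : G → ℝ}

lemma incr_div (M : G → ι → ℝ) (w : ι → ℝ) (c : ℝ) (γ s : G) :
    incr M (fun i => w i / c) γ s = incr M w γ s / c := by
  rw [incr, incr, Finset.sum_div]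
  exact Finset.sum_congr rfl fun i _ => by ring

lemma summable_twist (hp : IsProb p) (v : ι → ℝ) {u : G → ℝ} {C : ℝ} (hC : ∀ γ, ‖u γ‖ ≤ C)
    (γ : G) : Summable fun s =>
      p s • (Complex.exp ((incr M v γ s : ℝ) * Complex.I) * (u (γ * s) : ℂ)) :=
  hp.summable_smul (C := C) fun s => by
    rw [norm_mul, Complex.norm_exp_ofReal_mul_I, one_mul, Complex.norm_real]
    exact hC _

lemma twist_add_div (hp : IsProb p) (v : ι → ℝ) {u r : G → ℝ} {C D : ℝ} (hC : ∀ γ, ‖u γ‖ ≤ C)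
    (hD : ∀ γ, ‖r γ‖ ≤ D) (c : ℝ) (γ : G) :
    twist M p v (fun g => u g + r g / c) γ = twist M p v u γ + twist M p v r γ / c := by
  simp only [twist]
  rw [← tsum_div_const, ← (summable_twist hp v hC γ).tsum_add ((summable_twist hp v hD γ).div_const _)]
  refine tsum_congr fun s => ?_
  simp only [Complex.real_smul]
  push_cast
  ring

lemma Walk.tendsto_twist_one (h : Walk L M p) (w : ι → ℝ) (γ : G) :
    Tendsto (fun n : ℕ => (n : ℂ) * (twist M p (fun i => w i / √n) (fun _ => 1) γ - 1)) atTop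
      (nhds (-((∑' s, p s * incr M w γ s ^ 2) / 2 : ℝ))) := by
  have := tendsto_mul_tsum_exp_sub_one h.prob (h.hasSum_incr w γ) (h.summable_incr_sq w γ)
  refine this.congr fun n => ?_
  simp only [twist, incr_div, Complex.ofReal_one, mul_one]

variable [Fintype Δ]

namespace Walk

lemma meanVar_nonneg (h : Walk L M p) (w : ι → ℝ) : 0 ≤ meanVar L M p w :=
  mul_nonneg (by positivity) (Finset.sum_nonneg fun x _ =>
    tsum_nonneg fun s => mul_nonneg (h.prob.1 s) (sq_nonneg _))

lemma exists_corrector (h : Walk L M p) (w : ι → ℝ) : ∃ r : G → ℝ, L.Inv r ∧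
    ∀ γ, r γ - op p r γ = meanVar L M p w / 2 - (∑' s, p s * incr M w γ s ^ 2) / 2 := by
  have : Nonempty Δ := ⟨L.rep 1⟩
  have hcard : (Fintype.card Δ : ℝ) ≠ 0 := by exact_mod_cast Fintype.card_ne_zero
  refine exists_poisson h.prob h.pos (fun z γ => ?_) ?_
  · simp only [h.inv_incr w z γ]
  · rw [Finset.sum_sub_distrib, ← Finset.sum_div, ← Finset.sum_div, Finset.sum_const,
      Finset.card_univ, nsmul_eq_mul, meanVar, ← mul_assoc, mul_inv_cancel₀ hcard, one_mul, sub_self]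

lemma eventually_twist_corrected_le (h : Walk L M p) (w : ι → ℝ) {r : G → ℝ} (hr : L.Inv r)
    (hrp : ∀ γ, r γ - op p r γ = meanVar L M p w / 2 - (∑' s, p s * incr M w γ s ^ 2) / 2)
    {ε : ℝ} (hε : 0 < ε) :
    ∀ᶠ n : ℕ in atTop, ∀ γ, ‖twist M p (fun i => w i / √n) (fun g => 1 + r g / n) γ
      - (1 - meanVar L M p w / 2 / n : ℝ) * (1 + r γ / n : ℝ)‖ ≤ ε / n := by
  obtain ⟨C, hC⟩ := hr.exists_bound
  set V := meanVar L M p w with hV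
  have hlim : ∀ γ, Tendsto (fun n : ℕ => (n : ℂ) * (twist M p (fun i => w i / √n)
      (fun g => 1 + r g / n) γ - (1 - V / 2 / n : ℝ) * (1 + r γ / n : ℝ))) atTop (nhds 0) := by
    intro γ
    have h1 := h.tendsto_twist_one w γ
    have h2 := tendsto_twist (M := M) h.prob hC (tendsto_div_sqrt w) γ
    have h3 : Tendsto (fun n : ℕ => ((V / 2 * r γ / n : ℝ) : ℂ)) atTop (nhds 0) := by
      have := (Complex.continuous_ofReal.tendsto 0).comp
        (tendsto_const_div_atTop_nhds_zero_nat (V / 2 * r γ))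
      simpa [Function.comp_def] using this
    have h4 := (((h1.add h2).sub (tendsto_const_nhds (x := ((r γ : ℝ) : ℂ)))).add
      (tendsto_const_nhds (x := ((V / 2 : ℝ) : ℂ)))).add h3
    have h5 : (-((∑' s, p s * incr M w γ s ^ 2) / 2 : ℝ) + ((op p r γ : ℝ) : ℂ) - ((r γ : ℝ) : ℂ)
        + ((V / 2 : ℝ) : ℂ) + 0) = 0 := by
      have := hrp γ
      rw [add_zero]
      norm_cast
      linarith
    rw [h5] at h4
    refine h4.congr' ?_
    filter_upwards [eventually_ge_atTop 1] with n hn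
    have hn' : (n : ℂ) ≠ 0 := by exact_mod_cast (by omega : n ≠ 0)
    rw [twist_add_div (C := 1) h.prob _ (fun _ => by simp) hC]
    push_cast
    field_simp
    ring
  have hev : ∀ᶠ n : ℕ in atTop, ∀ x, ‖(n : ℂ) * (twist M p (fun i => w i / √n)
      (fun g => 1 + r g / n) (L.base x) - (1 - V / 2 / n : ℝ) * (1 + r (L.base x) / n : ℝ))‖ < ε :=
    eventually_all.2 fun x =>
      (tendsto_zero_iff_norm_tendsto_zero.1 (hlim (L.base x))).eventually_lt_const hε
  filter_upwards [hev, eventually_ge_atTop 1] with n hn hn1 γ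
  have hinv : L.Inv fun g => 1 + r g / (n : ℝ) := fun z g => by simp only [hr z g]
  have hn0 : (0 : ℝ) < n := by exact_mod_cast hn1
  rw [(h.inv_twist p _ hinv).eq_base γ, hr.eq_base γ, le_div_iff₀ hn0, mul_comm]
  have := (hn (L.rep γ)).le
  rwa [norm_mul, Complex.norm_natCast] at this

lemma tendsto_op_wave_one (h : Walk L M p) (w : ι → ℝ) :
    Tendsto (fun n : ℕ => op (convPow p n) (wave M fun i => w i / √n) 1) atTop
      (nhds (Real.exp (-(meanVar L M p w / 2)) : ℝ)) := by
  obtain ⟨r, hr, hrp⟩ := h.exists_corrector w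
  obtain ⟨C, hC⟩ := hr.exists_bound
  set V := meanVar L M p w with hV
  have hV0 : 0 ≤ V := h.meanVar_nonneg w
  have hwave : Tendsto (fun n : ℕ => wave M (fun i => w i / √n) 1) atTop (nhds 1) := by
    rw [← wave_zero M 1]
    exact ((continuous_wave M 1).tendsto 0).comp (tendsto_div_sqrt w)
  have hr1 : Tendsto (fun n : ℕ => ((1 + r 1 / n : ℝ) : ℂ)) atTop (nhds 1) := by
    have := (Complex.continuous_ofReal.tendsto _).comp
      ((tendsto_const_div_atTop_nhds_zero_nat (r 1)).const_add 1)
    simpa [Function.comp_def] using this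
  have hpow : Tendsto (fun n : ℕ => (((1 - V / 2 / n : ℝ) : ℂ)) ^ n) atTop
      (nhds (Real.exp (-(V / 2)) : ℝ)) := by
    have := (Complex.continuous_ofReal.tendsto _).comp
      (Real.tendsto_one_add_div_pow_exp (-(V / 2)))
    refine this.congr fun n => ?_
    simp only [Function.comp_apply]
    push_cast
    ring
  have hmain := hpow.mul (hwave.mul hr1)
  rw [mul_one, mul_one] at hmain
  have hd1 : Tendsto (fun n : ℕ => op (convPow p n) (fun γ => wave M (fun i => w i / √n) γ *
      ((1 + r γ / n : ℝ) : ℂ)) 1 - (((1 - V / 2 / n : ℝ) : ℂ)) ^ n *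
      (wave M (fun i => w i / √n) 1 * ((1 + r 1 / n : ℝ) : ℂ))) atTop (nhds 0) := by
    rw [Metric.tendsto_nhds]
    intro ε hε
    filter_upwards [h.eventually_twist_corrected_le w hr hrp (half_pos hε), eventually_ge_atTop 1,
      eventually_ge_atTop ⌈V⌉₊] with n hn hn1 hnV
    have hn0 : (0 : ℝ) < n := by exact_mod_cast hn1
    have hnV' : V / n ≤ 1 := (div_le_one hn0).2 (Nat.ceil_le.1 hnV)
    have hVn : 0 ≤ V / n := by positivity
    have hb : ∀ γ, ‖1 + r γ / n‖ ≤ 1 + C / n := fun γ => by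
      refine (norm_add_le _ _).trans ?_
      rw [norm_one, norm_div, Real.norm_natCast]
      gcongr
      exact hC γ
    have hc : |1 - V / 2 / n| ≤ 1 := by
      rw [div_right_comm, abs_le]
      constructor <;> linarith
    have := op_convPow_sub_pow_le h.prob (norm_wave_mul_le hb fun i => w i / √n) hc
      (η := ε / 2 / n) (fun γ => by
        rw [op_wave_mul, mul_left_comm, ← mul_sub, norm_mul, norm_wave, one_mul]
        exact hn γ) n 1
    rw [dist_zero_right]
    refine this.trans_lt ?_
    rw [mul_div_cancel₀ _ hn0.ne']
    linarith
  have hd2 : Tendsto (fun n : ℕ => op (convPow p n) (fun γ => wave M (fun i => w i / √n) γ *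
      ((1 + r γ / n : ℝ) : ℂ)) 1 - op (convPow p n) (wave M fun i => w i / √n) 1)
      atTop (nhds 0) := by
    refine squeeze_zero_norm (fun n => ?_) (tendsto_const_div_atTop_nhds_zero_nat C)
    have hb : ∀ γ, ‖1 + r γ / n‖ ≤ 1 + C / n := fun γ => by
      refine (norm_add_le _ _).trans ?_
      rw [norm_one, norm_div, Real.norm_natCast]
      gcongr
      exact hC γ
    rw [← (h.prob.convPow n).op_sub (norm_wave_mul_le hb _) (fun γ => (norm_wave M _ γ).le)]
    refine (h.prob.convPow n).norm_op_le (fun γ => ?_) 1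
    rw [Complex.ofReal_add, Complex.ofReal_one, mul_add, mul_one, add_sub_cancel_left, norm_mul,
      norm_wave, one_mul, Complex.norm_real, norm_div, Real.norm_natCast]
    gcongr
    exact hC γ
  have := (hmain.add hd1).sub hd2
  rw [add_zero, sub_zero] at this
  exact this.congr fun n => by ring

lemma tendsto_op_wave (h : Walk L M p) {u : G → ℝ} (hu : L.Inv u) (w : ι → ℝ) :
    Tendsto (fun n : ℕ => op (convPow p n) (fun γ => wave M (fun i => w i / √n) γ * (u γ : ℂ)) 1)
      atTop (nhds (((Fintype.card Δ : ℝ)⁻¹ * (∑ x, u (L.base x)) *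
        Real.exp (-(meanVar L M p w / 2)) : ℝ) : ℂ)) := by
  have : Nonempty Δ := ⟨L.rep 1⟩
  have hcard : (Fintype.card Δ : ℝ) ≠ 0 := by exact_mod_cast Fintype.card_ne_zero
  obtain ⟨C, hC⟩ := hu.exists_bound
  set m := (Fintype.card Δ : ℝ)⁻¹ * ∑ x, u (L.base x) with hm
  have h0 : ∑ x, (u (L.base x) - m) = 0 := by
    rw [Finset.sum_sub_distrib, Finset.sum_const, Finset.card_univ, nsmul_eq_mul, hm, ← mul_assoc,
      mul_inv_cancel₀ hcard, one_mul, sub_self]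
  have hinv : L.Inv fun γ => u γ - m := fun z γ => by simp only [hu z γ]
  have h1 := h.tendsto_mean_zero hinv h0 (tendsto_div_sqrt w)
  have h2 := (h.tendsto_op_wave_one w).const_mul (m : ℂ)
  have h3 := h1.add h2
  rw [zero_add, ← Complex.ofReal_mul] at h3
  refine h3.congr fun n => ?_
  have hb : ∀ γ, ‖u γ - m‖ ≤ C + |m| := fun γ =>
    (norm_sub_le _ _).trans (add_le_add (hC γ) le_rfl)
  simp only [op]
  rw [← tsum_mul_left, ← Summable.tsum_add]
  · refine tsum_congr fun s => ?_
    simp only [Complex.real_smul]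
    push_cast
    ring
  · exact (h.prob.convPow n).summable_smul fun s => norm_wave_mul_le hb _ _
  · exact ((h.prob.convPow n).summable_smul fun s => (norm_wave M _ _).le).mul_left _

end Walk

end Walk

section Domination

variable {G ι Δ : Type*} [Group G] [Fintype ι] {L : Lat G ι Δ} {p : G → ℝ}

lemma norm_one_add_exp_le {v : ℝ} (hv : |v| ≤ Real.pi) :
    ‖1 + Complex.exp (v * Complex.I)‖ ≤ 2 - v ^ 2 / Real.pi ^ 2 := by
  have hpi := Real.pi_pos
  have hv2 : v ^ 2 / Real.pi ^ 2 ≤ 1 :=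
    (div_le_one (by positivity)).2 (sq_le_sq' (abs_le.1 hv).1 (abs_le.1 hv).2)
  have hcos := Real.cos_le_one_sub_mul_cos_sq hv
  refine abs_le_of_sq_le_sq' ?_ (by linarith) |>.2
  rw [← Complex.normSq_eq_norm_sq, Complex.normSq_apply]
  simp only [Complex.add_re, Complex.add_im, Complex.one_re, Complex.one_im,
    Complex.exp_ofReal_mul_I_re, Complex.exp_ofReal_mul_I_im]
  have h1 := Real.sin_sq_add_cos_sq v
  have h2 : 2 / Real.pi ^ 2 * v ^ 2 = 2 * (v ^ 2 / Real.pi ^ 2) := by ring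
  nlinarith [sq_nonneg (v ^ 2 / Real.pi ^ 2)]

/-- Equivariance of `f` under the translations by `ι → ℤ` with character of frequency `v`. -/
def Lat.Eqv (L : Lat G ι Δ) (v : ι → ℝ) (f : G → ℂ) : Prop :=
  ∀ z γ, f (L.t z * γ) = Complex.exp ((∑ i, v i * z i : ℝ) * Complex.I) * f γ

lemma Lat.Eqv.op {v : ι → ℝ} {f : G → ℂ} (hf : L.Eqv v f) (q : G → ℝ) :
    L.Eqv v (op q f) := fun z γ => by
  simp only [NSVA.op]
  rw [← tsum_mul_left]
  refine tsum_congr fun s => ?_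
  rw [mul_assoc, hf, Complex.real_smul, Complex.real_smul, mul_left_comm]

lemma Lat.Eqv.norm_eq {v : ι → ℝ} {f : G → ℂ} (hf : L.Eqv v f) (γ : G) :
    ‖f γ‖ = ‖f (L.base (L.rep γ))‖ := by
  conv_lhs => rw [L.eq_t_mul_base γ, hf, norm_mul, Complex.norm_exp_ofReal_mul_I, one_mul]

variable [Fintype Δ]

lemma exists_contraction (L : Lat G ι Δ) (hp : IsProb p)
    (hpos : ∀ g, ∀ᶠ k in atTop, 0 < convPow p k g) :
    ∃ k, 0 < k ∧ ∃ a : ℝ, 0 < a ∧ ∀ v : ι → ℝ, (∀ i, |v i| ≤ Real.pi) →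
      a * ∑ i, v i ^ 2 ≤ 1 ∧ ∀ f C, L.Eqv v f → (∀ γ, ‖f γ‖ ≤ C) →
        ∀ γ, ‖op (convPow p k) f γ‖ ≤ (1 - a * ∑ i, v i ^ 2) * C := by
  let g : Option (ι × Δ) → G := fun o => o.elim 1 fun y =>
    (L.base y.2)⁻¹ * L.t (Pi.single y.1 1) * L.base y.2
  obtain ⟨k, hk, hk0⟩ := ((eventually_all.2 fun o => hpos (g o)).and (eventually_gt_atTop 0)).exists
  obtain ⟨ε, hε, hεle⟩ := exists_pos_le hk
  have hpi := Real.pi_pos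
  set d : ℝ := (Fintype.card ι : ℝ) with hd
  have hd0 : 0 ≤ d := Nat.cast_nonneg _
  refine ⟨k, hk0, ε / (Real.pi ^ 2 * (d + 1)), by positivity, fun v hv => ⟨?_, ?_⟩⟩
  · have h1 : ∑ i, v i ^ 2 ≤ d * Real.pi ^ 2 := by
      rw [hd, ← nsmul_eq_mul]
      exact Finset.sum_le_card_nsmul _ _ _ fun i _ => sq_le_sq' (abs_le.1 (hv i)).1 (abs_le.1 (hv i)).2
    have h2 : ε ≤ 1 := (hεle none).trans ((hp.convPow k).le_one _)
    rw [div_mul_eq_mul_div, div_le_one (by positivity)]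
    calc ε * ∑ i, v i ^ 2 ≤ 1 * (d * Real.pi ^ 2) := by gcongr
      _ ≤ _ := by nlinarith [sq_nonneg Real.pi]
  · intro f C hf hC γ
    rw [(hf.op _).norm_eq]
    set x := L.rep γ
    have hC0 : 0 ≤ C := (norm_nonneg _).trans (hC 1)
    have h1 : ∀ j, ‖op (convPow p k) f (L.base x)‖ ≤ C - ε * v j ^ 2 / Real.pi ^ 2 * C := by
      intro j
      have hne : (1 : G) ≠ g (some (j, x)) := fun h => by
        have h3 : L.base x = L.t (Pi.single j 1) * L.base x := by
          have := congrArg (L.base x * ·) h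
          simpa [g, mul_assoc] using this
        have h4 := congrFun (congrArg L.loc h3) j
        simp [L.loc_mul] at h4
      have h3 := norm_tsum_smul_le_of_two (hp.convPow k) (f := fun s => f (L.base x * s))
        (fun s => hC _) hne hε.le (hεle none) (hεle (some (j, x)))
      have h4 : L.base x * g (some (j, x)) = L.t (Pi.single j 1) * L.base x := by
        simp [g, mul_assoc]
      have h5 : ∑ i, v i * ((Pi.single j 1 : ι → ℤ) i : ℝ) = v j := by
        rw [Finset.sum_eq_single j] <;> simp +contextual
      rw [h4, mul_one, hf, h5, ← one_add_mul, norm_mul] at h3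
      have h6 : ‖1 + Complex.exp (v j * Complex.I)‖ * ‖f (L.base x)‖
          ≤ (2 - v j ^ 2 / Real.pi ^ 2) * C :=
        mul_le_mul (norm_one_add_exp_le (hv j)) (hC _) (norm_nonneg _)
          ((norm_nonneg _).trans (norm_one_add_exp_le (hv j)))
      refine h3.trans ((add_le_add (mul_le_mul_of_nonneg_left h6 hε.le) le_rfl).trans_eq ?_)
      ring
    have h2 := (hp.convPow k).norm_op_le hC (L.base x)
    have h3 := Finset.sum_le_sum fun j (_ : j ∈ Finset.univ) => h1 j
    rw [Finset.sum_const, Finset.card_univ, nsmul_eq_mul, Finset.sum_sub_distrib, Finset.sum_const,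
      Finset.card_univ, nsmul_eq_mul, ← Finset.sum_mul, ← Finset.sum_div, ← Finset.mul_sum,
      ← hd] at h3
    have h4 : (1 - ε / (Real.pi ^ 2 * (d + 1)) * ∑ i, v i ^ 2) * C
        = ((d + 1) * C - ε * (∑ i, v i ^ 2) / Real.pi ^ 2 * C) / (d + 1) := by
      field_simp
    rw [h4, le_div_iff₀ (by positivity)]
    linarith

/-- Gaussian domination of the Fourier transform of the convolution powers. -/
lemma exists_norm_op_convPow_le_exp (L : Lat G ι Δ) (hp : IsProb p)
    (hpos : ∀ g, ∀ᶠ k in atTop, 0 < convPow p k g) :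
    ∃ a : ℝ, 0 < a ∧ ∃ N : ℕ, ∀ n ≥ N, ∀ v : ι → ℝ, (∀ i, |v i| ≤ Real.pi) →
      ∀ f C, L.Eqv v f → (∀ γ, ‖f γ‖ ≤ C) →
        ∀ γ, ‖op (convPow p n) f γ‖ ≤ Real.exp (-(a * n * ∑ i, v i ^ 2)) * C := by
  obtain ⟨k, hk, a, ha, h⟩ := exists_contraction L hp hpos
  have hk' : (0 : ℝ) < k := by exact_mod_cast hk
  refine ⟨a / (2 * k), by positivity, k, fun n hn v hv f C hf hC γ => ?_⟩
  obtain ⟨h1, h2⟩ := h v hv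
  set V := ∑ i, v i ^ 2 with hV
  have hV0 : 0 ≤ V := Finset.sum_nonneg fun i _ => sq_nonneg _
  have hC0 : 0 ≤ C := (norm_nonneg _).trans (hC 1)
  have key : ∀ m γ, ‖op (convPow p (k * m)) f γ‖ ≤ (1 - a * V) ^ m * C := by
    intro m
    induction m with
    | zero => simpa [op_convPow_zero] using hC
    | succ m ih =>
      intro γ
      rw [mul_add, mul_one, add_comm, op_convPow_add hp _ _ hC, pow_succ', mul_assoc]
      exact h2 _ _ (hf.op _) ih γ
  have hsplit := op_convPow_add hp (n % k) (k * (n / k)) hC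
  rw [Nat.mod_add_div] at hsplit
  rw [hsplit]
  refine ((hp.convPow _).norm_op_le (key (n / k)) γ).trans (mul_le_mul_of_nonneg_right ?_ hC0)
  have h3 : (1 - a * V) ^ (n / k) ≤ Real.exp (-(a * V)) ^ (n / k) :=
    pow_le_pow_left₀ (by linarith) (by linarith [Real.add_one_le_exp (-(a * V))]) _
  refine h3.trans ?_
  rw [← Real.exp_nat_mul, Real.exp_le_exp]
  have h4 : (n : ℝ) ≤ 2 * k * (n / k : ℕ) := by
    have h5 : n < k * (n / k) + k := by
      have := Nat.mod_add_div n k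
      have := Nat.mod_lt n hk
      omega
    have h6 : k * 1 ≤ k * (n / k) := Nat.mul_le_mul_left _ (Nat.div_pos hn hk)
    have : n ≤ 2 * k * (n / k) := by nlinarith
    exact_mod_cast this
  have h5 : a / (2 * k) * n * V = a * V * n / (2 * k) := by ring
  rw [h5, mul_neg, neg_le_neg_iff, div_le_iff₀ (by positivity)]
  have := mul_le_mul_of_nonneg_left h4 (mul_nonneg ha.le hV0)
  linarith

end Domination

section Fourier

/-- The cube of frequencies. -/
def cube (ι : Type*) : Set (ι → ℝ) := Set.univ.pi fun _ => Set.Ioc (-Real.pi) Real.pi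

variable (ι : Type*) [Fintype ι]

lemma measurableSet_cube : MeasurableSet (cube ι) :=
  MeasurableSet.univ_pi fun _ => measurableSet_Ioc

lemma volume_cube_lt_top : volume (cube ι) < ⊤ := by
  rw [cube, volume_pi, Measure.pi_pi]
  exact ENNReal.prod_lt_top fun _ _ => measure_Ioc_lt_top

variable {ι}

lemma abs_le_pi_of_mem_cube {ι : Type*} {v : ι → ℝ} (hv : v ∈ cube ι) (i : ι) : |v i| ≤ Real.pi :=
  abs_le.2 ⟨(hv i trivial).1.le, (hv i trivial).2⟩

lemma setIntegral_exp_int (k : ℤ) :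
    ∫ x in Set.Ioc (-Real.pi) Real.pi, Complex.exp ((x * k : ℝ) * Complex.I)
      = if k = 0 then (2 * Real.pi : ℂ) else 0 := by
  rw [← intervalIntegral.integral_of_le (by linarith [Real.pi_pos])]
  split_ifs with h
  · subst h
    simp
    ring
  · have hk : (k : ℂ) * Complex.I ≠ 0 :=
      mul_ne_zero (by exact_mod_cast h) Complex.I_ne_zero
    have := integral_exp_mul_complex (a := -Real.pi) (b := Real.pi) hk
    have hfun : (fun x : ℝ => Complex.exp ((x * k : ℝ) * Complex.I))
        = fun x : ℝ => Complex.exp ((k : ℂ) * Complex.I * x) := by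
      funext x
      push_cast
      ring_nf
    rw [hfun, this]
    have hper : Complex.exp ((k : ℂ) * Complex.I * (Real.pi : ℝ))
        = Complex.exp ((k : ℂ) * Complex.I * ((-Real.pi : ℝ) : ℂ)) := by
      rw [Complex.exp_eq_exp_iff_exists_int]
      refine ⟨k, ?_⟩
      push_cast
      ring
    rw [hper, sub_self, zero_div]

lemma setIntegral_cube_exp (k : ι → ℤ) :
    ∫ v in cube ι, Complex.exp ((∑ i, v i * k i : ℝ) * Complex.I)
      = if k = 0 then ((2 * Real.pi : ℝ) : ℂ) ^ Fintype.card ι else 0 := by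
  have hprod : ∀ v : ι → ℝ, Complex.exp ((∑ i, v i * k i : ℝ) * Complex.I)
      = ∏ i, Complex.exp ((v i * k i : ℝ) * Complex.I) := fun v => by
    rw [← Complex.exp_sum, ← Finset.sum_mul, ← Complex.ofReal_sum]
  simp only [hprod]
  rw [cube, volume_pi, Measure.restrict_pi_pi]
  rw [integral_fintype_prod_eq_prod (𝕜 := ℂ) (fun i (x : ℝ) =>
    Complex.exp ((x * k i : ℝ) * Complex.I))]
  simp only [setIntegral_exp_int]
  split_ifs with h
  · subst h
    simp [Finset.card_univ]
  · obtain ⟨i, hi⟩ := Function.ne_iff.1 h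
    exact Finset.prod_eq_zero (Finset.mem_univ i) (if_neg hi)

variable {G Δ : Type*} [Group G] {L : Lat G ι Δ} {M : G → ι → ℝ} {p q : G → ℝ}

/-- The plane wave of frequency `v` on the orbit `y`. -/
noncomputable def orbitWave (L : Lat G ι Δ) (y : Δ) (v : ι → ℝ) (γ : G) : ℂ :=
  if L.rep γ = y then Complex.exp ((∑ i, v i * L.loc γ i : ℝ) * Complex.I) else 0

lemma norm_orbitWave_le (L : Lat G ι Δ) (y : Δ) (v : ι → ℝ) (γ : G) :
    ‖orbitWave L y v γ‖ ≤ 1 := by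
  rw [orbitWave]
  split_ifs
  · exact (Complex.norm_exp_ofReal_mul_I _).le
  · simp

lemma eqv_orbitWave (L : Lat G ι Δ) (y : Δ) (v : ι → ℝ) : L.Eqv v (orbitWave L y v) := by
  intro z γ
  simp only [orbitWave, L.rep_mul, L.loc_mul]
  split_ifs
  · rw [← Complex.exp_add, ← add_mul, ← Complex.ofReal_add, ← Finset.sum_add_distrib]
    simp only [Pi.add_apply, Int.cast_add, mul_add]
  · simp

lemma continuous_orbitWave (L : Lat G ι Δ) (y : Δ) (γ : G) :
    Continuous fun v => orbitWave L y v γ := by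
  unfold orbitWave
  split_ifs <;> fun_prop

lemma continuous_op_orbitWave (L : Lat G ι Δ) (y : Δ) (hp : IsProb p) (γ : G) :
    Continuous fun v => op p (orbitWave L y v) γ := by
  refine continuous_tsum (fun s => (continuous_orbitWave L y _).const_smul _) hp.2.summable
    fun s v => ?_
  rw [norm_smul, Real.norm_of_nonneg (hp.1 s)]
  exact mul_le_of_le_one_right (hp.1 s) (norm_orbitWave_le _ _ _ _)

/-- Fourier inversion. -/
lemma setIntegral_cube_op_orbitWave [Countable G] (L : Lat G ι Δ) (hp : IsProb p) (s₀ : G) :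
    ∫ v in cube ι, Complex.exp ((∑ i, v i * (-L.loc s₀ i) : ℝ) * Complex.I)
        * op p (orbitWave L (L.rep s₀) v) 1
      = (p s₀ : ℂ) * ((2 * Real.pi : ℝ) : ℂ) ^ Fintype.card ι := by
  have hfin : IsFiniteMeasure (volume.restrict (cube ι)) :=
    ⟨by simpa using volume_cube_lt_top ι⟩
  let F : G → (ι → ℝ) → ℂ := fun s v =>
    p s • (Complex.exp ((∑ i, v i * (-L.loc s₀ i) : ℝ) * Complex.I) * orbitWave L (L.rep s₀) v s)
  have hFle : ∀ s v, ‖F s v‖ ≤ p s := fun s v => by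
    rw [norm_smul, Real.norm_of_nonneg (hp.1 s), norm_mul, Complex.norm_exp_ofReal_mul_I, one_mul]
    exact mul_le_of_le_one_right (hp.1 s) (norm_orbitWave_le _ _ _ _)
  have hFc : ∀ s, Continuous (F s) := fun s => by
    have h1 := continuous_orbitWave L (L.rep s₀) s
    have h2 : Continuous fun v : ι → ℝ =>
        Complex.exp ((∑ i, v i * (-L.loc s₀ i) : ℝ) * Complex.I) := by fun_prop
    exact (h2.mul h1).const_smul (p s)
  have hFi : ∀ s, Integrable (F s) (volume.restrict (cube ι)) := fun s =>
    Integrable.of_bound (hFc s).aestronglyMeasurable (p s) (Eventually.of_forall (hFle s))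
  have hsum : Summable fun s => ∫ v in cube ι, ‖F s v‖ := by
    refine Summable.of_nonneg_of_le (fun s => integral_nonneg fun _ => norm_nonneg _) (fun s => ?_)
      (hp.2.summable.mul_right ((volume.restrict (cube ι)).real Set.univ))
    calc _ ≤ ∫ v in cube ι, p s :=
          integral_mono (hFi s).norm (integrable_const _) (hFle s)
      _ = _ := by rw [integral_const, smul_eq_mul, mul_comm]
  have hmain := hasSum_integral_of_summable_integral_norm hFi hsum
  have hterm : ∀ s, ∫ v in cube ι, F s v
      = if s = s₀ then (p s₀ : ℂ) * ((2 * Real.pi : ℝ) : ℂ) ^ Fintype.card ι else 0 := by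
    intro s
    simp only [F]
    rw [integral_smul, Complex.real_smul]
    by_cases hr : L.rep s = L.rep s₀
    · have hfun : ∀ v : ι → ℝ, Complex.exp ((∑ i, v i * (-L.loc s₀ i) : ℝ) * Complex.I)
          * orbitWave L (L.rep s₀) v s
          = Complex.exp ((∑ i, v i * ((L.loc s - L.loc s₀ : ι → ℤ) i) : ℝ) * Complex.I) := by
        intro v
        rw [orbitWave, if_pos hr, ← Complex.exp_add, ← add_mul, ← Complex.ofReal_add,
          ← Finset.sum_add_distrib]
        congr 3
        refine Finset.sum_congr rfl fun i _ => ?_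
        rw [Pi.sub_apply]
        push_cast
        ring
      simp only [hfun]
      rw [setIntegral_cube_exp]
      by_cases hs : s = s₀
      · simp [hs]
      · rw [if_neg hs, if_neg, mul_zero]
        intro h
        refine hs ?_
        rw [L.eq_t_mul_base s, L.eq_t_mul_base s₀, hr, sub_eq_zero.1 h]
    · have hs : s ≠ s₀ := fun h => hr (by rw [h])
      simp [orbitWave, hr, hs]
  rw [show (fun s => ∫ v in cube ι, F s v) = _ from funext hterm] at hmain
  rw [← hmain.unique (hasSum_ite_eq s₀ _)]
  refine integral_congr_ae (Eventually.of_forall fun v => ?_)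
  simp only [F, op, one_mul]
  rw [← tsum_mul_left]
  refine tsum_congr fun s => ?_
  simp only [Complex.real_smul]
  ring

lemma abs_sub_mul_le_setIntegral [Countable G] (L : Lat G ι Δ) (hp : IsProb p) (hq : IsProb q)
    (s₀ : G) : |p s₀ - q s₀| * (2 * Real.pi) ^ Fintype.card ι
      ≤ ∫ v in cube ι, ‖op p (orbitWave L (L.rep s₀) v) 1 - op q (orbitWave L (L.rep s₀) v) 1‖ := by
  have hfin : IsFiniteMeasure (volume.restrict (cube ι)) :=
    ⟨by simpa using volume_cube_lt_top ι⟩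
  have hint : ∀ {r : G → ℝ}, IsProb r → Integrable (fun v : ι → ℝ =>
      Complex.exp ((∑ i, v i * (-L.loc s₀ i) : ℝ) * Complex.I)
        * op r (orbitWave L (L.rep s₀) v) 1) (volume.restrict (cube ι)) := fun {r} hr => by
    refine Integrable.of_bound (C := 1) (Continuous.aestronglyMeasurable (Continuous.mul
      (by fun_prop) (continuous_op_orbitWave L _ hr 1))) (Eventually.of_forall fun v => ?_)
    rw [norm_mul, Complex.norm_exp_ofReal_mul_I, one_mul]
    exact hr.norm_op_le (norm_orbitWave_le _ _ _) 1
  have h := integral_sub (hint hp) (hint hq)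
  rw [setIntegral_cube_op_orbitWave L hp, setIntegral_cube_op_orbitWave L hq, ← sub_mul] at h
  have h2 := congrArg norm h
  rw [norm_mul, ← Complex.ofReal_sub, Complex.norm_real, norm_pow, Complex.norm_real,
    Real.norm_eq_abs, Real.norm_of_nonneg (by positivity)] at h2
  rw [← h2]
  refine (norm_integral_le_integral_norm _).trans_eq ?_
  refine integral_congr_ae (Eventually.of_forall fun v => ?_)
  simp only
  rw [← mul_sub, norm_mul, Complex.norm_exp_ofReal_mul_I, one_mul]

end Fourier

section LocalLimit

variable {G ι Δ : Type*} [Group G] {L : Lat G ι Δ} {M : G → ι → ℝ} {p q : G → ℝ}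

lemma Walk.apply_eq (h : Walk L M p) (γ : G) (i : ι) :
    M γ i = L.loc γ i + M (L.base (L.rep γ)) i := by
  conv_lhs => rw [L.eq_t_mul_base γ, h.equiv]

variable [Fintype ι]

lemma Walk.orbitWave_eq (h : Walk L M p) (y : Δ) (v : ι → ℝ) (γ : G) :
    orbitWave L y v γ = Complex.exp ((-∑ i, v i * M (L.base y) i : ℝ) * Complex.I) *
      (wave M v γ * ((if L.rep γ = y then 1 else 0 : ℝ) : ℂ)) := by
  rw [orbitWave]
  split_ifs with hy
  · have h1 : ∑ i, v i * M γ i = ∑ i, v i * L.loc γ i + ∑ i, v i * M (L.base y) i := by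
      rw [← Finset.sum_add_distrib]
      exact Finset.sum_congr rfl fun i _ => by rw [h.apply_eq, hy, mul_add]
    rw [wave, Complex.ofReal_one, mul_one, ← Complex.exp_add, ← add_mul, ← Complex.ofReal_add, h1,
      add_comm, add_neg_cancel_right]
  · simp

lemma op_const_mul (p : G → ℝ) (c : ℂ) (f : G → ℂ) (γ : G) :
    op p (fun g => c * f g) γ = c * op p f γ := by
  simp only [op]
  rw [← tsum_mul_left]
  exact tsum_congr fun s => by simp only [Complex.real_smul]; ring

lemma integrable_exp_neg_sum_sq {a : ℝ} (ha : 0 < a) :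
    Integrable fun w : ι → ℝ => Real.exp (-(a * ∑ i, w i ^ 2)) := by
  have := Integrable.fintype_prod (𝕜 := ℝ) (ι := ι) (μ := fun _ => (volume : Measure ℝ))
    (f := fun _ x => Real.exp (-a * x ^ 2)) fun _ => integrable_exp_neg_mul_sq ha
  rw [← volume_pi] at this
  refine this.congr (Eventually.of_forall fun w => ?_)
  simp only
  rw [← Real.exp_sum, ← Finset.mul_sum, neg_mul]

lemma setIntegral_cube_scale (f : (ι → ℝ) → ℝ) (n : ℕ) :
    √(n : ℝ) ^ Fintype.card ι * ∫ v in cube ι, f v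
      = ∫ w : ι → ℝ, (cube ι).indicator f fun i => w i / √n := by
  have h := Measure.integral_comp_inv_smul_of_nonneg (volume : Measure (ι → ℝ))
    ((cube ι).indicator f) (Real.sqrt_nonneg n)
  rw [Module.finrank_fintype_fun_eq_card, integral_indicator (measurableSet_cube ι),
    smul_eq_mul] at h
  rw [← h]
  refine integral_congr_ae (Eventually.of_forall fun w => ?_)
  simp only
  congr 1
  funext i
  simp [div_eq_inv_mul]

variable [Fintype Δ]

lemma tendsto_setIntegral_cube (hp : Walk L M p) (hq : Walk L M q)
    (hV : ∀ w, meanVar L M p w = meanVar L M q w) (y : Δ) :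
    Tendsto (fun n : ℕ => √(n : ℝ) ^ Fintype.card ι * ∫ v in cube ι,
      ‖op (convPow p n) (orbitWave L y v) 1 - op (convPow q n) (orbitWave L y v) 1‖)
      atTop (nhds 0) := by
  let D : ℕ → (ι → ℝ) → ℝ := fun n v =>
    ‖op (convPow p n) (orbitWave L y v) 1 - op (convPow q n) (orbitWave L y v) 1‖
  have hDc : ∀ n, Continuous (D n) := fun n =>
    ((continuous_op_orbitWave L y (hp.prob.convPow n) 1).sub
      (continuous_op_orbitWave L y (hq.prob.convPow n) 1)).norm
  obtain ⟨a, ha, N, hN⟩ := exists_norm_op_convPow_le_exp L hp.prob hp.pos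
  obtain ⟨b, hb, N', hN'⟩ := exists_norm_op_convPow_le_exp L hq.prob hq.pos
  have hlim : ∀ w : ι → ℝ, Tendsto (fun n : ℕ => (cube ι).indicator (D n) fun i => w i / √n) atTop
      (nhds 0) := by
    intro w
    have hinv := Lat.inv_comp_rep (L := L) fun x => (if x = y then 1 else 0 : ℝ)
    have h1 := (hp.tendsto_op_wave hinv w).sub (hq.tendsto_op_wave hinv w)
    rw [hV w, sub_self] at h1
    refine squeeze_zero (fun n => Set.indicator_nonneg (fun _ _ => norm_nonneg _) _) (fun n => ?_)
      (tendsto_zero_iff_norm_tendsto_zero.1 h1)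
    refine (Set.indicator_le_self' (fun _ _ => norm_nonneg _) _).trans_eq ?_
    simp only
    rw [show orbitWave L y (fun i => w i / √n) = _ from
      funext (hp.orbitWave_eq y fun i => w i / √n), op_const_mul, op_const_mul, ← mul_sub, norm_mul,
      Complex.norm_exp_ofReal_mul_I, one_mul]
  have hdom := tendsto_integral_filter_of_dominated_convergence (l := atTop)
    (F := fun (n : ℕ) (w : ι → ℝ) => (cube ι).indicator (D n) fun i => w i / √n)
    (f := fun _ => 0) (μ := volume)
    (fun w => Real.exp (-(a * ∑ i, w i ^ 2)) + Real.exp (-(b * ∑ i, w i ^ 2)))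
    (Eventually.of_forall fun n => by
      refine (((hDc n).measurable.indicator (measurableSet_cube ι)).comp ?_).aestronglyMeasurable
      fun_prop)
    (by
      filter_upwards [eventually_ge_atTop N, eventually_ge_atTop N', eventually_gt_atTop 0]
        with n h1 h2 h3
      refine Eventually.of_forall fun w => ?_
      have h3' : (0 : ℝ) < n := by exact_mod_cast h3
      by_cases hw : (fun i => w i / √n) ∈ cube ι
      · have hsq : ∀ c : ℝ, c * n * ∑ i, (w i / √n) ^ 2 = c * ∑ i, w i ^ 2 := fun c => by
          simp only [div_pow, Real.sq_sqrt h3'.le]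
          rw [← Finset.sum_div]
          field_simp
        have h4 := hN n h1 _ (abs_le_pi_of_mem_cube hw) _ 1 (eqv_orbitWave L y _)
          (norm_orbitWave_le L y _) 1
        have h5 := hN' n h2 _ (abs_le_pi_of_mem_cube hw) _ 1 (eqv_orbitWave L y _)
          (norm_orbitWave_le L y _) 1
        rw [mul_one, hsq] at h4 h5
        rw [Set.indicator_of_mem hw, norm_norm]
        exact (norm_sub_le _ _).trans (add_le_add h4 h5)
      · rw [Set.indicator_of_notMem hw, norm_zero]
        positivity)
    ((integrable_exp_neg_sum_sq ha).add (integrable_exp_neg_sum_sq hb))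
    (Eventually.of_forall hlim)
  rw [integral_zero] at hdom
  exact hdom.congr fun n => (setIntegral_cube_scale (D n) n).symm

/-- Comparison of the local limits of two walks with the same mean variance. -/
lemma eventually_abs_convPow_sub_le [Countable G] (hp : Walk L M p) (hq : Walk L M q)
    (hV : ∀ w, meanVar L M p w = meanVar L M q w) {ε : ℝ} (hε : 0 < ε) :
    ∀ᶠ n : ℕ in atTop, ∀ s, √(n : ℝ) ^ Fintype.card ι * |convPow p n s - convPow q n s| ≤ ε := by
  have hpi : (0 : ℝ) < (2 * Real.pi) ^ Fintype.card ι := by positivity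
  filter_upwards [eventually_all.2 fun y =>
    (tendsto_setIntegral_cube hp hq hV y).eventually_lt_const (mul_pos hε hpi)] with n hn s
  have h1 := abs_sub_mul_le_setIntegral L (hp.prob.convPow n) (hq.prob.convPow n) s
  have h2 := mul_le_mul_of_nonneg_left h1 (pow_nonneg (Real.sqrt_nonneg n) (Fintype.card ι))
  refine le_of_mul_le_mul_right ?_ hpi
  rw [mul_assoc]
  exact h2.trans (hn _).le

end LocalLimit

section TotalVariation

lemma tv_nonneg {Z : Type*} (p q : Z → ℝ) : 0 ≤ tv p q :=
  mul_nonneg (by norm_num) (tsum_nonneg fun _ => abs_nonneg _)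

lemma tv_le_of_tails {Z : Type*} {p q f : Z → ℝ} (hp : IsProb p) (hq : IsProb q)
    (hf : ∀ z, 0 ≤ f z) (hpf : Summable fun z => p z * f z) (hqf : Summable fun z => q z * f z)
    {η T : ℝ} (hT : 0 < T) (B : Finset Z) (hB : ∀ z, |p z - q z| ≤ η)
    (hBT : ∀ z ∉ B, T ≤ f z) :
    tv p q ≤ B.card * η + (∑' z, p z * f z) / T + (∑' z, q z * f z) / T := by
  have h1 : HasSum (fun z => if z ∈ B then η else 0) (B.card * η) := by
    have := hasSum_sum_of_ne_finset_zero (f := fun z => if z ∈ B then η else 0) (s := B)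
      (L := SummationFilter.unconditional Z) fun b hb => by simp [hb]
    simpa using this
  have h2 := (h1.add (hpf.hasSum.div_const T)).add (hqf.hasSum.div_const T)
  have hle : ∀ z, |p z - q z| ≤ (if z ∈ B then η else 0) + p z * f z / T + q z * f z / T := by
    intro z
    have hp0 : 0 ≤ p z * f z / T := div_nonneg (mul_nonneg (hp.1 z) (hf z)) hT.le
    have hq0 : 0 ≤ q z * f z / T := div_nonneg (mul_nonneg (hq.1 z) (hf z)) hT.le
    by_cases hz : z ∈ B
    · rw [if_pos hz]
      linarith [hB z]
    · have h3 : ∀ {r : ℝ}, 0 ≤ r → r ≤ r * f z / T := fun {r} hr => by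
        rw [le_div_iff₀ hT]
        exact mul_le_mul_of_nonneg_left (hBT z hz) hr
      rw [if_neg hz, zero_add]
      refine (abs_sub _ _).trans ?_
      rw [abs_of_nonneg (hp.1 z), abs_of_nonneg (hq.1 z)]
      exact add_le_add (h3 (hp.1 z)) (h3 (hq.1 z))
  have h4 : ∑' z, |p z - q z| ≤ _ :=
    ((hp.2.summable.sub hq.2.summable).abs).tsum_le_tsum hle h2.summable
  rw [h2.tsum_eq] at h4
  have h5 : 0 ≤ ∑' z, |p z - q z| := tsum_nonneg fun _ => abs_nonneg _
  rw [tv]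
  linarith

variable {G ι Δ : Type*} [Group G] [Fintype ι] {L : Lat G ι Δ} {M : G → ι → ℝ} {p q : G → ℝ}

lemma Walk.hasSum_sq (h : Walk L M p) (γ : G) :
    HasSum (fun s => p s * ∑ i, M (γ * s) i ^ 2)
      (∑ i, M γ i ^ 2 + ∑' s, p s * ∑ i, (M (γ * s) i - M γ i) ^ 2) := by
  have h1 : HasSum (fun s => p s * ∑ i, M γ i ^ 2) (∑ i, M γ i ^ 2) := by
    simpa using h.prob.2.mul_right (∑ i, M γ i ^ 2)
  have h2 : HasSum (fun s => ∑ i, 2 * M γ i * (p s * (M (γ * s) i - M γ i))) 0 := by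
    simpa using hasSum_sum (s := Finset.univ) fun i (_ : i ∈ Finset.univ) =>
      (h.mean γ i).mul_left (2 * M γ i)
  have h3 : Summable fun s => p s * ∑ i, (M (γ * s) i - M γ i) ^ 2 := by
    simp only [Finset.mul_sum]
    exact summable_sum fun i _ => h.sq γ i
  have := (h1.add h2).add h3.hasSum
  rw [add_zero] at this
  refine this.congr_fun fun s => ?_
  simp only [Finset.mul_sum]
  rw [← Finset.sum_add_distrib, ← Finset.sum_add_distrib]
  exact Finset.sum_congr rfl fun i _ => by ring

variable [Fintype Δ]

lemma Walk.exists_moment_bound (h : Walk L M p) : ∃ C, 0 ≤ C ∧ ∀ n : ℕ,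
    Summable (fun g => convPow p n g * ∑ i, M g i ^ 2) ∧
      ∑' g, convPow p n g * ∑ i, M g i ^ 2 ≤ ∑ i, M 1 i ^ 2 + n * C := by
  have hinv : L.Inv fun γ => ∑' s, p s * ∑ i, (M (γ * s) i - M γ i) ^ 2 := fun z γ => by
    simp only [mul_assoc, h.equiv, add_sub_add_left_eq_sub]
  obtain ⟨C, hC⟩ := hinv.exists_bound
  refine ⟨C, (norm_nonneg _).trans (hC 1), hasSum_convPow_le h.prob
    (fun g => Finset.sum_nonneg fun i _ => sq_nonneg _) (fun γ => (h.hasSum_sq γ).summable)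
    fun γ => ?_⟩
  rw [(h.hasSum_sq γ).tsum_eq]
  exact add_le_add le_rfl ((le_abs_self _).trans (hC γ))

lemma Walk.exists_ball (h : Walk L M p) {R : ℝ} (hR : 0 ≤ R) : ∃ K : ℝ, 0 < K ∧ ∀ n : ℕ, 1 ≤ n →
    ∃ B : Finset G, (B.card : ℝ) ≤ K * √(n : ℝ) ^ Fintype.card ι ∧
      ∀ γ ∉ B, R ^ 2 * n ≤ ∑ i, M γ i ^ 2 := by
  obtain ⟨c, hc⟩ := (Lat.inv_comp_rep (L := L) fun x => M (L.base x)).exists_bound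
  have hc0 : 0 ≤ c := (norm_nonneg _).trans (hc 1)
  have : Nonempty Δ := ⟨L.rep 1⟩
  have hcard : (0 : ℝ) < Fintype.card Δ := by exact_mod_cast Fintype.card_pos
  refine ⟨(2 * R + 2 * c + 3) ^ Fintype.card ι * Fintype.card Δ, by positivity, fun n hn => ?_⟩
  have hs : 1 ≤ √(n : ℝ) := Real.one_le_sqrt.2 (by exact_mod_cast hn)
  set m : ℕ := ⌈R * √n + c⌉₊ with hm
  refine ⟨(Fintype.piFinset (fun _ : ι => Finset.Icc (-(m : ℤ)) m) ×ˢ Finset.univ).map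
    L.E.symm.toEmbedding, ?_, fun γ hγ => ?_⟩
  · rw [Finset.card_map, Finset.card_product, Fintype.card_piFinset]
    simp only [Int.card_Icc, Finset.prod_const, Finset.card_univ]
    have h1 : (m : ℤ) + 1 - -(m : ℤ) = ((2 * m + 1 : ℕ) : ℤ) := by push_cast; ring
    rw [h1, Int.toNat_natCast]
    push_cast
    rw [mul_right_comm, ← mul_pow]
    have h2 : (m : ℝ) ≤ R * √n + c + 1 := (Nat.ceil_lt_add_one (by positivity)).le
    have h3 : 2 * (m : ℝ) + 1 ≤ (2 * R + 2 * c + 3) * √n := by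
      nlinarith [mul_le_mul_of_nonneg_left hs hc0]
    gcongr
  · by_contra! hlt
    refine hγ (Finset.mem_map_equiv.2 ?_)
    simp only [Equiv.symm_symm, Finset.mem_product, Fintype.mem_piFinset, Finset.mem_Icc,
      Finset.mem_univ, and_true]
    intro i
    have h1 : M γ i ^ 2 ≤ (R * √n) ^ 2 := by
      rw [mul_pow, Real.sq_sqrt (Nat.cast_nonneg n)]
      exact (Finset.single_le_sum (f := fun i => M γ i ^ 2) (fun _ _ => sq_nonneg _)
        (Finset.mem_univ i)).trans hlt.le
    have h2 := abs_le.1 (abs_le_of_sq_le_sq h1 (by positivity))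
    have h3 := abs_le.1 ((norm_le_pi_norm (M (L.base (L.rep γ))) i).trans (hc γ))
    have h4 := h.apply_eq γ i
    have h5 : R * √n + c ≤ m := Nat.le_ceil _
    change -(m : ℤ) ≤ L.loc γ i ∧ L.loc γ i ≤ m
    constructor
    · have : (-(m : ℤ) : ℝ) ≤ L.loc γ i := by push_cast; linarith
      exact_mod_cast this
    · have : (L.loc γ i : ℝ) ≤ m := by linarith
      exact_mod_cast this

/-- Two walks with the same mean variance merge in total variation. -/
theorem tendsto_tv_convPow [Countable G] (hp : Walk L M p) (hq : Walk L M q)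
    (hV : ∀ w, meanVar L M p w = meanVar L M q w) :
    Tendsto (fun n : ℕ => tv (convPow p n) (convPow q n)) atTop (nhds 0) := by
  obtain ⟨C, hC0, hC⟩ := hp.exists_moment_bound
  obtain ⟨D, hD0, hD⟩ := hq.exists_moment_bound
  set f : G → ℝ := fun g => ∑ i, M g i ^ 2 with hf
  have hf0 : ∀ g, 0 ≤ f g := fun g => Finset.sum_nonneg fun i _ => sq_nonneg _
  rw [Metric.tendsto_nhds]
  intro ε hε
  set S := 2 * f 1 + C + D with hS
  have hS0 : 0 ≤ S := by linarith [hf0 1]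
  set R := 2 * S / ε + 1 with hR
  have hR1 : 1 ≤ R := by linarith [show 0 ≤ 2 * S / ε by positivity]
  obtain ⟨K, hK, hball⟩ := hp.exists_ball (zero_le_one.trans hR1)
  have hη : 0 < ε / (4 * K) := by positivity
  filter_upwards [eventually_abs_convPow_sub_le hp hq hV hη, eventually_ge_atTop 1] with n hn hn1
  have hn0 : (1 : ℝ) ≤ n := by exact_mod_cast hn1
  obtain ⟨B, hBc, hB⟩ := hball n hn1
  have hs : 0 < √(n : ℝ) ^ Fintype.card ι := pow_pos (Real.sqrt_pos.2 (by linarith)) _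
  have h1 := tv_le_of_tails (hp.prob.convPow n) (hq.prob.convPow n) hf0 (hC n).1 (hD n).1
    (η := ε / (4 * K) / √(n : ℝ) ^ Fintype.card ι)
    (T := R ^ 2 * n) (by positivity) B (fun z => (le_div_iff₀' hs).2 (hn z)) hB
  have h2 : (B.card : ℝ) * (ε / (4 * K) / √(n : ℝ) ^ Fintype.card ι) ≤ ε / 4 := by
    refine (mul_le_mul_of_nonneg_right hBc (by positivity)).trans_eq ?_
    field_simp
  have h3 : (∑' z, convPow p n z * f z) / (R ^ 2 * n) + (∑' z, convPow q n z * f z) / (R ^ 2 * n)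
      ≤ ε / 2 := by
    rw [← add_div, div_le_iff₀ (by positivity)]
    have h4 : S ≤ ε / 2 * R ^ 2 := by
      have h5 : S ≤ ε / 2 * R := by
        rw [hR]
        field_simp
        linarith
      exact h5.trans (mul_le_mul_of_nonneg_left (by nlinarith) (by positivity))
    calc _ ≤ (f 1 + n * C) + (f 1 + n * D) := add_le_add (hC n).2 (hD n).2
      _ ≤ S * n := by rw [hS]; nlinarith [hf0 1]
      _ ≤ _ := by rw [← mul_assoc]; gcongr
  rw [Real.dist_0_eq_abs, abs_of_nonneg (tv_nonneg _ _)]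
  linarith

end TotalVariation

section Lattice

lemma exists_lat_of_range.{u} {G : Type u} [Group G] {ι : Type} {t : (ι → ℤ) → G}
    (ht : ∀ z z', t (z + z') = t z * t z') (hinj : Function.Injective t) {Λ : Subgroup G}
    (hΛ : ∀ g, g ∈ Λ ↔ ∃ z, t z = g) (hidx : Λ.index ≠ 0) :
    ∃ Δ : Type u, Finite Δ ∧ Nonempty (Lat G ι Δ) := by
  let S := QuotientGroup.rightRel Λ
  have : Λ.FiniteIndex := ⟨hidx⟩
  have hfin : Finite (Quotient S) :=
    Finite.of_equiv _ (QuotientGroup.quotientRightRelEquivQuotientLeftRel Λ).symm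
  have hmk : ∀ z (x : Quotient S), Quotient.mk S (t z * x.out) = x := fun z x => by
    conv_rhs => rw [← x.out_eq]
    refine Quotient.sound (S.symm (QuotientGroup.rightRel_apply.2 ?_))
    simpa using (hΛ _).2 ⟨z, rfl⟩
  have hbij : Function.Bijective fun y : (ι → ℤ) × Quotient S => t y.1 * y.2.out := by
    refine ⟨fun ⟨z, x⟩ ⟨z', x'⟩ h => ?_, fun γ => ?_⟩
    · have hx : x = x' := by simpa only [hmk] using congrArg (Quotient.mk S) h
      subst hx
      exact Prod.ext (hinj (mul_right_cancel h)) rfl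
    · obtain ⟨z, hz⟩ := (hΛ _).1 (QuotientGroup.rightRel_apply.1 (Quotient.mk_out (s := S) γ))
      exact ⟨(z, Quotient.mk S γ), by simp [hz]⟩
  let e := Equiv.ofBijective _ hbij
  have he : ∀ z y, t z * e y = e (z + y.1, y.2) := fun z y => by
    change t z * (t y.1 * y.2.out) = t (z + y.1) * y.2.out
    rw [ht, mul_assoc]
  refine ⟨Quotient S, hfin, ⟨⟨t, e.symm, fun z γ => ?_⟩⟩⟩
  obtain ⟨y, rfl⟩ := e.surjective γ
  rw [he, e.symm_apply_apply, e.symm_apply_apply]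

lemma exists_lat.{u} {G : Type u} [Group G] (hFG : Group.FG G) (hVA : VirtAbelian G) :
    ∃ ι : Type, ∃ Δ : Type u, Finite ι ∧ Finite Δ ∧ Nonempty (Lat G ι Δ) := by
  obtain ⟨A, hA, hcomm⟩ := hVA
  have : A.FiniteIndex := ⟨hA⟩
  let _ : CommGroup A := { (inferInstance : Group A) with mul_comm := hcomm }
  have : Group.FG A := A.fg_of_index_ne_zero
  obtain ⟨τ, ι, _, hι, p, hp, k, ⟨e⟩⟩ := CommGroup.equiv_free_prod_prod_multiplicative_zmod A
  have : ∀ i, NeZero (p i ^ k i) := fun i => ⟨pow_ne_zero _ (hp i).ne_zero⟩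
  let f := (MonoidHom.snd _ _).comp e.toMonoidHom
  have hK : f.ker.index ≠ 0 := by
    rw [Subgroup.index_ker]
    exact Nat.card_ne_zero.2 ⟨⟨1⟩, Subtype.finite⟩
  let t : (ι → ℤ) → G := fun z => (e.symm (fun i => Multiplicative.ofAdd (z i), 1) : A)
  refine ⟨ι, (exists_lat_of_range (t := t) (Λ := f.ker.map A.subtype)
    (fun z z' => ?_) (fun z z' h => ?_) (fun g => ⟨?_, ?_⟩) ?_).imp
    fun Δ h => ⟨Finite.of_fintype ι, h⟩⟩
  · simp only [t, ← Subgroup.coe_mul, ← map_mul]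
    congr 2
    ext1
    · rfl
    · simp
  · have := e.symm.injective (Subtype.ext h)
    exact (Prod.ext_iff.1 this).1
  · rintro ⟨a, ha, rfl⟩
    refine ⟨fun i => Multiplicative.toAdd ((e a).1 i), ?_⟩
    have : e a = ((e a).1, 1) := Prod.ext rfl ha
    change ((e.symm ((e a).1, 1) : A) : G) = a
    rw [← this, e.symm_apply_apply]
  · rintro ⟨z, rfl⟩
    exact ⟨_, congrArg Prod.snd (e.apply_symm_apply _), rfl⟩
  · rw [Subgroup.index_map_subtype]
    exact mul_ne_zero hK hA

end Lattice

section Corrector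

lemma exists_list_length_eq_wordLength {G : Type*} [Group G] {S₀ : Finset G}
    (hsym : ∀ s ∈ S₀, s⁻¹ ∈ S₀) (hgen : Subgroup.closure (S₀ : Set G) = ⊤) (g : G) :
    ∃ l : List G, (∀ s ∈ l, s ∈ S₀) ∧ l.length = wordLength S₀ g ∧ l.prod = g := by
  refine Nat.sInf_mem (s := {n : ℕ | ∃ l : List G, (∀ s ∈ l, s ∈ S₀) ∧ l.length = n ∧ l.prod = g}) ?_
  have hg : g ∈ (Subgroup.closure (S₀ : Set G)).toSubmonoid := by simp [hgen]
  rw [Subgroup.closure_toSubmonoid] at hg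
  obtain ⟨l, hl, rfl⟩ := Submonoid.exists_list_of_mem_closure hg
  refine ⟨_, l, fun s hs => ?_, rfl, rfl⟩
  rcases hl s hs with h | h
  · exact h
  · simpa using hsym _ h

variable {G ι Δ : Type*} [Group G] (L : Lat G ι Δ)

namespace Lat

lemma inv_loc_sub (s : G) (i : ι) : L.Inv fun γ => (L.loc (γ * s) i : ℝ) - L.loc γ i :=
  fun z γ => by
    simp only [mul_assoc, loc_mul, Pi.add_apply, Int.cast_add, add_sub_add_left_eq_sub]

lemma exists_loc_sub_le [Finite Δ] {S₀ : Finset G} (hsym : ∀ s ∈ S₀, s⁻¹ ∈ S₀)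
    (hgen : Subgroup.closure (S₀ : Set G) = ⊤) (i : ι) :
    ∃ C : ℝ, ∀ γ s, |(L.loc (γ * s) i : ℝ) - L.loc γ i| ≤ C * wordLength S₀ s := by
  choose c hc using fun s => (L.inv_loc_sub s i).exists_bound
  have hc0 : ∀ s, 0 ≤ c s := fun s => (norm_nonneg _).trans (hc s 1)
  have key : ∀ l : List G, (∀ s ∈ l, s ∈ S₀) → ∀ γ,
      |(L.loc (γ * l.prod) i : ℝ) - L.loc γ i| ≤ (∑ s ∈ S₀, c s) * l.length := by
    intro l
    induction l with
    | nil => simp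
    | cons s l ih =>
      intro hl γ
      have h1 := ih (fun t ht => hl t (List.mem_cons_of_mem _ ht)) (γ * s)
      have h2 := hc s γ
      have h3 := Finset.single_le_sum (fun t _ => hc0 t) (hl s List.mem_cons_self)
      rw [Real.norm_eq_abs] at h2
      rw [List.prod_cons, ← mul_assoc, List.length_cons, Nat.cast_succ, mul_add, mul_one]
      exact (abs_sub_le _ _ _).trans (add_le_add h1 (h2.trans h3))
  refine ⟨∑ s ∈ S₀, c s, fun γ s => ?_⟩
  obtain ⟨l, hl, hlen, rfl⟩ := exists_list_length_eq_wordLength hsym hgen s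
  rw [← hlen]
  exact key l hl γ

lemma summable_mul_loc_sub_sq [Finite Δ] {μ : G → ℝ} (hμ : IsProb μ) (hmom : FinSecondMoment μ)
    (γ : G) (i : ι) : Summable fun s => μ s * ((L.loc (γ * s) i : ℝ) - L.loc γ i) ^ 2 := by
  obtain ⟨S₀, hsym, hgen, hsum⟩ := hmom
  obtain ⟨C, hC⟩ := L.exists_loc_sub_le hsym hgen i
  refine Summable.of_nonneg_of_le (fun s => mul_nonneg (hμ.1 s) (sq_nonneg _)) (fun s => ?_)
    (hsum.mul_left (C ^ 2))
  have := pow_le_pow_left₀ (abs_nonneg _) (hC γ s) 2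
  rw [sq_abs] at this
  linarith [mul_le_mul_of_nonneg_left this (hμ.1 s)]

variable [Fintype Δ]

/-- The transfer homomorphism of the lattice `ι → ℤ`. -/
def transferHom (i : ι) : G →* Multiplicative ℤ :=
  MonoidHom.mk' (fun s => Multiplicative.ofAdd (∑ x, L.loc (L.base x * s) i)) fun s s' => by
    have hinv : L.Inv fun γ => L.loc (γ * s') i - L.loc γ i := fun z γ => by
      simp only [mul_assoc, loc_mul, Pi.add_apply, add_sub_add_left_eq_sub]
    have := hinv.sum_shift s
    simp only [loc_base, Pi.zero_apply, sub_zero, Finset.sum_sub_distrib, mul_assoc] at this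
    rw [← ofAdd_add, ← this, add_sub_cancel]

lemma sum_loc_base_mul (hhom : ∀ φ : G →* Multiplicative ℤ, ∀ γ, φ γ = 1) (s : G) (i : ι) :
    ∑ x, L.loc (L.base x * s) i = 0 :=
  hhom (L.transferHom i) s

end Lat

/-- If every homomorphism to the integers is trivial, the position can be corrected to a
martingale. -/
lemma exists_walk [Fintype Δ] {μ : G → ℝ} (hμ : IsProb μ)
    (hpos : ∀ g, ∀ᶠ k in atTop, 0 < convPow μ k g) (hmom : FinSecondMoment μ)
    (hhom : ∀ φ : G →* Multiplicative ℤ, ∀ γ, φ γ = 1) :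
    ∃ M : G → ι → ℝ, Walk L M μ ∧ ∀ s i, ∑ x, (M (L.base x * s) i - M (L.base x) i) = 0 := by
  have hsq := L.summable_mul_loc_sub_sq hμ hmom
  have hsum : ∀ γ i, Summable fun s => μ s * ((L.loc (γ * s) i : ℝ) - L.loc γ i) := fun γ i => by
    refine Summable.of_norm_bounded (hμ.2.summable.add (hsq γ i)) fun s => ?_
    rw [norm_mul, Real.norm_of_nonneg (hμ.1 s), Real.norm_eq_abs]
    set d : ℝ := (L.loc (γ * s) i : ℝ) - L.loc γ i
    nlinarith [hμ.1 s, mul_nonneg (hμ.1 s) (sq_nonneg (|d| - 1)), sq_abs d,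
      mul_nonneg (hμ.1 s) (abs_nonneg d)]
  have hP : ∀ i, ∃ h : G → ℝ, L.Inv h ∧ ∀ γ, h γ - op μ h γ
      = ∑' s, μ s * ((L.loc (γ * s) i : ℝ) - L.loc γ i) := fun i => by
    refine exists_poisson hμ hpos (fun z γ => ?_) ?_
    · exact tsum_congr fun s => congrArg (μ s * ·) (L.inv_loc_sub s i z γ)
    · rw [← Summable.tsum_finsetSum fun x _ => hsum _ i]
      simp only [← Finset.mul_sum, Lat.loc_base, Pi.zero_apply, Int.cast_zero, sub_zero,
        ← Int.cast_sum, L.sum_loc_base_mul hhom, mul_zero, tsum_zero]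
  choose h hinv hh using hP
  choose C hC using fun i => (hinv i).exists_bound
  refine ⟨fun γ i => L.loc γ i + h i γ, ⟨hμ, hpos, fun z γ i => ?_, fun γ i => ?_, fun γ i => ?_⟩,
    fun s i => ?_⟩
  · simp only [Lat.loc_mul, hinv i z γ, Pi.add_apply, Int.cast_add, add_assoc]
  · have h1 := (hsum γ i).hasSum
    rw [← hh i γ] at h1
    have h2 : HasSum (fun s => μ s * h i (γ * s)) (op μ (h i) γ) :=
      (hμ.summable_smul fun s => hC i (γ * s)).hasSum
    have h3 := (h1.add h2).sub (hμ.2.mul_right (h i γ))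
    convert! h3 using 1
    · funext s
      ring
    · ring
  · refine Summable.of_nonneg_of_le (fun s => mul_nonneg (hμ.1 s) (sq_nonneg _)) (fun s => ?_)
      (((hsq γ i).mul_left 2).add (hμ.2.summable.mul_right (8 * C i ^ 2)))
    have h1 := abs_le.1 (hC i (γ * s))
    have h2 := abs_le.1 (hC i γ)
    rw [mul_left_comm, ← mul_add]
    refine mul_le_mul_of_nonneg_left ?_ (hμ.1 s)
    have h3 : (h i (γ * s) - h i γ) ^ 2 ≤ (2 * C i) ^ 2 := sq_le_sq' (by linarith) (by linarith)
    nlinarith [sq_nonneg ((L.loc (γ * s) i : ℝ) - L.loc γ i - (h i (γ * s) - h i γ))]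
  · have := (hinv i).sum_shift s
    simp only [Finset.sum_sub_distrib, Finset.sum_add_distrib, this, Lat.loc_base, Pi.zero_apply,
      ← Int.cast_sum, L.sum_loc_base_mul hhom]
    simp

end Corrector

section Product

lemma hasSum_mul_prod {α : Type*} {f g : α → ℝ} {A B : ℝ} (hf : HasSum f A) (hg : HasSum g B) :
    HasSum (fun x : α × α => f x.1 * g x.2) (A * B) :=
  hf.mul hg (summable_mul_of_summable_norm hf.summable.norm hg.summable.norm)

lemma IsProb.hasSum_fst {G : Type*} {μ f : G → ℝ} (hμ : IsProb μ) {A : ℝ}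
    (h : HasSum (fun s => μ s * f s) A) :
    HasSum (fun x : G × G => μ x.1 * μ x.2 * f x.1) A := by
  have := hasSum_mul_prod h hμ.2
  rw [mul_one] at this
  exact this.congr_fun fun x => by ring

lemma IsProb.hasSum_snd {G : Type*} {μ f : G → ℝ} (hμ : IsProb μ) {A : ℝ}
    (h : HasSum (fun s => μ s * f s) A) :
    HasSum (fun x : G × G => μ x.1 * μ x.2 * f x.2) A := by
  have := hasSum_mul_prod hμ.2 h
  rw [one_mul] at this
  exact this.congr_fun fun x => by ring

lemma IsProb.hasSum_noised_add_sq {G : Type*} {μ a b : G → ℝ} (hμ : IsProb μ) (ρ : ℝ)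
    (ha : HasSum (fun s => μ s * a s) 0) (hb : HasSum (fun s => μ s * b s) 0)
    (ha2 : Summable fun s => μ s * a s ^ 2) (hb2 : Summable fun s => μ s * b s ^ 2)
    (hab : Summable fun s => μ s * (a s * b s)) :
    HasSum (fun s : G × G => NSVA.noised μ ρ s * (a s.1 + b s.2) ^ 2)
      (∑' s, μ s * a s ^ 2 + ∑' s, μ s * b s ^ 2 + 2 * (1 - ρ) * ∑' s, μ s * (a s * b s)) := by
  have hc := hasSum_mul_prod ha hb
  have hA := ((hμ.hasSum_fst ha2.hasSum).add (hμ.hasSum_snd hb2.hasSum)).add (hc.mul_left 2)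
  have hB := (ha2.hasSum.add hb2.hasSum).add (hab.hasSum.mul_left 2)
  have := hasSum_noised_smul ρ (μ := μ) (F := fun s : G × G => (a s.1 + b s.2) ^ 2)
    (hA.congr_fun fun x => by rw [smul_eq_mul]; ring)
    (hB.congr_fun fun x => by rw [smul_eq_mul]; ring)
  simp only [smul_eq_mul] at this
  convert! this using 1
  ring

variable {G ι Δ : Type*} [Group G]

/-- The product of two copies of a lattice. -/
def Lat.square (L : Lat G ι Δ) : Lat (G × G) (ι ⊕ ι) (Δ × Δ) where
  t z := (L.t (z ∘ Sum.inl), L.t (z ∘ Sum.inr))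
  E := ((L.E.prodCongr L.E).trans (Equiv.prodProdProdComm _ _ _ _)).trans
    ((Equiv.sumArrowEquivProdArrow ι ι ℤ).symm.prodCongr (Equiv.refl _))
  spec z γ := by
    refine Prod.ext (funext fun i => ?_) (by simp [L.spec])
    rcases i with i | i <;> simp [L.spec]

lemma Lat.base_square (L : Lat G ι Δ) (x : Δ × Δ) :
    L.square.base x = (L.base x.1, L.base x.2) := rfl

/-- The map `M` on both coordinates. -/
def pairMap (M : G → ι → ℝ) (γ : G × G) : ι ⊕ ι → ℝ := Sum.elim (M γ.1) (M γ.2)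

lemma incr_pairMap [Fintype ι] (M : G → ι → ℝ) (w : ι ⊕ ι → ℝ) (γ s : G × G) :
    incr (pairMap M) w γ s
      = incr M (w ∘ Sum.inl) γ.1 s.1 + incr M (w ∘ Sum.inr) γ.2 s.2 := by
  simp [incr, pairMap]

variable {L : Lat G ι Δ} {M : G → ι → ℝ} {μ : G → ℝ}

lemma Walk.square (h : Walk L M μ) {ρ : ℝ} (h0 : 0 < ρ) (h1 : ρ ≤ 1) :
    Walk L.square (pairMap M) (noised μ ρ) where
  prob := h.prob.noised h0.le h1
  pos g := by
    filter_upwards [h.pos g.1, h.pos g.2] with n ha hb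
    exact convPow_noised_pos h.prob h0 h1 n ha hb
  equiv z γ i := by
    rcases i with i | i <;> exact h.equiv _ _ _
  mean γ i := by
    rcases i with i | i
    · have := hasSum_noised_smul ρ (h.prob.hasSum_fst (h.mean γ.1 i)) (h.mean γ.1 i)
      simpa [pairMap] using this
    · have := hasSum_noised_smul ρ (h.prob.hasSum_snd (h.mean γ.2 i)) (h.mean γ.2 i)
      simpa [pairMap] using this
  sq γ i := by
    rcases i with i | i
    · have := (h.sq γ.1 i).hasSum
      exact (hasSum_noised_smul ρ (h.prob.hasSum_fst this) this).summable
    · have := (h.sq γ.2 i).hasSum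
      exact (hasSum_noised_smul ρ (h.prob.hasSum_snd this) this).summable

variable [Fintype ι]

lemma Walk.summable_incr_mul_incr (h : Walk L M μ) (w w' : ι → ℝ) (γ γ' : G) :
    Summable fun s => μ s * (incr M w γ s * incr M w' γ' s) := by
  refine Summable.of_norm_bounded
    ((h.summable_incr_sq w γ).add (h.summable_incr_sq w' γ')) fun s => ?_
  rw [norm_mul, Real.norm_of_nonneg (h.prob.1 s), Real.norm_eq_abs, ← mul_add]
  refine mul_le_mul_of_nonneg_left (abs_le.2 ?_) (h.prob.1 s)
  constructor <;> nlinarith [sq_nonneg (incr M w γ s + incr M w' γ' s),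
    sq_nonneg (incr M w γ s - incr M w' γ' s), sq_nonneg (incr M w γ s),
    sq_nonneg (incr M w' γ' s)]

lemma Walk.hasSum_noised_incr_sq (h : Walk L M μ) (ρ : ℝ) (w : ι ⊕ ι → ℝ) (γ : G × G) :
    HasSum (fun s => noised μ ρ s * incr (pairMap M) w γ s ^ 2)
      (∑' s, μ s * incr M (w ∘ Sum.inl) γ.1 s ^ 2 + ∑' s, μ s * incr M (w ∘ Sum.inr) γ.2 s ^ 2
        + 2 * (1 - ρ) *
          ∑' s, μ s * (incr M (w ∘ Sum.inl) γ.1 s * incr M (w ∘ Sum.inr) γ.2 s)) := by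
  simp only [incr_pairMap]
  exact h.prob.hasSum_noised_add_sq ρ (h.hasSum_incr _ _) (h.hasSum_incr _ _)
    (h.summable_incr_sq _ _) (h.summable_incr_sq _ _) (h.summable_incr_mul_incr _ _ _ _)

variable [Fintype Δ]

lemma Walk.meanVar_noised (h : Walk L M μ)
    (hT : ∀ s i, ∑ x, (M (L.base x * s) i - M (L.base x) i) = 0) (ρ : ℝ) (w : ι ⊕ ι → ℝ) :
    meanVar L.square (pairMap M) (noised μ ρ) w = (Fintype.card (Δ × Δ) : ℝ)⁻¹ *
      ∑ x : Δ × Δ, (∑' s, μ s * incr M (w ∘ Sum.inl) (L.base x.1) s ^ 2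
        + ∑' s, μ s * incr M (w ∘ Sum.inr) (L.base x.2) s ^ 2) := by
  have h0 : ∀ v s, ∑ x, incr M v (L.base x) s = 0 := fun v s => by
    simp only [incr]
    rw [Finset.sum_comm]
    simp only [← Finset.mul_sum, hT, mul_zero, Finset.sum_const_zero]
  have hcross : ∑ x : Δ × Δ, ∑' s, μ s *
      (incr M (w ∘ Sum.inl) (L.base x.1) s * incr M (w ∘ Sum.inr) (L.base x.2) s) = 0 := by
    rw [← Summable.tsum_finsetSum fun x _ => h.summable_incr_mul_incr _ _ _ _]
    simp only [← Finset.mul_sum, Fintype.sum_prod_type, h0, mul_zero,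
      tsum_zero, Finset.sum_const_zero]
  unfold meanVar
  congr 1
  simp only [Lat.base_square, (h.hasSum_noised_incr_sq ρ w _).tsum_eq]
  rw [Finset.sum_add_distrib, ← Finset.mul_sum, hcross, mul_zero, add_zero]

/-- Noise sensitivity from the absence of homomorphisms to the integers. -/
lemma tendsto_tv_noised [Countable G] (L : Lat G ι Δ) (hμ : IsProb μ)
    (hpos : ∀ g, ∀ᶠ k in atTop, 0 < convPow μ k g) (hmom : FinSecondMoment μ)
    (hhom : ∀ φ : G →* Multiplicative ℤ, ∀ γ, φ γ = 1) {ρ : ℝ} (h0 : 0 < ρ) (h1 : ρ ≤ 1) :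
    Tendsto (fun n : ℕ => tv (convPow (noised μ ρ) n)
      (fun p : G × G => convPow μ n p.1 * convPow μ n p.2)) atTop (nhds 0) := by
  obtain ⟨M, hM, hT⟩ := exists_walk L hμ hpos hmom hhom
  simpa only [convPow_noised_one hμ] using
    tendsto_tv_convPow (hM.square h0 h1) (hM.square one_pos le_rfl) fun w => by
      rw [hM.meanVar_noised hT, hM.meanVar_noised hT]

end Product

/-- For an aperiodic, finite-second-moment, non-degenerate probability
measure `μ` on a finitely generated virtually abelian group `Γ`, the `μ`-random walk is
noise sensitive in total variation iff every homomorphism `Γ → ℤ` is zero. -/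
theorem noise_sensitive_iff_no_hom_to_int
    {Γ : Type*} [Group Γ] [Countable Γ] (hFG : Group.FG Γ) (hVA : VirtAbelian Γ)
    (μ : Γ → ℝ) (hμ : IsProb μ) (hap : Aperiodic μ) (hmom : FinSecondMoment μ)
    (hnd : Nondeg μ) :
    (∀ ρ : ℝ, 0 < ρ → ρ ≤ 1 →
        Tendsto (fun n : ℕ => tv (convPow (noised μ ρ) n)
            (fun p : Γ × Γ => convPow μ n p.1 * convPow μ n p.2))
          atTop (nhds 0)) ↔
      ∀ φ : Γ →* Multiplicative ℤ, ∀ γ : Γ, φ γ = 1 := by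
  have hpos := eventually_convPow_pos hμ hap hnd
  refine ⟨fun h φ γ => ?_, fun hhom ρ h0 h1 => ?_⟩
  · exact hom_trivial_of_noise_sensitive hμ hpos (h (1 / 2) (by norm_num) (by norm_num)) φ γ
  · obtain ⟨ι, Δ, _, _, ⟨L⟩⟩ := exists_lat hFG hVA
    have := Fintype.ofFinite ι
    have := Fintype.ofFinite Δ
    exact tendsto_tv_noised L hμ hpos hmom hhom h0 h1

end NSVA
end

section
/- Covariance structure for the noised walk on a semidirect product. Assume Δ is a subgroup of Γ (so Γ = Λ ⋊ Δ). Let ⟨·,·⟩ be an Ad-invariant inner product on ℝ^m and θ̲ := (1/#F)·∑_{f∈F} Ad(f). Let μ be a non-degenerate aperiodic probability measure on Γ with finite second moment, and for ρ ∈ (0,1] let π^ρ be the probability measure on Γ×Γ with π^ρ(γ,γ') = ρ·μ(γ)·μ(γ') + (1−ρ)·μ(γ)·[γ = γ']. Define the bilinear form B_{π^ρ} on ℝ^m×ℝ^m using the product diagram of (Γ×Γ, π^ρ, Δ×Δ) and B_μ on ℝ^m using (Γ, μ, Δ), by B(𝐯,𝐯') := ∑_{(x,s)} c(x,s)·u(x,s)·u'(x,s)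 − χ(u)·χ(u') where u, u' are the harmonic parts of the 1-forms 𝐯̂(x,s) := ⟨𝐯, α(x,s)⟩, 𝐯̂' (inner products taken as ⟨·,·⟩ and its orthogonal sum on ℝ^m×ℝ^m). Then for all v₁, v₁', v₂ ∈ ℝ^m: B_{π^ρ}((v₁,0),(v₁',0)) = B_μ(v₁,v₁') = B_{π^ρ}((0,v₁),(0,v₁')), and B_{π^ρ}((v₁,0),(0,v₂)) = (1−ρ)·B_μ(θ̲v₁, θ̲v₂). -/
open scoped BigOperators Classical
open Filter Matrix MeasureTheory

namespace NSVA

section SummationLemmas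

lemma summable_mul_mul_of_sq {ι : Type*} {μ h k : ι → ℝ} (hμ : ∀ i, 0 ≤ μ i)
    (hh : Summable fun i => μ i * h i ^ 2) (hk : Summable fun i => μ i * k i ^ 2) :
    Summable fun i => μ i * (h i * k i) := by
  refine Summable.of_norm_bounded (hh.add hk) fun i => ?_
  rw [Real.norm_eq_abs, abs_mul, abs_of_nonneg (hμ i), ← mul_add]
  refine mul_le_mul_of_nonneg_left ?_ (hμ i)
  rw [abs_le]
  constructor <;> nlinarith [sq_nonneg (h i + k i), sq_nonneg (h i - k i), sq_nonneg (h i),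
    sq_nonneg (k i)]

lemma summable_mul_of_sq {ι : Type*} {μ h : ι → ℝ} (hμ : ∀ i, 0 ≤ μ i) (hs : Summable μ)
    (hh : Summable fun i => μ i * h i ^ 2) : Summable fun i => μ i * h i := by
  simpa using summable_mul_mul_of_sq (k := fun _ => 1) hμ hh (by simpa using hs)

lemma summable_mul_add_sq {ι : Type*} {μ h k : ι → ℝ} (hμ : ∀ i, 0 ≤ μ i)
    (hh : Summable fun i => μ i * h i ^ 2) (hk : Summable fun i => μ i * k i ^ 2) :
    Summable fun i => μ i * (h i + k i) ^ 2 := by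
  refine ((hh.add hk).add ((summable_mul_mul_of_sq hμ hh hk).mul_left 2)).congr fun i => ?_
  ring

lemma summable_mul_of_finset_range {ι κ : Type*} {μ : ι → ℝ} (hs : Summable μ) (D : Finset κ)
    (r : ι → κ) (hr : ∀ i, r i ∈ D) (h : κ → ℝ) : Summable fun i => μ i * h (r i) := by
  refine Summable.of_norm_bounded (hs.norm.mul_right (∑ y ∈ D, |h y|)) fun i => ?_
  rw [norm_mul, Real.norm_eq_abs (h _)]
  exact mul_le_mul_of_nonneg_left
    (Finset.single_le_sum (f := fun y => |h y|) (fun y _ => abs_nonneg _) (hr i)) (norm_nonneg _)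

end SummationLemmas

section Diagram

variable {G : Type*} [Group G] {L : Subgroup G}

lemma RepSystem.rep_rep_mul_inv (R : RepSystem L) {x : G} (hx : x ∈ R.Δ) (s : G) :
    R.rep (R.rep (x * s) * s⁻¹) = x := by
  have h := R.rep_coset x _ (L.inv_mem (R.rep_spec (x * s)))
  rw [R.rep_idem x hx] at h
  calc R.rep (R.rep (x * s) * s⁻¹) = R.rep ((x * s * (R.rep (x * s))⁻¹)⁻¹ * x) := by
        congr 1
        group
    _ = x := h

lemma RepSystem.sum_rep (R : RepSystem L) (h : G → ℝ) (s : G) :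
    ∑ x ∈ R.Δ, h (R.rep (x * s)) = ∑ x ∈ R.Δ, h x := by
  refine Finset.sum_nbij' (fun x => R.rep (x * s)) (fun x => R.rep (x * s⁻¹))
    (fun _ _ => R.rep_mem _) (fun _ _ => R.rep_mem _) (fun x hx => R.rep_rep_mul_inv hx s)
    (fun x hx => ?_) (fun _ _ => rfl)
  simpa using R.rep_rep_mul_inv hx s⁻¹

lemma RepSystem.bijOn_mk (R : RepSystem L) (hN : L.Normal) :
    Set.BijOn (fun x : G => (QuotientGroup.mk x : G ⧸ L)) (R.Δ : Set G) Set.univ := by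
  refine ⟨fun _ _ => Set.mem_univ _, fun x hx y hy hxy => ?_, fun q _ => ?_⟩
  · have h : y * x⁻¹ ∈ L := by
      have := hN.mem_comm (QuotientGroup.eq.mp hxy)
      exact this
    have h2 := R.rep_coset x _ h
    rw [inv_mul_cancel_right, R.rep_idem x hx, R.rep_idem y hy] at h2
    exact h2.symm
  · induction q using QuotientGroup.induction_on with
    | H γ =>
      refine ⟨R.rep γ, R.rep_mem γ, QuotientGroup.eq.mpr ?_⟩
      exact hN.mem_comm (R.rep_spec γ)

lemma RepSystem.card_eq_index (R : RepSystem L) (hN : L.Normal) : R.Δ.card = L.index := by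
  have h := (R.bijOn_mk hN).image_eq
  have h2 := (R.bijOn_mk hN).injOn.ncard_image
  rw [h, Set.ncard_univ, Set.ncard_coe_finset] at h2
  exact h2.symm

lemma chi_eq (R : RepSystem L) (μ : G → ℝ) (ω : G → G → ℝ) :
    chi R μ ω = (L.index : ℝ)⁻¹ * ∑ x ∈ R.Δ, ∑' s, μ s * ω x s := by
  rw [chi, Finset.mul_sum]
  refine Finset.sum_congr rfl fun x _ => ?_
  rw [← tsum_mul_left]
  exact tsum_congr fun s => by ring

lemma cov_eq (R : RepSystem L) (μ : G → ℝ) (u u' : G → G → ℝ) :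
    cov R μ u u' = chi R μ (fun x s => u x s * u' x s) - chi R μ u * chi R μ u' := rfl

lemma sqInt_iff (R : RepSystem L) (hI : L.index ≠ 0) (μ : G → ℝ) (ω : G → G → ℝ) :
    SqInt R μ ω ↔ ∀ x ∈ R.Δ, Summable fun s => μ s * ω x s ^ 2 := by
  refine forall₂_congr fun x _ => ?_
  have hI' : (L.index : ℝ)⁻¹ ≠ 0 := inv_ne_zero (Nat.cast_ne_zero.mpr hI)
  rw [← summable_mul_left_iff hI' (f := fun s => μ s * ω x s ^ 2)]
  refine summable_congr fun s => by ring

lemma chi_congr (R : RepSystem L) (μ : G → ℝ) {ω ω' : G → G → ℝ}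
    (h : ∀ x ∈ R.Δ, ∀ s, μ s ≠ 0 → ω x s = ω' x s) : chi R μ ω = chi R μ ω' := by
  refine Finset.sum_congr rfl fun x hx => tsum_congr fun s => ?_
  by_cases hs : μ s = 0
  · simp [hs]
  · rw [h x hx s hs]

lemma cov_congr (R : RepSystem L) (μ : G → ℝ) {u u' w w' : G → G → ℝ}
    (h : ∀ x ∈ R.Δ, ∀ s, μ s ≠ 0 → u x s = w x s)
    (h' : ∀ x ∈ R.Δ, ∀ s, μ s ≠ 0 → u' x s = w' x s) : cov R μ u u' = cov R μ w w' := by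
  rw [cov_eq, cov_eq, chi_congr R μ h, chi_congr R μ h',
    chi_congr R μ fun x hx s hs => by rw [h x hx s hs, h' x hx s hs]]

lemma harmonic_of_tsum_eq (R : RepSystem L) (hI : L.index ≠ 0) (hc : R.Δ.card = L.index)
    (μ : G → ℝ) (ω : G → G → ℝ) (hsq : ∀ x ∈ R.Δ, Summable fun s => μ s * ω x s ^ 2) (c : ℝ)
    (h : ∀ x ∈ R.Δ, ∑' s, μ s * ω x s = c) : Harmonic R μ ω := by
  refine ⟨(sqInt_iff R hI μ ω).2 hsq, fun x hx => ?_⟩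
  have hI' : (L.index : ℝ) ≠ 0 := Nat.cast_ne_zero.mpr hI
  rw [chi_eq, Finset.sum_congr rfl h, h x hx, Finset.sum_const, hc, nsmul_eq_mul,
    inv_mul_cancel_left₀ hI']

lemma dd_summable (R : RepSystem L) {μ : G → ℝ} (hs : Summable μ) (h : G → ℝ) (x : G) :
    Summable fun s => μ s * dd R h x s := by
  refine ((summable_mul_of_finset_range hs R.Δ (fun s => R.rep (x * s))
    (fun _ => R.rep_mem _) h).sub (hs.mul_right (h x))).congr fun s => ?_
  simp only [dd]; ring

lemma dd_summable_sq (R : RepSystem L) {μ : G → ℝ} (hs : Summable μ) (h : G → ℝ) (x : G) :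
    Summable fun s => μ s * dd R h x s ^ 2 :=
  summable_mul_of_finset_range hs R.Δ (fun s => R.rep (x * s)) (fun _ => R.rep_mem _)
    fun y => (h y - h x) ^ 2

lemma sum_dd (R : RepSystem L) (h : G → ℝ) (s : G) : ∑ x ∈ R.Δ, dd R h x s = 0 := by
  simp only [dd, Finset.sum_sub_distrib, R.sum_rep h s, sub_self]

/-- A differential with constant averages vanishes on the support of the measure. -/
lemma dd_eq_zero_of_tsum_eq (R : RepSystem L) {μ : G → ℝ} (hμ : ∀ s, 0 ≤ μ s)
    (hs : Summable μ) (h : G → ℝ) (c : ℝ) (hc : ∀ x ∈ R.Δ, ∑' s, μ s * dd R h x s = c) :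
    ∀ x ∈ R.Δ, ∀ s, μ s ≠ 0 → dd R h x s = 0 := by
  have hc0 : c = 0 := by
    have h1 : ∑ x ∈ R.Δ, ∑' s, μ s * dd R h x s = 0 := by
      rw [← Summable.tsum_finsetSum fun x _ => dd_summable R hs h x]
      simp_rw [← Finset.mul_sum, sum_dd, mul_zero, tsum_zero]
    rw [Finset.sum_congr rfl hc, Finset.sum_const, nsmul_eq_mul] at h1
    have hcard : (R.Δ.card : ℝ) ≠ 0 :=
      Nat.cast_ne_zero.mpr (Finset.card_ne_zero_of_mem R.one_mem)
    exact (mul_eq_zero.mp h1).resolve_left hcard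
  have energy : ∑ x ∈ R.Δ, ∑' s, μ s * dd R h x s ^ 2 = 0 := by
    have h2 : ∑ x ∈ R.Δ, ∑' s, μ s * dd R h x s ^ 2
        = ∑ x ∈ R.Δ, ∑' s, (-2 * h x) * (μ s * dd R h x s) := by
      rw [← Summable.tsum_finsetSum fun x _ => dd_summable_sq R hs h x,
        ← Summable.tsum_finsetSum fun x _ => (dd_summable R hs h x).mul_left _]
      refine tsum_congr fun s => ?_
      have h3 := R.sum_rep (fun y => h y ^ 2) s
      rw [← sub_eq_zero, ← Finset.sum_sub_distrib]
      have h4 : ∀ x, μ s * dd R h x s ^ 2 - -2 * h x * (μ s * dd R h x s)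
          = μ s * (h (R.rep (x * s)) ^ 2 - h x ^ 2) := fun x => by simp only [dd]; ring
      simp_rw [h4, ← Finset.mul_sum, Finset.sum_sub_distrib]
      rw [h3, sub_self, mul_zero]
    rw [h2]
    refine Finset.sum_eq_zero fun x hx => ?_
    rw [tsum_mul_left, hc x hx, hc0, mul_zero]
  have hnn : ∀ x s, 0 ≤ μ s * dd R h x s ^ 2 := fun x s => mul_nonneg (hμ s) (sq_nonneg _)
  intro x hx s hs0
  have h5 := (Finset.sum_eq_zero_iff_of_nonneg fun x _ => tsum_nonneg (hnn x)).mp energy x hx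
  have h6 := (hasSum_zero_iff_of_nonneg (hnn x)).mp (h5 ▸ (dd_summable_sq R hs h x).hasSum)
  have h7 := congrFun h6 s
  simpa [hs0] using h7

/-- The harmonic part of a 1-form is unique on the support of the measure. -/
lemma harmonic_part_unique (R : RepSystem L) (hI : L.index ≠ 0) {μ : G → ℝ}
    (hμ : ∀ s, 0 ≤ μ s) (hs : Summable μ) {u u' : G → G → ℝ} (f f' : G → ℝ)
    (hu : Harmonic R μ u) (hu' : Harmonic R μ u')
    (h : ∀ x ∈ R.Δ, ∀ s, u x s + dd R f x s = u' x s + dd R f' x s) :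
    ∀ x ∈ R.Δ, ∀ s, μ s ≠ 0 → u x s = u' x s := by
  have hd : ∀ x ∈ R.Δ, ∀ s, dd R (fun y => f' y - f y) x s = u x s - u' x s := by
    intro x hx s
    have := h x hx s
    simp only [dd] at this ⊢
    linarith
  intro x hx s hs0
  refine sub_eq_zero.mp ?_
  rw [← hd x hx s]
  refine dd_eq_zero_of_tsum_eq R hμ hs _ (chi R μ u - chi R μ u') (fun y hy => ?_) x hx s hs0
  have s1 := summable_mul_of_sq hμ hs ((sqInt_iff R hI μ u).1 hu.1 y hy)
  have s2 := summable_mul_of_sq hμ hs ((sqInt_iff R hI μ u').1 hu'.1 y hy)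
  rw [← hu.2 y hy, ← hu'.2 y hy, ← s1.tsum_sub s2]
  exact tsum_congr fun t => by rw [hd y hy t, mul_sub]

end Diagram

section Noised

variable {G : Type*} {μ : G → ℝ} {ρ : ℝ}

lemma noised_swap (μ : G → ℝ) (ρ : ℝ) (p : G × G) : noised μ ρ p.swap = noised μ ρ p := by
  obtain ⟨a, b⟩ := p
  by_cases h : a = b
  · subst h; rfl
  · simp [noised, h, Ne.symm h, mul_assoc, mul_comm (μ a)]

lemma noised_nonneg (hμ : ∀ s, 0 ≤ μ s) (hρ0 : 0 ≤ ρ) (hρ1 : ρ ≤ 1) (p : G × G) :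
    0 ≤ noised μ ρ p := by
  have h1 : 0 ≤ 1 - ρ := by linarith
  have h2 := hμ p.1
  have h3 := hμ p.2
  unfold noised
  split_ifs <;> positivity

lemma hasSum_noised (h k : G → ℝ) (hh : Summable fun s => μ s * h s)
    (hk : Summable fun s => μ s * k s) (hhk : Summable fun s => μ s * (h s * k s)) :
    HasSum (fun p : G × G => noised μ ρ p * (h p.1 * k p.2))
      (ρ * ((∑' s, μ s * h s) * ∑' s, μ s * k s) + (1 - ρ) * ∑' s, μ s * (h s * k s)) := by
  have h1 := (hh.hasSum.mul hk.hasSum (summable_mul_of_summable_norm hh.norm hk.norm)).mul_left ρ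
  have h2 : HasSum (fun p : G × G => μ p.1 * (if p.1 = p.2 then 1 else 0) * (h p.1 * k p.2))
      (∑' s, μ s * (h s * k s)) := by
    have hinj : Function.Injective fun s : G => (s, s) := fun a b hab => (Prod.ext_iff.mp hab).1
    refine (hinj.hasSum_iff fun p hp => ?_).mp (hhk.hasSum.congr_fun ?_)
    · have : p.1 ≠ p.2 := fun e => hp ⟨p.1, Prod.ext rfl e⟩
      simp [this]
    · intro s
      simp
  refine (h1.add (h2.mul_left (1 - ρ))).congr_fun fun p => ?_
  simp only [noised]
  ring

lemma hasSum_noised_fst (hμ : HasSum μ 1) (h : G → ℝ) (hh : Summable fun s => μ s * h s) :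
    HasSum (fun p : G × G => noised μ ρ p * h p.1) (∑' s, μ s * h s) := by
  have := hasSum_noised (ρ := ρ) h (fun _ => 1) hh (by simpa using hμ.summable) (by simpa using hh)
  simp only [mul_one, hμ.tsum_eq] at this
  convert this using 1
  ring

lemma hasSum_noised_snd (hμ : HasSum μ 1) (h : G → ℝ) (hh : Summable fun s => μ s * h s) :
    HasSum (fun p : G × G => noised μ ρ p * h p.2) (∑' s, μ s * h s) := by
  have := (Equiv.prodComm G G).hasSum_iff.mpr (hasSum_noised_fst (ρ := ρ) hμ h hh)
  refine this.congr_fun fun p => ?_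
  simp [noised_swap]

lemma hasSum_noised_one (hμ : HasSum μ 1) : HasSum (noised μ ρ) 1 := by
  have := hasSum_noised_fst (ρ := ρ) hμ (fun _ => 1) (by simpa using hμ.summable)
  simpa [hμ.tsum_eq] using this

lemma summable_of_summable_noised_fst (hμ : HasSum μ 1) (h : G → ℝ)
    (hs : Summable fun p : G × G => noised μ ρ p * h p.1) : Summable fun s => μ s * h s := by
  refine hs.prod.congr fun a => ?_
  have h1 : HasSum (fun b => noised μ ρ (a, b)) (ρ * μ a * 1 + (1 - ρ) * μ a * 1) := by
    refine ((hμ.mul_left (ρ * μ a)).add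
      ((hasSum_ite_eq a (1 : ℝ)).mul_left ((1 - ρ) * μ a))).congr_fun fun b => ?_
    simp only [noised, eq_comm (a := a)]
  rw [(h1.mul_right (h a)).tsum_eq]
  ring

lemma summable_of_summable_noised_snd (hμ : HasSum μ 1) (h : G → ℝ)
    (hs : Summable fun p : G × G => noised μ ρ p * h p.2) : Summable fun s => μ s * h s := by
  refine summable_of_summable_noised_fst (ρ := ρ) hμ h ?_
  refine ((Equiv.prodComm G G).summable_iff.mpr hs).congr fun p => ?_
  simp [noised_swap]

end Noised

section ProductDiagram

variable {G : Type*} [Group G] {L : Subgroup G} {μ : G → ℝ} {ρ : ℝ}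

lemma index_prod_self_ne_zero (hI : L.index ≠ 0) : (L.prod L).index ≠ 0 := by
  rw [Subgroup.index_prod]
  exact mul_ne_zero hI hI

lemma card_prodRep (R : RepSystem L) (hc : R.Δ.card = L.index) :
    (prodRep R R).Δ.card = (L.prod L).index := by
  rw [Subgroup.index_prod, ← hc]
  exact Finset.card_product _ _

lemma chi_prodRep (R : RepSystem L) (ν : G × G → ℝ) (ω : G × G → G × G → ℝ) :
    chi (prodRep R R) ν ω = (L.index : ℝ)⁻¹ * ((L.index : ℝ)⁻¹ *
      ∑ x ∈ R.Δ, ∑ y ∈ R.Δ, ∑' p, ν p * ω (x, y) p) := by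
  rw [chi_eq, Subgroup.index_prod, Nat.cast_mul, mul_inv, mul_assoc]
  congr 2
  exact Finset.sum_product _ _ _

lemma chi_fst (R : RepSystem L) (hI : L.index ≠ 0) (hc : R.Δ.card = L.index) (hμ : HasSum μ 1)
    (ω : G → G → ℝ) (hω : ∀ x ∈ R.Δ, Summable fun s => μ s * ω x s) :
    chi (prodRep R R) (noised μ ρ) (fun x s => ω x.1 s.1) = chi R μ ω := by
  have hI' : (L.index : ℝ) ≠ 0 := Nat.cast_ne_zero.mpr hI
  rw [chi_prodRep, chi_eq]
  congr 1
  rw [Finset.mul_sum]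
  refine Finset.sum_congr rfl fun x hx => ?_
  rw [Finset.sum_congr rfl fun y _ => (hasSum_noised_fst (ρ := ρ) hμ (ω x) (hω x hx)).tsum_eq,
    Finset.sum_const, hc, nsmul_eq_mul, inv_mul_cancel_left₀ hI']

lemma chi_snd (R : RepSystem L) (hI : L.index ≠ 0) (hc : R.Δ.card = L.index) (hμ : HasSum μ 1)
    (ω : G → G → ℝ) (hω : ∀ x ∈ R.Δ, Summable fun s => μ s * ω x s) :
    chi (prodRep R R) (noised μ ρ) (fun x s => ω x.2 s.2) = chi R μ ω := by
  have hI' : (L.index : ℝ) ≠ 0 := Nat.cast_ne_zero.mpr hI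
  rw [chi_prodRep, chi_eq]
  congr 1
  rw [Finset.sum_comm, Finset.mul_sum]
  refine Finset.sum_congr rfl fun x hx => ?_
  rw [Finset.sum_congr rfl fun y _ => (hasSum_noised_snd (ρ := ρ) hμ (ω x) (hω x hx)).tsum_eq,
    Finset.sum_const, hc, nsmul_eq_mul, inv_mul_cancel_left₀ hI']

lemma Harmonic.fst {R : RepSystem L} (hI : L.index ≠ 0) (hc : R.Δ.card = L.index)
    (hp : IsProb μ) {u : G → G → ℝ} (hu : Harmonic R μ u) :
    Harmonic (prodRep R R) (noised μ ρ) (fun x s => u x.1 s.1) := by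
  have hsq := (sqInt_iff R hI μ u).1 hu.1
  refine harmonic_of_tsum_eq _ (index_prod_self_ne_zero hI) (card_prodRep R hc) _ _
    (fun x hx => (hasSum_noised_fst hp.2 (fun s => u x.1 s ^ 2)
      (hsq x.1 (Finset.mem_product.mp hx).1)).summable) (chi R μ u) fun x hx => ?_
  have hx1 := (Finset.mem_product.mp hx).1
  rw [← hu.2 x.1 hx1]
  exact (hasSum_noised_fst hp.2 (u x.1) (summable_mul_of_sq hp.1 hp.2.summable (hsq _ hx1))).tsum_eq

lemma Harmonic.snd {R : RepSystem L} (hI : L.index ≠ 0) (hc : R.Δ.card = L.index)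
    (hp : IsProb μ) {u : G → G → ℝ} (hu : Harmonic R μ u) :
    Harmonic (prodRep R R) (noised μ ρ) (fun x s => u x.2 s.2) := by
  have hsq := (sqInt_iff R hI μ u).1 hu.1
  refine harmonic_of_tsum_eq _ (index_prod_self_ne_zero hI) (card_prodRep R hc) _ _
    (fun x hx => (hasSum_noised_snd hp.2 (fun s => u x.2 s ^ 2)
      (hsq x.2 (Finset.mem_product.mp hx).2)).summable) (chi R μ u) fun x hx => ?_
  have hx2 := (Finset.mem_product.mp hx).2
  rw [← hu.2 x.2 hx2]
  exact (hasSum_noised_snd hp.2 (u x.2) (summable_mul_of_sq hp.1 hp.2.summable (hsq _ hx2))).tsum_eq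

lemma noised_unique (R : RepSystem L) (hI : L.index ≠ 0) (hp : IsProb μ) (hρ0 : 0 ≤ ρ)
    (hρ1 : ρ ≤ 1) {ω u w : G × G → G × G → ℝ} {f g : G × G → ℝ}
    (hu : IsHarmDecomp (prodRep R R) (noised μ ρ) ω u f)
    (hw : Harmonic (prodRep R R) (noised μ ρ) w)
    (h : ∀ x ∈ (prodRep R R).Δ, ∀ s, ω x s = w x s + dd (prodRep R R) g x s) :
    ∀ x ∈ (prodRep R R).Δ, ∀ s, noised μ ρ s ≠ 0 → u x s = w x s :=
  harmonic_part_unique (prodRep R R) (index_prod_self_ne_zero hI)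
    (noised_nonneg hp.1 hρ0 hρ1) (hasSum_noised_one hp.2).summable f g hu.2.1 hw
    fun x hx s => (hu.2.2 x hx s).symm.trans (h x hx s)

lemma cov_noised_fst (R : RepSystem L) (hI : L.index ≠ 0) (hc : R.Δ.card = L.index)
    (hp : IsProb μ) (hρ0 : 0 ≤ ρ) (hρ1 : ρ ≤ 1) {ω ω' w w' : G → G → ℝ} {g g' : G → ℝ}
    {u u' : G × G → G × G → ℝ} {f f' : G × G → ℝ}
    (hu : IsHarmDecomp (prodRep R R) (noised μ ρ) (fun x s => ω x.1 s.1) u f)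
    (hu' : IsHarmDecomp (prodRep R R) (noised μ ρ) (fun x s => ω' x.1 s.1) u' f')
    (hw : IsHarmDecomp R μ ω w g) (hw' : IsHarmDecomp R μ ω' w' g') :
    cov (prodRep R R) (noised μ ρ) u u' = cov R μ w w' := by
  have hsq := (sqInt_iff R hI μ w).1 hw.2.1.1
  have hsq' := (sqInt_iff R hI μ w').1 hw'.2.1.1
  rw [cov_congr (prodRep R R) _
    (noised_unique (g := fun x => g x.1) R hI hp hρ0 hρ1 hu (hw.2.1.fst hI hc hp)
      fun x hx s => hw.2.2 x.1 (Finset.mem_product.mp hx).1 s.1)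
    (noised_unique (g := fun x => g' x.1) R hI hp hρ0 hρ1 hu' (hw'.2.1.fst hI hc hp)
      fun x hx s => hw'.2.2 x.1 (Finset.mem_product.mp hx).1 s.1),
    cov_eq, cov_eq,
    chi_fst R hI hc hp.2 w fun x hx => summable_mul_of_sq hp.1 hp.2.summable (hsq x hx),
    chi_fst R hI hc hp.2 w' fun x hx => summable_mul_of_sq hp.1 hp.2.summable (hsq' x hx),
    chi_fst R hI hc hp.2 (fun x s => w x s * w' x s)
      fun x hx => summable_mul_mul_of_sq hp.1 (hsq x hx) (hsq' x hx)]

lemma cov_noised_snd (R : RepSystem L) (hI : L.index ≠ 0) (hc : R.Δ.card = L.index)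
    (hp : IsProb μ) (hρ0 : 0 ≤ ρ) (hρ1 : ρ ≤ 1) {ω ω' w w' : G → G → ℝ} {g g' : G → ℝ}
    {u u' : G × G → G × G → ℝ} {f f' : G × G → ℝ}
    (hu : IsHarmDecomp (prodRep R R) (noised μ ρ) (fun x s => ω x.2 s.2) u f)
    (hu' : IsHarmDecomp (prodRep R R) (noised μ ρ) (fun x s => ω' x.2 s.2) u' f')
    (hw : IsHarmDecomp R μ ω w g) (hw' : IsHarmDecomp R μ ω' w' g') :
    cov (prodRep R R) (noised μ ρ) u u' = cov R μ w w' := by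
  have hsq := (sqInt_iff R hI μ w).1 hw.2.1.1
  have hsq' := (sqInt_iff R hI μ w').1 hw'.2.1.1
  rw [cov_congr (prodRep R R) _
    (noised_unique (g := fun x => g x.2) R hI hp hρ0 hρ1 hu (hw.2.1.snd hI hc hp)
      fun x hx s => hw.2.2 x.2 (Finset.mem_product.mp hx).2 s.2)
    (noised_unique (g := fun x => g' x.2) R hI hp hρ0 hρ1 hu' (hw'.2.1.snd hI hc hp)
      fun x hx s => hw'.2.2 x.2 (Finset.mem_product.mp hx).2 s.2),
    cov_eq, cov_eq,
    chi_snd R hI hc hp.2 w fun x hx => summable_mul_of_sq hp.1 hp.2.summable (hsq x hx),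
    chi_snd R hI hc hp.2 w' fun x hx => summable_mul_of_sq hp.1 hp.2.summable (hsq' x hx),
    chi_snd R hI hc hp.2 (fun x s => w x s * w' x s)
      fun x hx => summable_mul_mul_of_sq hp.1 (hsq x hx) (hsq' x hx)]

/-- Averaging a potential on the product diagram over one factor gives a potential on the other. -/
lemma exists_harmonic_of_prod (R : RepSystem L) (hI : L.index ≠ 0) (hc : R.Δ.card = L.index)
    (hp : IsProb μ) (ω : G → G → ℝ) (hsq : ∀ x ∈ R.Δ, Summable fun s => μ s * ω x s ^ 2)
    (f : G × G → ℝ) (c : ℝ)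
    (h : ∀ x ∈ R.Δ, ∀ y ∈ R.Δ,
      ∑' p, noised μ ρ p * (ω x p.1 - dd (prodRep R R) f (x, y) p) = c) :
    ∃ g : G → ℝ, Harmonic R μ fun x s => ω x s - dd R g x s := by
  have hI' : (L.index : ℝ) ≠ 0 := Nat.cast_ne_zero.mpr hI
  set g : G → ℝ := fun x => (L.index : ℝ)⁻¹ * ∑ y ∈ R.Δ, f (x, y) with hg
  have hω : ∀ x ∈ R.Δ, Summable fun s => μ s * ω x s := fun x hx =>
    summable_mul_of_sq hp.1 hp.2.summable (hsq x hx)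
  refine ⟨g, harmonic_of_tsum_eq R hI hc μ _ (fun x hx => ?_) c fun x hx => ?_⟩
  · refine (summable_mul_add_sq hp.1 (hsq x hx)
      (k := fun s => -dd R g x s) ?_).congr fun s => by ring
    exact (dd_summable_sq R hp.2.summable g x).congr fun s => by ring
  · have hsum : ∀ y, Summable fun p =>
        noised μ ρ p * (ω x p.1 - dd (prodRep R R) f (x, y) p) := fun y =>
      ((hasSum_noised_fst hp.2 (ω x) (hω x hx)).summable.sub
        (dd_summable (prodRep R R) (hasSum_noised_one hp.2).summable f (x, y))).congr
        fun p => by ring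
    have hdiff : Summable fun s => μ s * (ω x s - dd R g x s) :=
      ((hω x hx).sub (dd_summable R hp.2.summable g x)).congr fun s => by ring
    have h1 : ∑ y ∈ R.Δ, ∑' p, noised μ ρ p * (ω x p.1 - dd (prodRep R R) f (x, y) p)
        = L.index * c := by
      rw [Finset.sum_congr rfl (h x hx), Finset.sum_const, hc, nsmul_eq_mul]
    rw [← Summable.tsum_finsetSum fun y _ => hsum y] at h1
    have h2 : ∀ p : G × G,
        ∑ y ∈ R.Δ, noised μ ρ p * (ω x p.1 - dd (prodRep R R) f (x, y) p)
          = L.index * (noised μ ρ p * (ω x p.1 - dd R g x p.1)) := by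
      intro p
      have h3 := R.sum_rep (fun y => f (R.rep (x * p.1), y)) p.2
      have h4 : ∑ y ∈ R.Δ, dd (prodRep R R) f (x, y) p = L.index * dd R g x p.1 := by
        have h5 : ∀ y, dd (prodRep R R) f (x, y) p
            = f (R.rep (x * p.1), R.rep (y * p.2)) - f (x, y) := fun y => rfl
        simp_rw [h5, Finset.sum_sub_distrib, h3]
        simp only [dd, hg]
        field_simp
      rw [← Finset.mul_sum, Finset.sum_sub_distrib, Finset.sum_const, hc, h4, nsmul_eq_mul]
      ring
    simp_rw [h2] at h1
    rw [tsum_mul_left] at h1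
    rw [← (hasSum_noised_fst (ρ := ρ) hp.2 _ hdiff).tsum_eq]
    exact mul_left_cancel₀ hI' h1

lemma exists_harmonic_fst (R : RepSystem L) (hI : L.index ≠ 0) (hc : R.Δ.card = L.index)
    (hp : IsProb μ) (hρ0 : 0 ≤ ρ) (hρ1 : ρ ≤ 1) {ω : G → G → ℝ}
    {u : G × G → G × G → ℝ} {f : G × G → ℝ}
    (hu : IsHarmDecomp (prodRep R R) (noised μ ρ) (fun x s => ω x.1 s.1) u f) :
    ∃ g : G → ℝ, Harmonic R μ fun x s => ω x s - dd R g x s := by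
  refine exists_harmonic_of_prod (ρ := ρ) R hI hc hp ω (fun x hx => ?_) f
    (chi (prodRep R R) (noised μ ρ) u) fun x hx y hy => ?_
  · have hxx : (x, x) ∈ (prodRep R R).Δ := Finset.mem_product.mpr ⟨hx, hx⟩
    refine summable_of_summable_noised_fst (ρ := ρ) hp.2 (fun s => ω x s ^ 2) ?_
    refine (summable_mul_add_sq (noised_nonneg hp.1 hρ0 hρ1)
      ((sqInt_iff _ (index_prod_self_ne_zero hI) _ _).1 hu.2.1.1 _ hxx)
      (dd_summable_sq (prodRep R R) (hasSum_noised_one hp.2).summable f (x, x))).congr fun p => ?_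
    rw [← hu.2.2 _ hxx p]
  · have hxy : (x, y) ∈ (prodRep R R).Δ := Finset.mem_product.mpr ⟨hx, hy⟩
    rw [← hu.2.1.2 _ hxy]
    refine tsum_congr fun p => ?_
    rw [show ω x p.1 = _ from hu.2.2 _ hxy p, add_sub_cancel_right]

lemma exists_harmonic_snd (R : RepSystem L) (hI : L.index ≠ 0) (hc : R.Δ.card = L.index)
    (hp : IsProb μ) (hρ0 : 0 ≤ ρ) (hρ1 : ρ ≤ 1) {ω : G → G → ℝ}
    {u : G × G → G × G → ℝ} {f : G × G → ℝ}
    (hu : IsHarmDecomp (prodRep R R) (noised μ ρ) (fun x s => ω x.2 s.2) u f) :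
    ∃ g : G → ℝ, Harmonic R μ fun x s => ω x s - dd R g x s := by
  refine exists_harmonic_of_prod (ρ := ρ) R hI hc hp ω (fun x hx => ?_) (fun x => f x.swap)
    (chi (prodRep R R) (noised μ ρ) u) fun x hx y hy => ?_
  · have hxx : (x, x) ∈ (prodRep R R).Δ := Finset.mem_product.mpr ⟨hx, hx⟩
    refine summable_of_summable_noised_snd (ρ := ρ) hp.2 (fun s => ω x s ^ 2) ?_
    refine (summable_mul_add_sq (noised_nonneg hp.1 hρ0 hρ1)
      ((sqInt_iff _ (index_prod_self_ne_zero hI) _ _).1 hu.2.1.1 _ hxx)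
      (dd_summable_sq (prodRep R R) (hasSum_noised_one hp.2).summable f (x, x))).congr fun p => ?_
    rw [← hu.2.2 _ hxx p]
  · have hyx : (y, x) ∈ (prodRep R R).Δ := Finset.mem_product.mpr ⟨hy, hx⟩
    rw [← hu.2.1.2 _ hyx, ← (Equiv.prodComm G G).tsum_eq]
    refine tsum_congr fun p => ?_
    have h1 : u (y, x) p = ω x p.2 - dd (prodRep R R) f (y, x) p :=
      eq_sub_of_add_eq (hu.2.2 _ hyx p).symm
    rw [h1]
    change noised μ ρ p.swap * _ = _
    rw [noised_swap]
    rfl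

lemma chi_eq_of_average (R : RepSystem L) (hI : L.index ≠ 0) {U : G → G → ℝ}
    (hU : ∀ x ∈ R.Δ, Summable fun s => μ s * U x s) {b : G → ℝ}
    (hb : ∀ s, ∑ x ∈ R.Δ, U x s = L.index * b s) :
    chi R μ U = ∑' s, μ s * b s := by
  have hI' : (L.index : ℝ) ≠ 0 := Nat.cast_ne_zero.mpr hI
  rw [chi_eq, ← Summable.tsum_finsetSum hU, ← tsum_mul_left]
  refine tsum_congr fun s => ?_
  rw [← Finset.mul_sum, hb]
  field_simp

lemma cov_noised_fst_snd (R : RepSystem L) (hI : L.index ≠ 0) (hc : R.Δ.card = L.index)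
    (hp : IsProb μ) {U U' : G → G → ℝ} (hU : Harmonic R μ U) (hU' : Harmonic R μ U')
    {b b' : G → ℝ} (hb : ∀ s, ∑ x ∈ R.Δ, U x s = L.index * b s)
    (hb' : ∀ s, ∑ x ∈ R.Δ, U' x s = L.index * b' s) :
    cov (prodRep R R) (noised μ ρ) (fun x s => U x.1 s.1) (fun x s => U' x.2 s.2)
      = (1 - ρ) * ((∑' s, μ s * (b s * b' s)) - (∑' s, μ s * b s) * ∑' s, μ s * b' s) := by
  have hI' : (L.index : ℝ) ≠ 0 := Nat.cast_ne_zero.mpr hI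
  have hsq := (sqInt_iff R hI μ U).1 hU.1
  have hsq' := (sqInt_iff R hI μ U').1 hU'.1
  have h1 := fun x hx => summable_mul_of_sq hp.1 hp.2.summable (hsq x hx)
  have h1' := fun x hx => summable_mul_of_sq hp.1 hp.2.summable (hsq' x hx)
  have h2 := fun x hx y hy => summable_mul_mul_of_sq hp.1 (hsq x hx) (hsq' y hy)
  have hdiag : ∑ x ∈ R.Δ, ∑ y ∈ R.Δ, ∑' s, μ s * (U x s * U' y s)
      = L.index * (L.index * ∑' s, μ s * (b s * b' s)) := by
    rw [Finset.sum_congr rfl fun x hx => (Summable.tsum_finsetSum fun y hy => h2 x hx y hy).symm,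
      ← Summable.tsum_finsetSum fun x hx => summable_sum fun y hy => h2 x hx y hy,
      ← tsum_mul_left, ← tsum_mul_left]
    refine tsum_congr fun s => ?_
    simp_rw [← Finset.mul_sum]
    rw [← Finset.sum_mul, hb, hb']
    ring
  have hchi := chi_eq_of_average R hI h1 hb
  have hchi' := chi_eq_of_average R hI h1' hb'
  have hmain : chi (prodRep R R) (noised μ ρ) (fun x s => U x.1 s.1 * U' x.2 s.2)
      = ρ * (chi R μ U * chi R μ U') + (1 - ρ) * ∑' s, μ s * (b s * b' s) := by
    rw [chi_prodRep, Finset.sum_congr rfl fun x hx => Finset.sum_congr rfl fun y hy =>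
      (hasSum_noised (ρ := ρ) (U x) (U' y) (h1 x hx) (h1' y hy) (h2 x hx y hy)).tsum_eq]
    simp_rw [Finset.sum_add_distrib, ← Finset.mul_sum]
    rw [hdiag, ← Finset.sum_mul, chi_eq R μ U, chi_eq R μ U']
    field_simp
  rw [cov_eq, hmain, chi_fst R hI hc hp.2 U h1, chi_snd R hI hc hp.2 U' h1', hchi, hchi']
  ring

end ProductDiagram

section Semidirect

variable {G : Type*} [Group G] {L : Subgroup G} {m : ℕ}

lemma RepSystem.rep_mul_of_subgroup (R : RepSystem L) (hN : L.Normal)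
    (hΔ : ∃ H : Subgroup G, (H : Set G) = (R.Δ : Set G)) {x : G} (hx : x ∈ R.Δ) (s : G) :
    R.rep (x * s) = x * R.rep s := by
  obtain ⟨H, hH⟩ := hΔ
  have hmem := Set.ext_iff.mp hH
  have h1 : x * R.rep s ∈ R.Δ :=
    (hmem _).1 (H.mul_mem ((hmem _).2 hx) ((hmem _).2 (R.rep_mem s)))
  calc R.rep (x * s) = R.rep (x * (s * (R.rep s)⁻¹) * x⁻¹ * (x * R.rep s)) := by
        congr 1
        group
    _ = x * R.rep s := by
        rw [R.rep_coset _ _ (hN.conj_mem _ (R.rep_spec s) x), R.rep_idem _ h1]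

lemma linearMap_ext_of_lattice (ψ : L ≃* Multiplicative (Fin m → ℤ))
    {A A' : (Fin m → ℝ) →ₗ[ℝ] (Fin m → ℝ)}
    (h : ∀ lam : L, A (fun i => (Multiplicative.toAdd (ψ lam) i : ℝ)) =
      A' (fun i => (Multiplicative.toAdd (ψ lam) i : ℝ))) : A = A' := by
  refine (Pi.basisFun ℝ (Fin m)).ext fun i => ?_
  have h1 := h (ψ.symm (Multiplicative.ofAdd (Pi.single i 1)))
  have h2 : (fun j => ((Multiplicative.toAdd
      (ψ (ψ.symm (Multiplicative.ofAdd (Pi.single i (1 : ℤ))))) j : ℤ) : ℝ))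
      = Pi.basisFun ℝ (Fin m) i := by
    funext j
    by_cases hj : j = i
    · subst hj; simp
    · simp [hj]
  rwa [h2] at h1

lemma Ad_one
    (hN : L.Normal) (ψ : L ≃* Multiplicative (Fin m → ℤ))
    {Ad : G ⧸ L → (Fin m → ℝ) →ₗ[ℝ] (Fin m → ℝ)}
    (hAd : ∀ (x : G) (lam : L),
      Ad (QuotientGroup.mk x) (fun i => (Multiplicative.toAdd (ψ lam) i : ℝ)) =
        fun i => (Multiplicative.toAdd
          (ψ ⟨x * (lam : G) * x⁻¹, hN.conj_mem (lam : G) lam.2 x⟩) i : ℝ)) :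
    Ad (QuotientGroup.mk 1) = LinearMap.id := by
  refine linearMap_ext_of_lattice ψ fun lam => ?_
  rw [hAd]
  simp

lemma Ad_mul
    (hN : L.Normal) (ψ : L ≃* Multiplicative (Fin m → ℤ))
    {Ad : G ⧸ L → (Fin m → ℝ) →ₗ[ℝ] (Fin m → ℝ)}
    (hAd : ∀ (x : G) (lam : L),
      Ad (QuotientGroup.mk x) (fun i => (Multiplicative.toAdd (ψ lam) i : ℝ)) =
        fun i => (Multiplicative.toAdd
          (ψ ⟨x * (lam : G) * x⁻¹, hN.conj_mem (lam : G) lam.2 x⟩) i : ℝ))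
    (x y : G) (v : Fin m → ℝ) :
    Ad (QuotientGroup.mk (x * y)) v = Ad (QuotientGroup.mk x) (Ad (QuotientGroup.mk y) v) := by
  have h : Ad (QuotientGroup.mk (x * y))
      = (Ad (QuotientGroup.mk x)).comp (Ad (QuotientGroup.mk y)) := by
    refine linearMap_ext_of_lattice ψ fun lam => ?_
    rw [LinearMap.comp_apply, hAd, hAd, hAd]
    simp only [_root_.mul_inv_rev, mul_assoc]
  rw [h, LinearMap.comp_apply]

lemma cocycle_eq_Ad
    (hN : L.Normal) (ψ : L ≃* Multiplicative (Fin m → ℤ))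
    {Ad : G ⧸ L → (Fin m → ℝ) →ₗ[ℝ] (Fin m → ℝ)}
    (hAd : ∀ (x : G) (lam : L),
      Ad (QuotientGroup.mk x) (fun i => (Multiplicative.toAdd (ψ lam) i : ℝ)) =
        fun i => (Multiplicative.toAdd
          (ψ ⟨x * (lam : G) * x⁻¹, hN.conj_mem (lam : G) lam.2 x⟩) i : ℝ))
    (R : RepSystem L) (hΔ : ∃ H : Subgroup G, (H : Set G) = (R.Δ : Set G))
    {x : G} (hx : x ∈ R.Δ) (s : G) :
    (fun i => (cocycle ψ R x s i : ℝ))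
      = Ad (QuotientGroup.mk x) (fun i => (cocycle ψ R 1 s i : ℝ)) := by
  have h := hAd x ⟨1 * s * (R.rep (1 * s))⁻¹, R.rep_spec (1 * s)⟩
  refine Eq.trans ?_ h.symm
  have h1 : x * s * (R.rep (x * s))⁻¹ = x * (1 * s * (R.rep (1 * s))⁻¹) * x⁻¹ := by
    rw [R.rep_mul_of_subgroup hN hΔ hx, one_mul]
    group
  simp only [cocycle, h1]

lemma sum_mk (R : RepSystem L) (hN : L.Normal) [Fintype (G ⧸ L)] (F : G ⧸ L → ℝ) :
    ∑ x ∈ R.Δ, F (QuotientGroup.mk x) = ∑ q, F q := by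
  have h := R.bijOn_mk hN
  exact Finset.sum_nbij (fun x => QuotientGroup.mk x) (fun _ _ => Finset.mem_univ _) h.injOn
    (by simpa using h.surjOn) fun _ _ => rfl

lemma Ad_average_fixed
    (hN : L.Normal) (ψ : L ≃* Multiplicative (Fin m → ℤ))
    {Ad : G ⧸ L → (Fin m → ℝ) →ₗ[ℝ] (Fin m → ℝ)}
    (hAd : ∀ (x : G) (lam : L),
      Ad (QuotientGroup.mk x) (fun i => (Multiplicative.toAdd (ψ lam) i : ℝ)) =
        fun i => (Multiplicative.toAdd
          (ψ ⟨x * (lam : G) * x⁻¹, hN.conj_mem (lam : G) lam.2 x⟩) i : ℝ))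
    {T : (Fin m → ℝ) →ₗ[ℝ] (Fin m → ℝ)} (hI : L.index ≠ 0)
    (hT : ∀ v, T v = (L.index : ℝ)⁻¹ • ∑' q : G ⧸ L, Ad q v) (q : G ⧸ L) (v : Fin m → ℝ) :
    Ad q (T v) = T v := by
  have := hN
  have : Fintype (G ⧸ L) := Subgroup.fintypeOfIndexNeZero hI
  have hmul : ∀ a b : G ⧸ L, Ad a (Ad b v) = Ad (a * b) v := by
    intro a b
    induction a using QuotientGroup.induction_on with
    | H a =>
      induction b using QuotientGroup.induction_on with
      | H b => exact (Ad_mul hN ψ hAd a b v).symm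
  rw [hT, tsum_fintype, map_smul, map_sum]
  simp_rw [hmul]
  congr 1
  exact Equiv.sum_comp (Equiv.mulLeft q) fun a => Ad a v

lemma sum_form_Ad
    (hN : L.Normal) (ψ : L ≃* Multiplicative (Fin m → ℤ))
    {Ad : G ⧸ L → (Fin m → ℝ) →ₗ[ℝ] (Fin m → ℝ)}
    (hAd : ∀ (x : G) (lam : L),
      Ad (QuotientGroup.mk x) (fun i => (Multiplicative.toAdd (ψ lam) i : ℝ)) =
        fun i => (Multiplicative.toAdd
          (ψ ⟨x * (lam : G) * x⁻¹, hN.conj_mem (lam : G) lam.2 x⟩) i : ℝ))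
    {T : (Fin m → ℝ) →ₗ[ℝ] (Fin m → ℝ)} (hI : L.index ≠ 0)
    (hT : ∀ v, T v = (L.index : ℝ)⁻¹ • ∑' q : G ⧸ L, Ad q v) (R : RepSystem L)
    (B : (Fin m → ℝ) →ₗ[ℝ] (Fin m → ℝ) →ₗ[ℝ] ℝ)
    (hBinv : ∀ (q : G ⧸ L) (u w), B (Ad q u) (Ad q w) = B u w) (v a : Fin m → ℝ) :
    ∑ x ∈ R.Δ, B v (Ad (QuotientGroup.mk x) a) = L.index * B (T v) a := by
  have := hN
  have : Fintype (G ⧸ L) := Subgroup.fintypeOfIndexNeZero hI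
  have hI' : (L.index : ℝ) ≠ 0 := Nat.cast_ne_zero.mpr hI
  have hinv : ∀ q : G ⧸ L, B v (Ad q a) = B (Ad q⁻¹ v) a := by
    intro q
    induction q using QuotientGroup.induction_on with
    | H x =>
      have h1 := Ad_mul hN ψ hAd x⁻¹ x a
      rw [inv_mul_cancel, Ad_one hN ψ hAd, LinearMap.id_apply] at h1
      rw [← hBinv (QuotientGroup.mk x⁻¹) v, ← h1]
      rfl
  rw [sum_mk R hN fun q => B v (Ad q a), hT, tsum_fintype, map_smul, map_sum,
    LinearMap.smul_apply, LinearMap.sum_apply, smul_eq_mul, mul_inv_cancel_left₀ hI']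
  simp_rw [hinv]
  exact Equiv.sum_comp (Equiv.inv (G ⧸ L)) fun q => B (Ad q v) a

lemma sum_vhatB
    (hN : L.Normal) (ψ : L ≃* Multiplicative (Fin m → ℤ))
    {Ad : G ⧸ L → (Fin m → ℝ) →ₗ[ℝ] (Fin m → ℝ)}
    (hAd : ∀ (x : G) (lam : L),
      Ad (QuotientGroup.mk x) (fun i => (Multiplicative.toAdd (ψ lam) i : ℝ)) =
        fun i => (Multiplicative.toAdd
          (ψ ⟨x * (lam : G) * x⁻¹, hN.conj_mem (lam : G) lam.2 x⟩) i : ℝ))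
    {T : (Fin m → ℝ) →ₗ[ℝ] (Fin m → ℝ)} (hI : L.index ≠ 0)
    (hT : ∀ v, T v = (L.index : ℝ)⁻¹ • ∑' q : G ⧸ L, Ad q v) (R : RepSystem L)
    (hΔ : ∃ H : Subgroup G, (H : Set G) = (R.Δ : Set G))
    (B : (Fin m → ℝ) →ₗ[ℝ] (Fin m → ℝ) →ₗ[ℝ] ℝ)
    (hBinv : ∀ (q : G ⧸ L) (u w), B (Ad q u) (Ad q w) = B u w) (v : Fin m → ℝ) (s : G) :
    ∑ x ∈ R.Δ, vhatB ψ R B v x s = L.index * vhatB ψ R B (T v) 1 s := by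
  unfold vhatB
  rw [← sum_form_Ad hN ψ hAd hI hT R B hBinv]
  exact Finset.sum_congr rfl fun x hx => by rw [cocycle_eq_Ad hN ψ hAd R hΔ hx]

lemma vhatB_average
    (hN : L.Normal) (ψ : L ≃* Multiplicative (Fin m → ℤ))
    {Ad : G ⧸ L → (Fin m → ℝ) →ₗ[ℝ] (Fin m → ℝ)}
    (hAd : ∀ (x : G) (lam : L),
      Ad (QuotientGroup.mk x) (fun i => (Multiplicative.toAdd (ψ lam) i : ℝ)) =
        fun i => (Multiplicative.toAdd
          (ψ ⟨x * (lam : G) * x⁻¹, hN.conj_mem (lam : G) lam.2 x⟩) i : ℝ))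
    {T : (Fin m → ℝ) →ₗ[ℝ] (Fin m → ℝ)} (hI : L.index ≠ 0)
    (hT : ∀ v, T v = (L.index : ℝ)⁻¹ • ∑' q : G ⧸ L, Ad q v) (R : RepSystem L)
    (hΔ : ∃ H : Subgroup G, (H : Set G) = (R.Δ : Set G))
    (B : (Fin m → ℝ) →ₗ[ℝ] (Fin m → ℝ) →ₗ[ℝ] ℝ)
    (hBinv : ∀ (q : G ⧸ L) (u w), B (Ad q u) (Ad q w) = B u w) (v : Fin m → ℝ)
    {x : G} (hx : x ∈ R.Δ) (s : G) :
    vhatB ψ R B (T v) x s = vhatB ψ R B (T v) 1 s := by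
  unfold vhatB
  rw [cocycle_eq_Ad hN ψ hAd R hΔ hx]
  nth_rewrite 1 [← Ad_average_fixed hN ψ hAd hI hT (QuotientGroup.mk x) v]
  exact hBinv _ _ _

end Semidirect

/-- A 1-form that does not depend on the vertex is its own harmonic part. -/
lemma cov_of_const {G : Type*} [Group G] {L : Subgroup G} {μ : G → ℝ} (R : RepSystem L)
    (hI : L.index ≠ 0) (hc : R.Δ.card = L.index) (hp : IsProb μ) {ω ω' u u' : G → G → ℝ}
    {g g' : G → ℝ} {b b' : G → ℝ} (hω : ∀ x ∈ R.Δ, ∀ s, ω x s = b s)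
    (hω' : ∀ x ∈ R.Δ, ∀ s, ω' x s = b' s) (hu : IsHarmDecomp R μ ω u g)
    (hu' : IsHarmDecomp R μ ω' u' g') :
    cov R μ u u' = (∑' s, μ s * (b s * b' s)) - (∑' s, μ s * b s) * ∑' s, μ s * b' s := by
  have hI' : (L.index : ℝ) ≠ 0 := Nat.cast_ne_zero.mpr hI
  have hchi : ∀ a : G → ℝ, chi R μ (fun _ s => a s) = ∑' s, μ s * a s := by
    intro a
    rw [chi_eq, Finset.sum_const, hc, nsmul_eq_mul, inv_mul_cancel_left₀ hI']
  have key : ∀ {η w : G → G → ℝ} {h a : G → ℝ}, (∀ x ∈ R.Δ, ∀ s, η x s = a s) →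
      IsHarmDecomp R μ η w h → ∀ x ∈ R.Δ, ∀ s, μ s ≠ 0 → w x s = a s := by
    intro η w h a hη hw
    have hsq : Summable fun s => μ s * a s ^ 2 := by
      refine (summable_mul_add_sq hp.1 ((sqInt_iff R hI μ w).1 hw.2.1.1 1 R.one_mem)
        (dd_summable_sq R hp.2.summable h 1)).congr fun s => ?_
      rw [← hw.2.2 1 R.one_mem s, hη 1 R.one_mem s]
    refine harmonic_part_unique (u' := fun _ s => a s) R hI hp.1 hp.2.summable h (fun _ => 0)
      hw.2.1 (harmonic_of_tsum_eq R hI hc μ _ (fun _ _ => hsq) _ fun _ _ => rfl) fun x hx s => ?_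
    rw [← hw.2.2 x hx s, hη x hx s]
    simp [dd]
  rw [cov_congr R μ (key hω hu) (key hω' hu'), cov_eq, hchi b, hchi b',
    hchi fun s => b s * b' s]


/-- Covariance structure for the noised walk `π^ρ` on a semidirect
product `Γ = Λ ⋊ Δ`: the diagonal blocks equal the covariance of `μ` and the
off-diagonal block equals `(1−ρ)·B_μ(θ̲v₁, θ̲v₂)`. -/
theorem covariance_structure_noised_semidirect
    {Γ : Type*} [Group Γ] [Countable Γ] {Λ : Subgroup Γ} (hN : Λ.Normal)
    (hI : Λ.index ≠ 0) {m : ℕ} (hm : 1 ≤ m) (ψ : Λ ≃* Multiplicative (Fin m → ℤ))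
    (R : RepSystem Λ)
    (hΔ : ∃ H : Subgroup Γ, (H : Set Γ) = (R.Δ : Set Γ))
    (Ad : Γ ⧸ Λ → (Fin m → ℝ) →ₗ[ℝ] (Fin m → ℝ))
    (hAd : ∀ (x : Γ) (lam : Λ),
        Ad (QuotientGroup.mk x) (fun i => (Multiplicative.toAdd (ψ lam) i : ℝ)) =
          fun i => (Multiplicative.toAdd
            (ψ ⟨x * (lam : Γ) * x⁻¹, hN.conj_mem (lam : Γ) lam.2 x⟩) i : ℝ))
    (B : (Fin m → ℝ) →ₗ[ℝ] (Fin m → ℝ) →ₗ[ℝ] ℝ)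
    (hBsymm : ∀ u w, B u w = B w u) (hBpos : ∀ u, u ≠ 0 → 0 < B u u)
    (hBinv : ∀ (f : Γ ⧸ Λ) (u w), B (Ad f u) (Ad f w) = B u w)
    (T : (Fin m → ℝ) →ₗ[ℝ] (Fin m → ℝ))
    (hT : ∀ v, T v = (Λ.index : ℝ)⁻¹ • ∑' f : Γ ⧸ Λ, Ad f v)
    (μ : Γ → ℝ) (hμ : IsProb μ) (hnd : Nondeg μ) (hap : Aperiodic μ)
    (hmom : FinSecondMoment μ)
    (ρ : ℝ) (hρ0 : 0 < ρ) (hρ1 : ρ ≤ 1) :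
    -- first diagonal block
    (∀ (v₁ v₁' : Fin m → ℝ) (u u' : (Γ × Γ) → (Γ × Γ) → ℝ) (f f' : Γ × Γ → ℝ)
        (u₁ u₁' : Γ → Γ → ℝ) (g g' : Γ → ℝ),
        IsHarmDecomp (prodRep R R) (noised μ ρ) (vhatB2 ψ R B ψ R B (v₁, 0)) u f →
        IsHarmDecomp (prodRep R R) (noised μ ρ) (vhatB2 ψ R B ψ R B (v₁', 0)) u' f' →
        IsHarmDecomp R μ (vhatB ψ R B v₁) u₁ g →
        IsHarmDecomp R μ (vhatB ψ R B v₁') u₁' g' →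
        cov (prodRep R R) (noised μ ρ) u u' = cov R μ u₁ u₁') ∧
    -- second diagonal block
    (∀ (v₁ v₁' : Fin m → ℝ) (u u' : (Γ × Γ) → (Γ × Γ) → ℝ) (f f' : Γ × Γ → ℝ)
        (u₁ u₁' : Γ → Γ → ℝ) (g g' : Γ → ℝ),
        IsHarmDecomp (prodRep R R) (noised μ ρ) (vhatB2 ψ R B ψ R B (0, v₁)) u f →
        IsHarmDecomp (prodRep R R) (noised μ ρ) (vhatB2 ψ R B ψ R B (0, v₁')) u' f' →
        IsHarmDecomp R μ (vhatB ψ R B v₁) u₁ g →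
        IsHarmDecomp R μ (vhatB ψ R B v₁') u₁' g' →
        cov (prodRep R R) (noised μ ρ) u u' = cov R μ u₁ u₁') ∧
    -- off-diagonal block
    (∀ (v₁ v₂ : Fin m → ℝ) (u u' : (Γ × Γ) → (Γ × Γ) → ℝ) (f f' : Γ × Γ → ℝ)
        (u₁ u₂ : Γ → Γ → ℝ) (g g' : Γ → ℝ),
        IsHarmDecomp (prodRep R R) (noised μ ρ) (vhatB2 ψ R B ψ R B (v₁, 0)) u f →
        IsHarmDecomp (prodRep R R) (noised μ ρ) (vhatB2 ψ R B ψ R B (0, v₂)) u' f' →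
        IsHarmDecomp R μ (vhatB ψ R B (T v₁)) u₁ g →
        IsHarmDecomp R μ (vhatB ψ R B (T v₂)) u₂ g' →
        cov (prodRep R R) (noised μ ρ) u u' = (1 - ρ) * cov R μ u₁ u₂) := by
  have hc := R.card_eq_index hN
  have hρ := hρ0.le
  have e1 : ∀ v, vhatB2 ψ R B ψ R B (v, 0) = fun x s => vhatB ψ R B v x.1 s.1 := by
    intro v
    funext x s
    simp [vhatB2, vhatB]
  have e2 : ∀ v, vhatB2 ψ R B ψ R B (0, v) = fun x s => vhatB ψ R B v x.2 s.2 := by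
    intro v
    funext x s
    simp [vhatB2, vhatB]
  simp only [e1, e2]
  refine ⟨fun _ _ _ _ _ _ _ _ _ _ => cov_noised_fst R hI hc hμ hρ hρ1,
    fun _ _ _ _ _ _ _ _ _ _ => cov_noised_snd R hI hc hμ hρ hρ1,
    fun v₁ v₂ u u' f f' u₁ u₂ g g' hu hu' hu₁ hu₂ => ?_⟩
  obtain ⟨k, hk⟩ := exists_harmonic_fst R hI hc hμ hρ hρ1 hu
  obtain ⟨k', hk'⟩ := exists_harmonic_snd R hI hc hμ hρ hρ1 hu'
  have havg : ∀ (v : Fin m → ℝ) (k : Γ → ℝ) (s : Γ),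
      ∑ x ∈ R.Δ, (vhatB ψ R B v x s - dd R k x s) = Λ.index * vhatB ψ R B (T v) 1 s := by
    intro v k s
    rw [Finset.sum_sub_distrib, sum_dd, sub_zero, sum_vhatB hN ψ hAd hI hT R hΔ B hBinv]
  rw [cov_congr (prodRep R R) _
    (noised_unique (g := fun x => k x.1) R hI hμ hρ hρ1 hu (hk.fst hI hc hμ)
      fun x _ s => (sub_add_cancel _ (dd R k x.1 s.1)).symm)
    (noised_unique (g := fun x => k' x.2) R hI hμ hρ hρ1 hu' (hk'.snd hI hc hμ)
      fun x _ s => (sub_add_cancel _ (dd R k' x.2 s.2)).symm),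
    cov_noised_fst_snd R hI hc hμ hk hk' (havg v₁ k) (havg v₂ k'),
    cov_of_const R hI hc hμ
      (fun x hx s => vhatB_average hN ψ hAd hI hT R hΔ B hBinv v₁ hx s)
      (fun x hx s => vhatB_average hN ψ hAd hI hT R hΔ B hBinv v₂ hx s) hu₁ hu₂]

end NSVA
end
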